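/- arXiv:0901.3623 — 3 statements merged into one kernel-verified Lean document; each statement's English description precedes it below -/
import Mathlib

section
/- Let α be an ordinal. Then the Banach space C([0,α]) of continuous real-valued functions on the compact ordinal interval [0,α] (with the order topology), equipped with the supremum norm, admits an equivalent norm which is simultaneously C^1-smooth and LUR and is a limit, uniform on bounded sets, of C^∞-smooth norms. -/
open Filter Topology

/-- `N` is a norm on the vector space `Y`. -/
def IsNorm {Y : Type*} [AddCommGroup Y] [Module ℝ Y] (N : Y → ℝ) : Prop :=
  (∀ y, 0 ≤ N y) ∧ (∀ y, N y = 0 ↔ y = 0) ∧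
    (∀ (c : ℝ) (y : Y), N (c • y) = |c| * N y) ∧ (∀ y z, N (y + z) ≤ N y + N z)

/-- `N` is a norm equivalent to the given norm of `Y`. -/
def IsEquivNorm {Y : Type*} [NormedAddCommGroup Y] [NormedSpace ℝ Y] (N : Y → ℝ) : Prop :=
  IsNorm N ∧ ∃ a b : ℝ, 0 < a ∧ 0 < b ∧ ∀ y, a * ‖y‖ ≤ N y ∧ N y ≤ b * ‖y‖

/-- `N` is locally uniformly rotund: `N (x_r - x) → 0` whenever
`2 N(x_r)² + 2 N(x)² - N(x_r + x)² → 0`. -/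
def IsLUR {Y : Type*} [NormedAddCommGroup Y] [NormedSpace ℝ Y] (N : Y → ℝ) : Prop :=
  ∀ (x : Y) (xr : ℕ → Y),
    Tendsto (fun r => 2 * N (xr r) ^ 2 + 2 * N x ^ 2 - N (xr r + x) ^ 2) atTop (𝓝 0) →
      Tendsto (fun r => N (xr r - x)) atTop (𝓝 0)

/-- `N` is `k`-times continuously Fréchet differentiable away from the origin. -/
def IsCkSmoothNorm {Y : Type*} [NormedAddCommGroup Y] [NormedSpace ℝ Y]
    (k : WithTop ℕ∞) (N : Y → ℝ) : Prop :=
  ContDiffOn ℝ k N {y | y ≠ 0}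

/-- `N` is a limit, uniform on bounded sets, of equivalent `C^k`-smooth norms. -/
def IsUniformLimitOfCkSmoothNorms {Y : Type*} [NormedAddCommGroup Y] [NormedSpace ℝ Y]
    (k : WithTop ℕ∞) (N : Y → ℝ) : Prop :=
  ∃ Ni : ℕ → Y → ℝ, (∀ i, IsEquivNorm (Ni i) ∧ IsCkSmoothNorm k (Ni i)) ∧
    ∀ R > (0 : ℝ), ∀ ε > (0 : ℝ), ∃ i₀ : ℕ, ∀ i ≥ i₀, ∀ y : Y, ‖y‖ ≤ R → |Ni i y - N y| ≤ ε

/-- The ordinal interval `[0, α]` (with its order topology, induced from `Ordinal`)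
is a compact space. -/
instance Ordinal.compactSpace_Iic (α : Ordinal) : CompactSpace (Set.Iic α) :=
  isCompact_iff_compactSpace.mp (by rw [← Set.Icc_bot]; exact isCompact_Icc)

/-!
Call a sublinear function smoothable if sublinear functions that are `C^∞` off the origin
approximate it uniformly on the unit ball. A supremum which is attained everywhere, by indices that
only finitely many competitors can rival locally, is smoothable: sum convex ramps of the smooth
approximants of its members, and take the gauge of a sublevel set, which is smooth by the implicit
function theorem. On a compact well-order `K` this covers the sup norm, the oscillation of `f` over
the cells cut out by a finite set `A`, the block norm which adjoins `f ⊥` and the jumps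
`f (a + 1) - f a`, `a ∈ A`, in the `ℓ²` sense, and the supremum of the block norms over `#A ≤ j`,
because only finitely many jumps of `f` exceed a given size.

A weighted `ℓ²` sum of smooth approximants of countably many such norms is a `C¹` norm, and
it is LUR as soon as LUR convergence for all of these norms forces norm convergence. Given `f`,
choose `B` carrying the largest jumps of `f`, so large that `f` oscillates little on its cells. If
the jumps are weighted heavily enough, `B` attains the supremum over `#A ≤ #B` with a gap, so LUR
convergence passes to the block norm of `B` and yields convergence at `⊥`, of the jumps in `B`, and
of the oscillation over cells. Well-founded induction along `K` then gives `fr → f`.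
-/

open Set
open scoped ContDiff

/-! ### Sublinear functions and their smooth approximation -/

section Sublinear

variable {E : Type*} [AddCommGroup E] [Module ℝ E] {p q : E → ℝ}

/-- Sublinear functions: subadditive and positively homogeneous. Neither symmetry nor
nonnegativity is required. -/
structure IsSublinear (p : E → ℝ) : Prop where
  add_le : ∀ x y, p (x + y) ≤ p x + p y
  smul_of_pos : ∀ (c : ℝ) (x : E), 0 < c → p (c • x) = c * p x

namespace IsSublinear

theorem map_zero (hp : IsSublinear p) : p 0 = 0 := by
  have h := hp.smul_of_pos 2 0 two_pos
  rw [smul_zero] at h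
  linarith

theorem smul_of_nonneg (hp : IsSublinear p) {c : ℝ} (hc : 0 ≤ c) (x : E) :
    p (c • x) = c * p x := by
  rcases hc.eq_or_lt with rfl | hc
  · rw [zero_smul, zero_mul, hp.map_zero]
  · exact hp.smul_of_pos c x hc

theorem convexOn (hp : IsSublinear p) : ConvexOn ℝ univ p := by
  refine ⟨convex_univ, fun x _ y _ a b ha hb _ => ?_⟩
  rw [smul_eq_mul, smul_eq_mul, ← hp.smul_of_nonneg ha, ← hp.smul_of_nonneg hb]
  exact hp.add_le _ _

theorem sub_le (hp : IsSublinear p) (x y : E) : p x - p y ≤ p (x - y) := by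
  have h := hp.add_le (x - y) y
  rw [sub_add_cancel] at h
  linarith

theorem add (hp : IsSublinear p) (hq : IsSublinear q) : IsSublinear (fun x => p x + q x) where
  add_le x y := by linarith [hp.add_le x y, hq.add_le x y]
  smul_of_pos c x hc := by rw [hp.smul_of_pos c x hc, hq.smul_of_pos c x hc, mul_add]

theorem const_mul (hp : IsSublinear p) {a : ℝ} (ha : 0 ≤ a) : IsSublinear (fun x => a * p x) where
  add_le x y := by nlinarith [hp.add_le x y]
  smul_of_pos c x hc := by rw [hp.smul_of_pos c x hc, mul_left_comm]

theorem comp_neg (hp : IsSublinear p) : IsSublinear (fun x => p (-x)) where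
  add_le x y := by simpa only [neg_add] using hp.add_le (-x) (-y)
  smul_of_pos c x hc := by rw [← smul_neg, hp.smul_of_pos c (-x) hc]

/-- An even sublinear function, bundled as a seminorm. -/
def toSeminorm (hp : IsSublinear p) (heven : ∀ x, p (-x) = p x) : Seminorm ℝ E :=
  Seminorm.of p hp.add_le fun c x => by
    rw [Real.norm_eq_abs]
    rcases le_total 0 c with hc | hc
    · rw [hp.smul_of_nonneg hc, abs_of_nonneg hc]
    · rw [← heven, ← neg_smul, hp.smul_of_nonneg (neg_nonneg.2 hc), abs_of_nonpos hc]

end IsSublinear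

theorem isSublinear_linearMap (T : E →ₗ[ℝ] ℝ) : IsSublinear T where
  add_le x y := (map_add T x y).le
  smul_of_pos c x _ := T.map_smul c x

theorem isSublinear_seminorm (p : Seminorm ℝ E) : IsSublinear p where
  add_le := map_add_le_add p
  smul_of_pos c x hc := by rw [map_smul_eq_mul, Real.norm_of_nonneg hc.le]

theorem sqrt_sq_add_sq_le (a b c d : ℝ) :
    √((a + c) ^ 2 + (b + d) ^ 2) ≤ √(a ^ 2 + b ^ 2) + √(c ^ 2 + d ^ 2) := by
  simpa only [Complex.norm_eq_sqrt_sq_add_sq, Complex.add_re, Complex.add_im]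
    using norm_add_le (⟨a, b⟩ : ℂ) ⟨c, d⟩

theorem IsSublinear.sqrt_sq_add_sq (hp : IsSublinear p) (hp0 : ∀ x, 0 ≤ p x) (S : Seminorm ℝ E) :
    IsSublinear (fun x => √(p x ^ 2 + S x ^ 2)) where
  add_le x y := by
    refine le_trans (Real.sqrt_le_sqrt ?_) (sqrt_sq_add_sq_le (p x) (S x) (p y) (S y))
    have := hp0 (x + y)
    have := hp.add_le x y
    have := map_add_le_add S x y
    gcongr
  smul_of_pos c x hc := by
    rw [hp.smul_of_pos c x hc, (isSublinear_seminorm S).smul_of_pos c x hc, mul_pow, mul_pow,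
      ← mul_add, Real.sqrt_mul (sq_nonneg c), Real.sqrt_sq hc.le]

end Sublinear

section Comparable

variable {E : Type*} [NormedAddCommGroup E] {p : E → ℝ}

/-- `p` is bounded above and below by positive multiples of the norm. -/
def IsComparableToNorm (p : E → ℝ) : Prop :=
  ∃ c C : ℝ, 0 < c ∧ 0 < C ∧ ∀ x, c * ‖x‖ ≤ p x ∧ p x ≤ C * ‖x‖

theorem IsComparableToNorm.nonneg (hp : IsComparableToNorm p) (x : E) : 0 ≤ p x := by
  obtain ⟨c, C, hc, -, h⟩ := hp
  exact (mul_nonneg hc.le (norm_nonneg x)).trans (h x).1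

theorem IsComparableToNorm.pos (hp : IsComparableToNorm p) {x : E} (hx : x ≠ 0) : 0 < p x := by
  obtain ⟨c, C, hc, -, h⟩ := hp
  exact (mul_pos hc (norm_pos_iff.2 hx)).trans_le (h x).1

theorem IsComparableToNorm.map_zero (hp : IsComparableToNorm p) : p 0 = 0 := by
  obtain ⟨c, C, -, -, h⟩ := hp
  simpa only [norm_zero, mul_zero, and_comm, le_antisymm_iff] using h 0

theorem isComparableToNorm_norm : IsComparableToNorm (norm : E → ℝ) :=
  ⟨1, 1, one_pos, one_pos, fun x => by simp⟩

theorem IsComparableToNorm.exists_norm_le (hp : IsComparableToNorm p) :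
    ∃ R > 0, ∀ x, p x ≤ 1 → ‖x‖ ≤ R := by
  obtain ⟨c, C, hc, -, h⟩ := hp
  refine ⟨1 / c, one_div_pos.2 hc, fun x hx => ?_⟩
  rw [le_div_iff₀' hc]
  exact (h x).1.trans hx

theorem IsComparableToNorm.isBounded_setOf_lt_one (hp : IsComparableToNorm p) :
    Bornology.IsBounded {x | p x < 1} :=
  let ⟨R, _, h⟩ := hp.exists_norm_le
  isBounded_iff_forall_norm_le.2 ⟨R, fun x (hx : p x < 1) => h x hx.le⟩

end Comparable

section Smoothable

variable {E : Type*} [NormedAddCommGroup E] [NormedSpace ℝ E] {p q : E → ℝ}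

theorem IsSublinear.continuous (hp : IsSublinear p) {C : ℝ} (hC : ∀ x, p x ≤ C * ‖x‖) :
    Continuous p := by
  refine continuous_iff_continuousAt.2 fun x => tendsto_iff_norm_sub_tendsto_zero.2 ?_
  have hlip : ∀ y, ‖p y - p x‖ ≤ C * ‖y - x‖ := fun y =>
    abs_sub_le_iff.2 ⟨(hp.sub_le y x).trans (hC _),
      norm_sub_rev x y ▸ (hp.sub_le x y).trans (hC _)⟩
  refine squeeze_zero (fun _ => norm_nonneg _) hlip ?_
  exact Continuous.tendsto' (by fun_prop) x 0 (by rw [sub_self, norm_zero, mul_zero])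

theorem IsComparableToNorm.isEquivNorm {p : Seminorm ℝ E} (hp : IsComparableToNorm p) :
    IsEquivNorm p :=
  ⟨⟨apply_nonneg p, fun _ => ⟨fun hy => of_not_not fun hy0 => (hp.pos hy0).ne' hy,
    fun hy => hy ▸ _root_.map_zero p⟩, map_smul_eq_mul p, map_add_le_add p⟩, hp⟩

/-- Sublinear functions that are uniform limits on the unit ball, from below, of sublinear
functions that are `C^∞` off the origin. -/
structure IsSmoothable (p : E → ℝ) : Prop where
  isSublinear : IsSublinear p
  exists_contDiffOn : ∀ ε > 0, ∃ q : E → ℝ, IsSublinear q ∧ ContDiffOn ℝ ∞ q {0}ᶜ ∧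
    ∀ x, p x - ε * ‖x‖ ≤ q x ∧ q x ≤ p x

namespace IsSmoothable

theorem of_continuousLinearMap (T : E →L[ℝ] ℝ) : IsSmoothable T where
  isSublinear := isSublinear_linearMap T.toLinearMap
  exists_contDiffOn ε hε := ⟨T, isSublinear_linearMap T.toLinearMap, T.contDiff.contDiffOn,
    fun x => ⟨sub_le_self _ (by positivity), le_rfl⟩⟩

theorem add (hp : IsSmoothable p) (hq : IsSmoothable q) : IsSmoothable (fun x => p x + q x) where
  isSublinear := hp.isSublinear.add hq.isSublinear
  exists_contDiffOn ε hε := by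
    obtain ⟨p', hp', hps, hpp'⟩ := hp.exists_contDiffOn (ε / 2) (half_pos hε)
    obtain ⟨q', hq', hqs, hqq'⟩ := hq.exists_contDiffOn (ε / 2) (half_pos hε)
    exact ⟨fun x => p' x + q' x, hp'.add hq', hps.add hqs,
      fun x => ⟨by linarith [(hpp' x).1, (hqq' x).1], add_le_add (hpp' x).2 (hqq' x).2⟩⟩

theorem const_mul (hp : IsSmoothable p) {a : ℝ} (ha : 0 < a) : IsSmoothable (fun x => a * p x) where
  isSublinear := hp.isSublinear.const_mul ha.le
  exists_contDiffOn ε hε := by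
    obtain ⟨q, hq, hqs, hpq⟩ := hp.exists_contDiffOn (ε / a) (by positivity)
    refine ⟨fun x => a * q x, hq.const_mul ha.le, contDiffOn_const.mul hqs, fun x => ⟨?_, ?_⟩⟩
    · have h := mul_le_mul_of_nonneg_left (hpq x).1 ha.le
      rwa [mul_sub, ← mul_assoc, mul_div_cancel₀ ε ha.ne'] at h
    · exact mul_le_mul_of_nonneg_left (hpq x).2 ha.le

/-- Adjoining a square to `p ^ 2` preserves smoothability as soon as the square is smooth, because
`p` stays away from zero on the unit sphere. -/
theorem sqrt_sq_add_sq (hp : IsSmoothable p) (hcomp : IsComparableToNorm p) {S : Seminorm ℝ E}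
    (hS : ContDiff ℝ ∞ fun x => S x ^ 2) : IsSmoothable (fun x => √(p x ^ 2 + S x ^ 2)) := by
  refine ⟨hp.isSublinear.sqrt_sq_add_sq hcomp.nonneg S, fun ε hε => ?_⟩
  obtain ⟨c, C, hc, -, hpc⟩ := hcomp
  obtain ⟨q, hq, hqs, hpq⟩ := hp.exists_contDiffOn (min ε (c / 2)) (by positivity)
  have hlow : ∀ x, c / 2 * ‖x‖ ≤ q x := fun x => by
    have := mul_le_mul_of_nonneg_right (min_le_right ε (c / 2)) (norm_nonneg x)
    linarith [(hpq x).1, (hpc x).1]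
  have hq0 : ∀ x, 0 ≤ q x := fun x => le_trans (by positivity) (hlow x)
  refine ⟨_, hq.sqrt_sq_add_sq hq0 S, ?_, fun x => ⟨?_, ?_⟩⟩
  · refine ((hqs.pow 2).add hS.contDiffOn).sqrt fun x hx => ?_
    have : 0 < q x := (mul_pos (half_pos hc) (norm_pos_iff.2 hx)).trans_le (hlow x)
    positivity
  · have h := sqrt_sq_add_sq_le (q x) (S x) (p x - q x) 0
    rw [add_sub_cancel, add_zero, zero_pow two_ne_zero, add_zero,
      Real.sqrt_sq (sub_nonneg.2 (hpq x).2)] at h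
    have := mul_le_mul_of_nonneg_right (min_le_left ε (c / 2)) (norm_nonneg x)
    linarith [(hpq x).1]
  · have := (hpq x).2
    have := hq0 x
    gcongr

theorem exists_seminorm {p : Seminorm ℝ E} (hp : IsSmoothable p) {ε : ℝ} (hε : 0 < ε) :
    ∃ q : Seminorm ℝ E, ContDiffOn ℝ ∞ q {0}ᶜ ∧ ∀ x, p x - ε * ‖x‖ ≤ q x ∧ q x ≤ p x := by
  obtain ⟨q, hq, hqs, hpq⟩ := hp.exists_contDiffOn ε hε
  have heven : ∀ x, 2⁻¹ * (q (-x) + q (- -x)) = 2⁻¹ * (q x + q (-x)) := fun x => by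
    rw [neg_neg, add_comm]
  refine ⟨((hq.add hq.comp_neg).const_mul (by norm_num : (0 : ℝ) ≤ 2⁻¹)).toSeminorm heven,
    contDiffOn_const.mul (hqs.add (hqs.comp contDiff_neg.contDiffOn fun x hx => ?_)),
    fun x => ?_⟩
  · exact neg_ne_zero.2 hx
  · have hx := hpq x
    have hnx := hpq (-x)
    rw [map_neg_eq_map p, norm_neg] at hnx
    change _ ≤ 2⁻¹ * (q x + q (-x)) ∧ 2⁻¹ * (q x + q (-x)) ≤ _
    constructor <;> linarith

end IsSmoothable

end Smoothable

/-! ### A smooth convex ramp -/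

/-- A `C^∞` convex nondecreasing function vanishing on `(-∞, 0]` and larger than `1` on
`[3, ∞)`. -/
noncomputable def smoothRamp (u : ℝ) : ℝ := ∫ s in (0 : ℝ)..u, Real.smoothTransition s

namespace smoothRamp

theorem hasDerivAt (u : ℝ) : HasDerivAt smoothRamp (Real.smoothTransition u) u :=
  intervalIntegral.integral_hasDerivAt_right
    (Real.smoothTransition.continuous.intervalIntegrable ..)
    Real.smoothTransition.continuous.aestronglyMeasurable.stronglyMeasurableAtFilter
    Real.smoothTransition.continuous.continuousAt

theorem differentiable : Differentiable ℝ smoothRamp := fun u => (hasDerivAt u).differentiableAt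

theorem deriv_eq : deriv smoothRamp = Real.smoothTransition := funext fun u => (hasDerivAt u).deriv

theorem contDiff : ContDiff ℝ ∞ smoothRamp :=
  contDiff_infty_iff_deriv.2 ⟨differentiable, deriv_eq ▸ Real.smoothTransition.contDiff⟩

theorem monotone : Monotone smoothRamp :=
  monotone_of_deriv_nonneg differentiable fun u => deriv_eq ▸ Real.smoothTransition.nonneg u

theorem convexOn : ConvexOn ℝ univ smoothRamp :=
  Monotone.convexOn_univ_of_deriv differentiable (deriv_eq ▸ Real.smoothTransition.monotone)

theorem convexOn_comp {E : Type*} [AddCommGroup E] [Module ℝ E] {s : Set E} {h : E → ℝ}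
    (hh : ConvexOn ℝ s h) : ConvexOn ℝ s fun x => smoothRamp (h x) :=
  ⟨hh.1, fun _ hx _ hy _ _ ha hb hab => (monotone (hh.2 hx hy ha hb hab)).trans
    (convexOn.2 (mem_univ _) (mem_univ _) ha hb hab)⟩

theorem zero_of_nonpos {u : ℝ} (hu : u ≤ 0) : smoothRamp u = 0 := by
  refine (intervalIntegral.integral_congr (g := fun _ => 0) fun s hs => ?_).trans
    intervalIntegral.integral_zero
  rw [uIcc_of_ge hu] at hs
  exact Real.smoothTransition.zero_of_nonpos hs.2

theorem nonneg (u : ℝ) : 0 ≤ smoothRamp u := by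
  rcases le_total u 0 with hu | hu
  · exact (zero_of_nonpos hu).ge
  · exact (zero_of_nonpos le_rfl).symm.le.trans (monotone hu)

theorem one_lt {u : ℝ} (hu : 3 ≤ u) : 1 < smoothRamp u := by
  have hI := Real.smoothTransition.continuous.intervalIntegrable (μ := MeasureTheory.volume)
  have hsplit : smoothRamp 3 = smoothRamp 1 + ∫ s in (1 : ℝ)..3, Real.smoothTransition s :=
    (intervalIntegral.integral_add_adjacent_intervals (hI _ _) (hI _ _)).symm
  have hconst : ∫ s in (1 : ℝ)..3, Real.smoothTransition s = 2 := by
    rw [intervalIntegral.integral_congr (g := fun _ => 1) fun s hs => ?_]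
    · norm_num
    · rw [uIcc_of_le (by norm_num)] at hs
      exact Real.smoothTransition.one_of_one_le hs.1
  linarith [monotone hu, nonneg 1]

end smoothRamp

/-! ### Smoothness of gauges of convex sublevel sets -/

theorem setOf_le_one_mem_nhds {X : Type*} [TopologicalSpace X] {V : Set X} {Φ : X → ℝ} {z : X}
    (hV : IsOpen V) (hΦ : ContinuousOn Φ V) (hz : z ∈ V)
    (hlt : Φ z < 1) : {x | x ∈ V ∧ Φ x ≤ 1} ∈ 𝓝 z := by
  have hVz := hV.mem_nhds hz
  filter_upwards [hVz, (hΦ.continuousAt hVz).eventually_lt continuousAt_const hlt] with x hx hx1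
  exact ⟨hx, hx1.le⟩

section Gauge

variable {E : Type*} [NormedAddCommGroup E] [NormedSpace ℝ E] {V : Set E} {Φ : E → ℝ} {z : E}

theorem hasDerivAt_apply_smul_self (hd : DifferentiableAt ℝ Φ z) :
    HasDerivAt (fun s : ℝ => Φ (s • z)) (fderiv ℝ Φ z z) 1 := by
  refine HasFDerivAt.comp_hasDerivAt (l := Φ) 1 ?_ ?_
  · rw [one_smul]
    exact hd.hasFDerivAt
  · simpa only [one_smul, id] using (hasDerivAt_id (1 : ℝ)).smul_const z

theorem fderiv_self_pos_of_convexOn (hΦ : ConvexOn ℝ V Φ) (h0 : 0 ∈ V) (hz : z ∈ V)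
    (hlt : Φ 0 < Φ z) (hd : DifferentiableAt ℝ Φ z) : 0 < fderiv ℝ Φ z z := by
  have hslope := (hΦ.comp_linearMap (LinearMap.toSpanSingleton ℝ E z)).slope_le_of_hasDerivAt
    (x := 0) (y := 1) (by simpa using h0) (by simpa using hz) one_pos
    (hasDerivAt_apply_smul_self hd)
  simp only [slope_def_field, Function.comp_apply, LinearMap.toSpanSingleton_apply, one_smul,
    zero_smul, sub_zero, div_one] at hslope
  linarith

/-- The implicit function theorem for `Φ (s • x) = 1` at `(z, 1)`; by homogeneity its solution is
`s = (g x)⁻¹`. -/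
theorem contDiffAt_of_eq_one_on_levelSet [CompleteSpace E] {g : E → ℝ}
    (hg : ∀ (c : ℝ) (x : E), 0 < c → g (c • x) = c * g x) (hΦ : ContDiffAt ℝ ∞ Φ z)
    (hz : Φ z = 1) (hrad : fderiv ℝ Φ z z ≠ 0) (hlevel : ∀ᶠ w in 𝓝 z, Φ w = 1 → g w = 1) :
    ContDiffAt ℝ ∞ g z := by
  let G : E × ℝ → ℝ := fun w => Φ (w.2 • w.1)
  have hG : ContDiffAt ℝ ∞ G (z, 1) :=
    ContDiffAt.comp (z, 1) (g := Φ) (by simpa only [one_smul] using hΦ) (by fun_prop)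
  have hpartial : (fderiv ℝ G (z, 1) ∘L .inr ℝ E ℝ) 1 = fderiv ℝ Φ z z := by
    have hpair : HasDerivAt (fun s : ℝ => (z, s)) (0, 1) 1 :=
      (hasDerivAt_const 1 z).prodMk (hasDerivAt_id 1)
    exact ((hG.differentiableAt (by simp)).hasFDerivAt.comp_hasDerivAt 1 hpair).unique
      (hasDerivAt_apply_smul_self (hΦ.differentiableAt (by simp)))
  have hinv : (fderiv ℝ G (z, 1) ∘L .inr ℝ E ℝ).IsInvertible :=
    ⟨ContinuousLinearEquiv.unitsEquivAut ℝ (Units.mk0 _ hrad), by ext; rw [hpartial]; simp⟩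
  set ψ := hG.implicitFunction (by simp) hinv
  have hψ : ContDiffAt ℝ ∞ ψ z := hG.contDiffAt_implicitFunction (by simp) hinv
  have hψz : ψ z = 1 := hG.implicitFunction_apply_self (by simp) hinv
  have hψG : ∀ᶠ x in 𝓝 z, Φ (ψ x • x) = Φ ((1 : ℝ) • z) :=
    hG.eventually_apply_implicitFunction (by simp) hinv
  have hψpos : ∀ᶠ x in 𝓝 z, 0 < ψ x :=
    continuousAt_const.eventually_lt hψ.continuousAt (hψz ▸ one_pos)
  have hψlevel : ∀ᶠ x in 𝓝 z, Φ (ψ x • x) = 1 → g (ψ x • x) = 1 := by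
    refine Tendsto.eventually (f := fun x => ψ x • x) ?_ hlevel
    exact (hψ.continuousAt.smul continuousAt_id).tendsto.mono_right (by simp [hψz])
  refine (hψ.inv (hψz ▸ one_ne_zero)).congr_of_eventuallyEq ?_
  filter_upwards [hψG, hψpos, hψlevel] with x hxG hxpos hxlevel
  rw [one_smul, hz] at hxG
  exact eq_inv_of_mul_eq_one_right (hg _ _ hxpos ▸ hxlevel hxG)

theorem gauge_eq_one_of_eq_one (hΦ : ConvexOn ℝ V Φ) (h0 : 0 ∈ V) (hΦ0 : Φ 0 < 1)
    (habs : Absorbent ℝ {x | x ∈ V ∧ Φ x ≤ 1}) (hz : z ∈ V) (hΦz : Φ z = 1) :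
    gauge {x | x ∈ V ∧ Φ x ≤ 1} z = 1 := by
  have hmem : z ∈ {x | x ∈ V ∧ Φ x ≤ 1} := ⟨hz, hΦz.le⟩
  refine (gauge_le_one_of_mem hmem).eq_of_not_lt fun hlt => ?_
  obtain ⟨s, hs0, hs1, d, ⟨hdV, hd1⟩, hd⟩ := exists_lt_of_gauge_lt habs hlt
  have hconv := hΦ.2 hdV h0 hs0.le (sub_nonneg.2 hs1.le) (add_sub_cancel _ _)
  simp only [smul_zero, add_zero, smul_eq_mul, show s • d = z from hd, hΦz] at hconv
  nlinarith

theorem eq_one_of_gauge_eq_one (hV : IsOpen V) (hΦ : ConvexOn ℝ V Φ) (hΦc : ContinuousOn Φ V)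
    (h0 : 0 ∈ V) (hΦ0 : Φ 0 < 1) (hcl : IsClosed {x | x ∈ V ∧ Φ x ≤ 1})
    (hz : gauge {x | x ∈ V ∧ Φ x ≤ 1} z = 1) : z ∈ V ∧ Φ z = 1 := by
  have hconv := hΦ.convex_le 1
  have hnhds := setOf_le_one_mem_nhds hV hΦc h0 hΦ0
  have hmem := (gauge_le_one_iff_mem_closure hconv hnhds).1 hz.le
  rw [hcl.closure_eq] at hmem
  obtain ⟨hzV, hz1⟩ := hmem
  refine ⟨hzV, hz1.eq_of_not_lt fun hlt => ?_⟩
  exact hz.not_lt <| (gauge_lt_one_iff_mem_interior hconv hnhds).2 <|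
    mem_interior_iff_mem_nhds.2 (setOf_le_one_mem_nhds hV hΦc hzV hlt)

theorem contDiffOn_gauge_setOf_le_one [CompleteSpace E] (hV : IsOpen V)
    (hVb : Bornology.IsBounded V)
    (hΦ : ConvexOn ℝ V Φ) (hsmooth : ContDiffOn ℝ ∞ Φ V) (h0 : 0 ∈ V) (hΦ0 : Φ 0 < 1)
    (hcl : IsClosed {x | x ∈ V ∧ Φ x ≤ 1}) :
    ContDiffOn ℝ ∞ (gauge {x | x ∈ V ∧ Φ x ≤ 1}) {0}ᶜ := by
  set D := {x | x ∈ V ∧ Φ x ≤ 1}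
  have habs : Absorbent ℝ D :=
    absorbent_nhds_zero (setOf_le_one_mem_nhds hV hsmooth.continuousOn h0 hΦ0)
  have hhom : ∀ (c : ℝ) (x : E), 0 < c → gauge D (c • x) = c * gauge D x := fun c x hc =>
    gauge_smul_of_nonneg hc.le x
  intro f hf
  refine ContDiffAt.contDiffWithinAt ?_
  have hl : 0 < gauge D f := (gauge_pos habs
    ((NormedSpace.isVonNBounded_iff ℝ).2 (hVb.subset fun x hx => hx.1))).2 hf
  set z := (gauge D f)⁻¹ • f
  have hz : gauge D z = 1 := by rw [hhom _ _ (inv_pos.2 hl), inv_mul_cancel₀ hl.ne']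
  obtain ⟨hzV, hΦz⟩ := eq_one_of_gauge_eq_one hV hΦ hsmooth.continuousOn h0 hΦ0 hcl hz
  have hΦs : ContDiffAt ℝ ∞ Φ z := hsmooth.contDiffAt (hV.mem_nhds hzV)
  have hsm : ContDiffAt ℝ ∞ (gauge D) z := by
    refine contDiffAt_of_eq_one_on_levelSet hhom hΦs hΦz ?_ ?_
    · exact (fderiv_self_pos_of_convexOn hΦ h0 hzV (hΦz.symm ▸ hΦ0)
        (hΦs.differentiableAt (by simp))).ne'
    · filter_upwards [hV.mem_nhds hzV] with w hw hw1
      exact gauge_eq_one_of_eq_one hΦ h0 hΦ0 habs hw hw1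
  have hscale : gauge D = fun x => gauge D f * gauge D ((gauge D f)⁻¹ • x) := funext fun x => by
    rw [hhom _ _ (inv_pos.2 hl), mul_inv_cancel_left₀ hl.ne']
  rw [hscale]
  exact contDiffAt_const.mul
    (ContDiffAt.comp f (g := gauge D) hsm (contDiff_const_smul _).contDiffAt)

end Gauge

/-! ### Smooth approximation by convex barriers -/

section LocallyFiniteSums

variable {E : Type*} [NormedAddCommGroup E] [NormedSpace ℝ E] {W : Type*} {V : Set E}
  {f : W → E → ℝ}

theorem convexOn_tsum (hV : Convex ℝ V) (hf : ∀ w, ConvexOn ℝ V (f w))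
    (hs : ∀ x ∈ V, Summable fun w => f w x) : ConvexOn ℝ V fun x => ∑' w, f w x := by
  refine ⟨hV, fun x hx y hy a b ha hb hab => ?_⟩
  rw [smul_eq_mul, smul_eq_mul, ← tsum_mul_left, ← tsum_mul_left,
    ← ((hs x hx).mul_left a).tsum_add ((hs y hy).mul_left b)]
  exact (hs _ (hV hx hy ha hb hab)).tsum_le_tsum (fun w => (hf w).2 hx hy ha hb hab)
    (((hs x hx).mul_left a).add ((hs y hy).mul_left b))

theorem contDiffOn_tsum_of_eventually_eq_zero {n : WithTop ℕ∞} (hf : ∀ w, ContDiff ℝ n (f w))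
    (hloc : ∀ y ∈ V, ∃ J : Finset W, ∀ᶠ z in 𝓝 y, ∀ w ∉ J, f w z = 0) :
    ContDiffOn ℝ n (fun x => ∑' w, f w x) V := by
  intro y hy
  obtain ⟨J, hJ⟩ := hloc y hy
  have hsum : (fun x => ∑' w, f w x) =ᶠ[𝓝 y] fun x => ∑ w ∈ J, f w x := by
    filter_upwards [hJ] with z hz using tsum_eq_sum hz
  exact ((ContDiff.sum fun w _ => hf w).contDiffAt.congr_of_eventuallyEq hsum).contDiffWithinAt

end LocallyFiniteSums

section Barrier

theorem isClosed_setOf_lt_one_and_le_one {X : Type*} [TopologicalSpace X] {P Φ : X → ℝ}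
    (hP : Continuous P) (hΦ : ContinuousOn Φ {x | P x < 1})
    (hbarrier : ∀ y, P y = 1 → ∀ᶠ z in 𝓝 y, P z < 1 → 1 < Φ z) :
    IsClosed {x | x ∈ {x | P x < 1} ∧ Φ x ≤ 1} := by
  refine isClosed_of_closure_subset fun y hy => ?_
  have hfreq := mem_closure_iff_frequently.1 hy
  have hy1 : P y ≤ 1 :=
    closure_minimal (fun z hz => le_of_lt hz.1) (isClosed_le hP continuous_const) hy
  rcases hy1.lt_or_eq with hlt | heq
  · refine ⟨hlt, not_lt.1 fun hgt => ?_⟩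
    have hev := (hΦ.continuousAt ((isOpen_lt hP continuous_const).mem_nhds hlt)).eventually
      (lt_mem_nhds hgt)
    obtain ⟨z, hz, hgtz⟩ := (hfreq.and_eventually hev).exists
    exact hz.2.not_gt hgtz
  · obtain ⟨z, hz, hgtz⟩ := (hfreq.and_eventually (hbarrier y heq)).exists
    exact absurd (hgtz hz.1) hz.2.not_gt

variable {E : Type*} [NormedAddCommGroup E] [NormedSpace ℝ E] {P : E → ℝ}

theorem IsComparableToNorm.continuous (hP : IsComparableToNorm P) (hsub : IsSublinear P) :
    Continuous P := by
  obtain ⟨c, C, -, -, h⟩ := hP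
  exact hsub.continuous fun x => (h x).2

/-- The approximant is the gauge of `{P < 1, Φ ≤ 1}`, whose boundary is kept away from `{P = 1}` by
the blow-up of `Φ`. -/
theorem IsSublinear.exists_contDiffOn_of_barrier [CompleteSpace E] (hP : IsSublinear P)
    (hcomp : IsComparableToNorm P) {δ : ℝ} (hδ0 : 0 < δ) (hδ1 : δ < 1) {Φ : E → ℝ}
    (hΦ : ConvexOn ℝ {x | P x < 1} Φ) (hsmooth : ContDiffOn ℝ ∞ Φ {x | P x < 1})
    (hzero : ∀ x, P x ≤ 1 - δ → Φ x = 0)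
    (hbarrier : ∀ y, P y = 1 → ∀ᶠ z in 𝓝 y, P z < 1 → 1 < Φ z) :
    ∃ q : E → ℝ, IsSublinear q ∧ ContDiffOn ℝ ∞ q {0}ᶜ ∧ ∀ x, P x ≤ q x ∧ (1 - δ) * q x ≤ P x := by
  have hPc : Continuous P := hcomp.continuous hP
  have hopen : IsOpen {x | P x < 1} := isOpen_lt hPc continuous_const
  have h0 : (0 : E) ∈ {x | P x < 1} := hcomp.map_zero.trans_lt one_pos
  have hΦ0 : Φ 0 < 1 := (hzero 0 (by rw [hcomp.map_zero]; linarith)).trans_lt one_pos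
  have hcl := isClosed_setOf_lt_one_and_le_one hPc hsmooth.continuousOn hbarrier
  have hsmoothD := contDiffOn_gauge_setOf_le_one hopen hcomp.isBounded_setOf_lt_one hΦ hsmooth h0
    hΦ0 hcl
  set D := {x | x ∈ {x | P x < 1} ∧ Φ x ≤ 1}
  have habs : Absorbent ℝ D :=
    absorbent_nhds_zero (setOf_le_one_mem_nhds hopen hsmooth.continuousOn h0 hΦ0)
  have hsub : IsSublinear (gauge D) :=
    ⟨gauge_add_le (hΦ.convex_le 1) habs, fun c x hc => gauge_smul_of_nonneg hc.le x⟩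
  refine ⟨gauge D, hsub, hsmoothD, fun x => ⟨le_of_forall_gt fun r hr => ?_, ?_⟩⟩
  · obtain ⟨s, hs0, hsr, d, hd, rfl⟩ := exists_lt_of_gauge_lt habs hr
    calc P (s • d) = s * P d := hP.smul_of_pos s d hs0
      _ ≤ s * 1 := mul_le_mul_of_nonneg_left (le_of_lt hd.1) hs0.le
      _ < r := by rwa [mul_one]
  · rcases eq_or_ne x 0 with rfl | hx
    · rw [hsub.map_zero, mul_zero, hcomp.map_zero]
    · have hPx := hcomp.pos hx
      have ha : 0 < (1 - δ) / P x := div_pos (sub_pos.2 hδ1) hPx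
      have hval : P (((1 - δ) / P x) • x) = 1 - δ := by
        rw [hP.smul_of_pos _ _ ha, div_mul_cancel₀ _ hPx.ne']
      have hmem : ((1 - δ) / P x) • x ∈ D :=
        ⟨hval.trans_lt (sub_lt_self 1 hδ0), (hzero _ hval.le).trans_le zero_le_one⟩
      have hle := gauge_le_one_of_mem hmem
      rwa [hsub.smul_of_pos _ _ ha, div_mul_eq_mul_div, div_le_one hPx] at hle

theorem IsSublinear.isSmoothable_of_forall_exists_between (hP : IsSublinear P)
    (hcomp : IsComparableToNorm P)
    (h : ∀ δ : ℝ, 0 < δ → δ < 1 → ∃ q : E → ℝ, IsSublinear q ∧ ContDiffOn ℝ ∞ q {0}ᶜ ∧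
      ∀ x, P x ≤ q x ∧ (1 - δ) * q x ≤ P x) : IsSmoothable P := by
  refine ⟨hP, fun ε hε => ?_⟩
  obtain ⟨c, C, -, hC, hPC⟩ := id hcomp
  have hδ0 : 0 < min (1 / 2) (ε / C) := lt_min (by norm_num) (div_pos hε hC)
  have hδC : min (1 / 2) (ε / C) * C ≤ ε := (le_div_iff₀ hC).1 (min_le_right _ _)
  have hδ1 : min (1 / 2) (ε / C) < 1 := (min_le_left _ _).trans_lt (by norm_num)
  set δ := min (1 / 2) (ε / C)
  obtain ⟨q, hq, hqs, hPq⟩ := h δ hδ0 hδ1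
  refine ⟨fun x => (1 - δ) * q x, hq.const_mul (sub_nonneg.2 hδ1.le), contDiffOn_const.mul hqs,
    fun x => ⟨?_, (hPq x).2⟩⟩
  calc P x - ε * ‖x‖ ≤ P x - δ * C * ‖x‖ := by gcongr
    _ = P x - δ * (C * ‖x‖) := by rw [mul_assoc]
    _ ≤ P x - δ * P x := by linarith [mul_le_mul_of_nonneg_left (hPC x).2 hδ0.le]
    _ = (1 - δ) * P x := by ring
    _ ≤ (1 - δ) * q x := mul_le_mul_of_nonneg_left (hPq x).1 (sub_nonneg.2 hδ1.le)

theorem contDiff_smoothRamp_comp {h : E → ℝ} (hh : ContDiffOn ℝ ∞ h {0}ᶜ)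
    (h0 : ∀ᶠ z in 𝓝 0, h z ≤ 0) : ContDiff ℝ ∞ fun x => smoothRamp (h x) := by
  refine contDiff_iff_contDiffAt.2 fun y => ?_
  rcases eq_or_ne y 0 with rfl | hy
  · have hzero : (fun x => smoothRamp (h x)) =ᶠ[𝓝 0] fun _ => 0 :=
      h0.mono fun z hz => smoothRamp.zero_of_nonpos hz
    exact contDiffAt_const.congr_of_eventuallyEq hzero
  · exact smoothRamp.contDiff.contDiffAt.comp y
      (hh.contDiffAt (isOpen_compl_singleton.mem_nhds hy))

theorem IsSublinear.exists_contDiffOn_of_locallyFinite [CompleteSpace E] (hP : IsSublinear P)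
    (hcomp : IsComparableToNorm P) {δ : ℝ} (hδ0 : 0 < δ) (hδ1 : δ < 1) {W : Type*}
    {h : W → E → ℝ} (hconv : ∀ w, ConvexOn ℝ univ (h w))
    (hsmooth : ∀ w, ContDiffOn ℝ ∞ (h w) {0}ᶜ) (hnonpos : ∀ w x, P x ≤ 1 - δ → h w x ≤ 0)
    (hloc : ∀ y, P y < 1 → ∃ J : Finset W, ∀ᶠ z in 𝓝 y, ∀ w ∉ J, h w z ≤ 0)
    (hlarge : ∀ y, P y = 1 → ∃ w, 3 ≤ h w y) :
    ∃ q : E → ℝ, IsSublinear q ∧ ContDiffOn ℝ ∞ q {0}ᶜ ∧ ∀ x, P x ≤ q x ∧ (1 - δ) * q x ≤ P x := by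
  have hPc : Continuous P := hcomp.continuous hP
  have hV : Convex ℝ {x | P x < 1} := by simpa using hP.convexOn.convex_lt 1
  have hnear0 : ∀ᶠ z in 𝓝 (0 : E), P z < 1 - δ :=
    hPc.continuousAt.eventually_lt continuousAt_const (by rw [hcomp.map_zero]; linarith)
  have hramp : ∀ w, ContDiff ℝ ∞ fun x => smoothRamp (h w x) := fun w =>
    contDiff_smoothRamp_comp (hsmooth w) (hnear0.mono fun z hz => hnonpos w z hz.le)
  have hlocR : ∀ y ∈ {x | P x < 1}, ∃ J : Finset W, ∀ᶠ z in 𝓝 y, ∀ w ∉ J,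
      smoothRamp (h w z) = 0 := fun y hy => by
    obtain ⟨J, hJ⟩ := hloc y hy
    exact ⟨J, hJ.mono fun z hz w hw => smoothRamp.zero_of_nonpos (hz w hw)⟩
  have hsum : ∀ y ∈ {x | P x < 1}, Summable fun w => smoothRamp (h w y) := fun y hy => by
    obtain ⟨J, hJ⟩ := hlocR y hy
    exact summable_of_ne_finset_zero hJ.self_of_nhds
  refine hP.exists_contDiffOn_of_barrier hcomp hδ0 hδ1
    (Φ := fun x => ∑' w, smoothRamp (h w x)) (convexOn_tsum hV
      (fun w => smoothRamp.convexOn_comp ((hconv w).subset (subset_univ _) hV)) hsum)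
    (contDiffOn_tsum_of_eventually_eq_zero hramp hlocR) (fun x hx => ?_) (fun y hy => ?_)
  · simp only [smoothRamp.zero_of_nonpos (hnonpos _ x hx), tsum_zero]
  · obtain ⟨w, hw⟩ := hlarge y hy
    filter_upwards [(hramp w).continuous.continuousAt.eventually
      (lt_mem_nhds (smoothRamp.one_lt hw))] with z hz hz1
    exact hz.trans_le ((hsum z hz1).le_tsum w fun _ _ => smoothRamp.nonneg _)

end Barrier

section Supremum

theorem isSublinear_of_forall_exists_eq {E ι : Type*} [AddCommGroup E] [Module ℝ E] {P : E → ℝ}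
    {p : ι → E → ℝ} (hp : ∀ i, IsSublinear (p i)) (hle : ∀ i x, p i x ≤ P x)
    (hatt : ∀ x, ∃ i, p i x = P x) : IsSublinear P := by
  refine ⟨fun x y => ?_, fun c x hc => ?_⟩
  · obtain ⟨i, hi⟩ := hatt (x + y)
    exact hi ▸ ((hp i).add_le x y).trans (add_le_add (hle i x) (hle i y))
  · obtain ⟨i, hi⟩ := hatt (c • x)
    obtain ⟨j, hj⟩ := hatt x
    refine le_antisymm ?_ ?_
    · rw [← hi, (hp i).smul_of_pos c x hc]
      exact mul_le_mul_of_nonneg_left (hle i x) hc.le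
    · rw [← hj, ← (hp j).smul_of_pos c x hc]
      exact hle j _

variable {E ι : Type*} [NormedAddCommGroup E] {P : E → ℝ} {X : ι → E → ℝ}

theorem exists_finset_eventually_add_mul_le_one (hP : Continuous P) {η : ℕ → ℝ}
    (hη0 : ∀ k, 0 ≤ η k) (hη : Tendsto η atTop (𝓝 0)) {K L : ℝ}
    (hXK : ∀ i x, P x ≤ 1 → X i x ≤ K) (hXL : ∀ i x y, X i y ≤ X i x + L * ‖y - x‖) {y : E}
    (hfin : ∀ r > 0, {i | r < X i y}.Finite) (hy : P y < 1) :
    ∃ J : Finset (ι × ℕ), ∀ᶠ z in 𝓝 y, ∀ w ∉ J, P z + η w.2 * X w.1 z ≤ 1 := by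
  obtain ⟨g, hyg, hg1⟩ := exists_between hy
  obtain ⟨B, hB⟩ := hη.bddAbove_range
  replace hB : ∀ k, η k ≤ B := fun k => hB (mem_range_self k)
  have hB0 : 0 ≤ B := (hη0 0).trans (hB 0)
  obtain ⟨k₀, hk₀⟩ := eventually_atTop.1 <|
    (by simpa using hη.mul_const K : Tendsto (fun k => η k * K) atTop (𝓝 0)).eventually_le_const
      (sub_pos.2 hg1)
  obtain ⟨r, hr, hBr⟩ : ∃ r > 0, B * (r + r) ≤ 1 - g := by
    refine ⟨(1 - g) / (2 * (B + 1)), div_pos (sub_pos.2 hg1) (by positivity), ?_⟩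
    have hden : (B + 1) * ((1 - g) / (2 * (B + 1)) + (1 - g) / (2 * (B + 1))) = 1 - g := by
      field_simp
      ring
    have : 0 ≤ (1 - g) / (2 * (B + 1)) := div_nonneg (sub_pos.2 hg1).le (by positivity)
    linarith
  have hnear : ∀ᶠ z in 𝓝 y, L * ‖z - y‖ < r :=
    (by fun_prop : Continuous fun z => L * ‖z - y‖).continuousAt.eventually_lt continuousAt_const
      (by simpa using hr)
  refine ⟨(hfin r hr).toFinset ×ˢ Finset.range k₀, ?_⟩
  filter_upwards [hP.continuousAt.eventually_lt continuousAt_const hyg, hnear] with z hPz hz w hw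
  suffices η w.2 * X w.1 z ≤ 1 - g by linarith
  rcases le_or_gt k₀ w.2 with hk | hk
  · exact (mul_le_mul_of_nonneg_left (hXK w.1 z (hPz.trans hg1).le) (hη0 _)).trans (hk₀ _ hk)
  · have hXy : X w.1 y ≤ r := not_lt.1 fun h =>
      hw (Finset.mem_product.2 ⟨(hfin r hr).mem_toFinset.2 h, Finset.mem_range.2 hk⟩)
    calc η w.2 * X w.1 z ≤ η w.2 * (r + r) :=
          mul_le_mul_of_nonneg_left ((hXL w.1 y z).trans (add_le_add hXy hz.le)) (hη0 _)
      _ ≤ B * (r + r) := mul_le_mul_of_nonneg_right (hB _) (by linarith)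
      _ ≤ 1 - g := hBr

theorem three_le_add_mul_sub_one_mul_div {k η τ q : ℝ} (hη : 0 < η) (hk : 0 < k) (hτ : 4 ≤ k * τ)
    (hq : 1 - η / k ≤ q) : 3 ≤ (q + η * τ - 1) * (k / η) :=
  calc (3 : ℝ) ≤ k * τ - 1 := by linarith
    _ = (1 - η / k + η * τ - 1) * (k / η) := by field_simp; ring
    _ ≤ (q + η * τ - 1) * (k / η) :=
      mul_le_mul_of_nonneg_right (by linarith) (div_pos hk hη).le

variable [NormedSpace ℝ E] [CompleteSpace E] {p : ι → E → ℝ} {L : ℝ}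

/-- The certificates `X i` are small perturbations which make `p i`, where it attains the supremum
and `0 < X i`, locally the largest of finitely many competitors. -/
theorem IsSublinear.exists_contDiffOn_of_certificates (hP : IsSublinear P)
    (hcomp : IsComparableToNorm P) (hp : ∀ i, IsSmoothable (p i)) (hle : ∀ i x, p i x ≤ P x)
    (hXc : ∀ i, ConvexOn ℝ univ (X i)) (hXs : ∀ i, ContDiff ℝ ∞ (X i))
    (hXL : ∀ i x y, X i y ≤ X i x + L * ‖y - x‖)
    (hfin : ∀ x, ∀ r > 0, {i | r < X i x}.Finite)
    (hatt : ∀ x ≠ 0, ∃ i, p i x = P x ∧ 0 < X i x) {K : ℝ} (hXK : ∀ i x, P x ≤ 1 → X i x ≤ K)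
    {δ : ℝ} (hδ0 : 0 < δ) (hδ1 : δ < 1) {η : ℕ → ℝ} (hη0 : ∀ k, 0 < η k)
    (hη : Tendsto η atTop (𝓝 0)) (hηK : ∀ k, η k * K ≤ δ) :
    ∃ q : E → ℝ, IsSublinear q ∧ ContDiffOn ℝ ∞ q {0}ᶜ ∧ ∀ x, P x ≤ q x ∧ (1 - δ) * q x ≤ P x := by
  obtain ⟨R, hR, hPR⟩ := hcomp.exists_norm_le
  have hε : ∀ k : ℕ, 0 < η k / (k + 1) / R := fun k =>
    div_pos (div_pos (hη0 k) k.cast_add_one_pos) hR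
  choose q hq hqs hpq using fun i (k : ℕ) => (hp i).exists_contDiffOn _ (hε k)
  have hfac : ∀ k : ℕ, 0 < (k + 1) / η k := fun k => div_pos k.cast_add_one_pos (hη0 k)
  have hnonpos : ∀ w : ι × ℕ, ∀ x, P x + η w.2 * X w.1 x ≤ 1 →
      (q w.1 w.2 x + η w.2 * X w.1 x - 1) * ((w.2 + 1) / η w.2) ≤ 0 := fun w x h =>
    mul_nonpos_of_nonpos_of_nonneg (by linarith [(hpq w.1 w.2 x).2, hle w.1 x]) (hfac w.2).le
  refine hP.exists_contDiffOn_of_locallyFinite hcomp hδ0 hδ1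
    (h := fun w : ι × ℕ => fun x => (q w.1 w.2 x + η w.2 * X w.1 x - 1) * ((w.2 + 1) / η w.2))
    (fun w => ?_) (fun w => ?_) (fun w x hx => hnonpos w x ?_) (fun y hy => ?_) (fun y hy => ?_)
  · have hcx := ((hq w.1 w.2).convexOn.add ((hXc w.1).smul (hη0 w.2).le)).add_const (-1)
    exact (hcx.smul (hfac w.2).le).congr fun x _ => by
      simp only [Pi.add_apply, smul_eq_mul]; ring
  · exact (((hqs w.1 w.2).add (contDiffOn_const.mul (hXs w.1).contDiffOn)).sub
      contDiffOn_const).mul contDiffOn_const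
  · linarith [hηK w.2, mul_le_mul_of_nonneg_left (hXK w.1 x (by linarith)) (hη0 w.2).le]
  · obtain ⟨J, hJ⟩ := exists_finset_eventually_add_mul_le_one (hcomp.continuous hP)
      (fun k => (hη0 k).le) hη hXK hXL (hfin y) hy
    exact ⟨J, hJ.mono fun z hz w hw => hnonpos w z (hz w hw)⟩
  · have hy0 : y ≠ 0 := fun h => zero_ne_one (hcomp.map_zero.symm.trans (h ▸ hy))
    obtain ⟨i, hi, hτ⟩ := hatt y hy0
    obtain ⟨k, hk⟩ := exists_nat_gt (4 / X i y)
    rw [div_lt_iff₀ hτ] at hk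
    refine ⟨(i, k), three_le_add_mul_sub_one_mul_div (hη0 k) k.cast_add_one_pos (by linarith) ?_⟩
    have hεy : η k / (k + 1) / R * ‖y‖ ≤ η k / (k + 1) :=
      (mul_le_mul_of_nonneg_left (hPR y hy.le) (hε k).le).trans_eq (div_mul_cancel₀ _ hR.ne')
    linarith [(hpq i k y).1]

theorem IsSmoothable.of_forall_exists_eq_of_lipschitz (hp : ∀ i, IsSmoothable (p i))
    (hcomp : IsComparableToNorm P) (hle : ∀ i x, p i x ≤ P x)
    (hXc : ∀ i, ConvexOn ℝ univ (X i)) (hXs : ∀ i, ContDiff ℝ ∞ (X i)) (hX0 : ∀ i, X i 0 ≤ 1)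
    (hL : 0 ≤ L) (hXL : ∀ i x y, X i y ≤ X i x + L * ‖y - x‖)
    (hfin : ∀ x, ∀ r > 0, {i | r < X i x}.Finite) (hatt : ∀ x, ∃ i, p i x = P x)
    (hatt_pos : ∀ x ≠ 0, ∃ i, p i x = P x ∧ 0 < X i x) : IsSmoothable P := by
  have hP : IsSublinear P := isSublinear_of_forall_exists_eq (fun i => (hp i).isSublinear) hle hatt
  refine hP.isSmoothable_of_forall_exists_between hcomp fun δ hδ0 hδ1 => ?_
  obtain ⟨R, hR, hPR⟩ := hcomp.exists_norm_le
  have hK : 0 < 1 + L * R := by positivity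
  have hXK : ∀ i x, P x ≤ 1 → X i x ≤ 1 + L * R := fun i x hx =>
    calc X i x ≤ X i 0 + L * ‖x - 0‖ := hXL i 0 x
      _ ≤ 1 + L * R := by
        rw [sub_zero]
        exact add_le_add (hX0 i) (mul_le_mul_of_nonneg_left (hPR x hx) hL)
  refine hP.exists_contDiffOn_of_certificates hcomp hp hle hXc hXs hXL hfin hatt_pos hXK hδ0 hδ1
    (η := fun k => δ / (1 + L * R) / (k + 1)) (fun k => by positivity)
    (tendsto_const_nhds.div_atTop
      (tendsto_atTop_add_const_right _ _ tendsto_natCast_atTop_atTop)) fun k => ?_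
  rw [← le_div_iff₀ hK]
  exact div_le_self (by positivity) (le_add_of_nonneg_left k.cast_nonneg)

theorem IsSmoothable.of_forall_exists_eq (hp : ∀ i, IsSmoothable (p i))
    (hcomp : IsComparableToNorm P) (hle : ∀ i x, p i x ≤ P x) (hatt : ∀ x, ∃ i, p i x = P x)
    {T : ι → E →L[ℝ] ℝ} (hL : 0 ≤ L) (hT : ∀ i x, T i x ≤ L * ‖x‖)
    (hfin : ∀ x, ∀ r > 0, {i | r < T i x}.Finite) (F : Finset ι)
    (hatt_pos : ∀ x ≠ 0, ∃ i, p i x = P x ∧ (i ∈ F ∨ 0 < T i x)) : IsSmoothable P := by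
  classical
  refine IsSmoothable.of_forall_exists_eq_of_lipschitz hp hcomp hle
    (X := fun i x => if i ∈ F then 1 else T i x) (fun i => ?_) (fun i => ?_) (fun i => ?_) hL
    (fun i x y => ?_) (fun x r hr => ((hfin x r hr).union F.finite_toSet).subset fun i hi => ?_)
    hatt fun x hx => ?_
  · by_cases hi : i ∈ F <;> simp only [hi, if_true, if_false]
    · exact convexOn_const 1 convex_univ
    · exact (T i : E →ₗ[ℝ] ℝ).convexOn convex_univ
  · by_cases hi : i ∈ F <;> simp only [hi, if_true, if_false]
    · exact contDiff_const
    · exact (T i).contDiff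
  · split_ifs <;> simp
  · split_ifs
    · exact le_add_of_nonneg_right (by positivity)
    · have := hT i (y - x)
      rw [map_sub] at this
      linarith
  · by_cases hiF : i ∈ F
    · exact Or.inr hiF
    · exact Or.inl (by simpa [hiF] using hi)
  · obtain ⟨i, hi, h⟩ := hatt_pos x hx
    refine ⟨i, hi, ?_⟩
    by_cases hiF : i ∈ F
    · simp [hiF]
    · simpa [hiF] using h

end Supremum

/-! ### `ℓ²`-sums of seminorms -/

section L2Seminorm

variable {E ι : Type*} [AddCommGroup E] [Module ℝ E] {S : ι → Seminorm ℝ E}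

/-- The `ℓ²`-sum `x ↦ (∑ S i x ^ 2) ^ (1 / 2)` of a pointwise square-summable family of
seminorms. -/
noncomputable def l2Seminorm (S : ι → Seminorm ℝ E) (hS : ∀ x, Summable fun i => S i x ^ 2) :
    Seminorm ℝ E :=
  Seminorm.of (fun x => √(∑' i, S i x ^ 2))
    (fun x y => by
      have hL := Real.Lp_add_le_tsum_of_nonneg one_le_two (fun i => apply_nonneg (S i) x)
        (fun i => apply_nonneg (S i) y) (by simpa using hS x) (by simpa using hS y)
      simp only [Real.rpow_two, ← Real.sqrt_eq_rpow] at hL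
      exact (Real.sqrt_le_sqrt ((hS (x + y)).tsum_le_tsum (fun i => pow_le_pow_left₀
        (apply_nonneg _ _) (map_add_le_add (S i) x y) 2) hL.1)).trans hL.2)
    fun c x => by
      simp only [map_smul_eq_mul, mul_pow]
      rw [tsum_mul_left, Real.sqrt_mul (sq_nonneg _), Real.sqrt_sq (norm_nonneg c)]

variable {hS : ∀ x, Summable fun i => S i x ^ 2}

theorem l2Seminorm_apply (x : E) : l2Seminorm S hS x = √(∑' i, S i x ^ 2) :=
  rfl

theorem l2Seminorm_sq (x : E) : l2Seminorm S hS x ^ 2 = ∑' i, S i x ^ 2 :=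
  Real.sq_sqrt (tsum_nonneg fun _ => sq_nonneg _)

theorem le_l2Seminorm (i : ι) (x : E) : S i x ≤ l2Seminorm S hS x :=
  Real.le_sqrt_of_sq_le ((hS x).le_tsum i fun _ _ => sq_nonneg _)

end L2Seminorm

section L2SeminormSmooth

variable {E ι : Type*} [NormedAddCommGroup E] [NormedSpace ℝ E]

theorem contDiffOn_one_tsum_of_isPreconnected {f : ι → E → ℝ} {U : Set E} (hU : IsOpen U)
    (hUc : IsPreconnected U) (hf : ∀ i, ContDiffOn ℝ 1 (f i) U) {u : ι → ℝ} (hu : Summable u)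
    (hfu : ∀ i, ∀ x ∈ U, ‖fderiv ℝ (f i) x‖ ≤ u i) {x₀ : E} (hx₀ : x₀ ∈ U)
    (hs : Summable fun i => f i x₀) : ContDiffOn ℝ 1 (fun x => ∑' i, f i x) U := by
  refine fun x hx => ContDiffAt.contDiffWithinAt (contDiffAt_one_iff.2
    ⟨fun x => ∑' i, fderiv ℝ (f i) x, U, hU.mem_nhds hx,
      continuousOn_tsum (fun i => (hf i).continuousOn_fderiv_of_isOpen hU le_rfl) hu hfu,
      fun y hy => ?_⟩)
  exact hasFDerivAt_tsum_of_isPreconnected hu hU hUc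
    (fun i z hz => (((hf i).differentiableOn one_ne_zero).differentiableAt
      (hU.mem_nhds hz)).hasFDerivAt) hfu hx₀ hs hy

theorem norm_fderiv_seminorm_sq_le {p : Seminorm ℝ E} {b : ℝ} (hb : 0 ≤ b)
    (hp : ∀ x, p x ≤ b * ‖x‖) {x : E} (hd : DifferentiableAt ℝ p x) :
    ‖fderiv ℝ (fun y => p y ^ 2) x‖ ≤ b ^ 2 * (2 * ‖x‖) := by
  have hfd : ‖fderiv ℝ p x‖ ≤ b := norm_fderiv_le_of_lip' ℝ hb
    (Eventually.of_forall fun y => (abs_sub_map_le_sub p y x).trans (hp _))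
  rw [(hd.hasFDerivAt.pow 2).fderiv, norm_smul]
  have hpx : ‖(2 : ℕ) • p x ^ (2 - 1)‖ ≤ 2 * (b * ‖x‖) := by
    simpa [abs_of_nonneg (apply_nonneg p x)] using hp x
  calc ‖(2 : ℕ) • p x ^ (2 - 1)‖ * ‖fderiv ℝ p x‖ ≤ 2 * (b * ‖x‖) * b :=
        mul_le_mul hpx hfd (norm_nonneg _) (by positivity)
    _ = b ^ 2 * (2 * ‖x‖) := by ring

theorem summable_sq_of_forall_le {S : ι → Seminorm ℝ E} {b : ι → ℝ}
    (hb : Summable fun i => b i ^ 2) (hSb : ∀ i x, S i x ≤ b i * ‖x‖) (x : E) :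
    Summable fun i => S i x ^ 2 := by
  refine Summable.of_nonneg_of_le (fun i => sq_nonneg _) (fun i => ?_) (hb.mul_right (‖x‖ ^ 2))
  rw [← mul_pow]
  exact pow_le_pow_left₀ (apply_nonneg _ _) (hSb i x) 2

theorem contDiffOn_one_tsum_seminorm_sq {S : ι → Seminorm ℝ E} {b : ι → ℝ}
    (hb : Summable fun i => b i ^ 2) (hSb : ∀ i x, S i x ≤ b i * ‖x‖)
    (hs : ∀ i, ContDiffOn ℝ 1 (S i) {0}ᶜ) :
    ContDiffOn ℝ 1 (fun x => ∑' i, S i x ^ 2) {0}ᶜ := by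
  intro x₀ hx₀
  have hpos : 0 < ‖x₀‖ := norm_pos_iff.2 hx₀
  have hb0 : ∀ i, 0 ≤ b i := fun i =>
    nonneg_of_mul_nonneg_left ((apply_nonneg _ _).trans (hSb i x₀)) hpos
  have hU : Metric.ball x₀ ‖x₀‖ ⊆ {0}ᶜ := fun x hx h0 => by
    rw [mem_singleton_iff.1 h0, mem_ball_iff_norm, zero_sub, norm_neg] at hx
    exact lt_irrefl _ hx
  have hball : ∀ x ∈ Metric.ball x₀ ‖x₀‖, ‖x‖ ≤ 2 * ‖x₀‖ := fun x hx => by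
    have := norm_le_norm_add_norm_sub' x x₀
    linarith [mem_ball_iff_norm.1 hx]
  have hC1 := contDiffOn_one_tsum_of_isPreconnected Metric.isOpen_ball
    (convex_ball x₀ ‖x₀‖).isPreconnected (fun i => ((hs i).pow 2).mono hU)
    (hb.mul_right (2 * (2 * ‖x₀‖))) (fun i x hx => ?_) (Metric.mem_ball_self hpos)
    (summable_sq_of_forall_le hb hSb x₀)
  · exact (hC1.contDiffAt (Metric.ball_mem_nhds x₀ hpos)).contDiffWithinAt
  · refine (norm_fderiv_seminorm_sq_le (hb0 i) (hSb i) (((hs i).contDiffAt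
      (isOpen_compl_singleton.mem_nhds (hU hx))).differentiableAt one_ne_zero)).trans ?_
    gcongr
    exact hball x hx

theorem isComparableToNorm_l2Seminorm {S : ι → Seminorm ℝ E} {b : ι → ℝ}
    (hb : Summable fun i => b i ^ 2) (hSb : ∀ i x, S i x ≤ b i * ‖x‖) {i : ι}
    (hi : IsComparableToNorm (S i)) :
    IsComparableToNorm (l2Seminorm S (summable_sq_of_forall_le hb hSb)) := by
  obtain ⟨c, C, hc, -, h⟩ := hi
  refine ⟨c, √(∑' i, b i ^ 2) + 1, hc, by positivity, fun x =>
    ⟨(h x).1.trans (le_l2Seminorm i x), ?_⟩⟩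
  calc l2Seminorm S _ x ≤ √(∑' i, b i ^ 2 * ‖x‖ ^ 2) := by
        refine Real.sqrt_le_sqrt ((summable_sq_of_forall_le hb hSb x).tsum_le_tsum (fun i => ?_)
          (hb.mul_right _))
        rw [← mul_pow]
        exact pow_le_pow_left₀ (apply_nonneg _ _) (hSb i x) 2
    _ = √(∑' i, b i ^ 2) * ‖x‖ := by
        rw [tsum_mul_right, Real.sqrt_mul (tsum_nonneg fun _ => sq_nonneg _),
          Real.sqrt_sq (norm_nonneg x)]
    _ ≤ (√(∑' i, b i ^ 2) + 1) * ‖x‖ := by gcongr; exact le_add_of_nonneg_right zero_le_one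

theorem contDiffOn_l2Seminorm {n : WithTop ℕ∞} {S : ι → Seminorm ℝ E}
    {hS : ∀ x, Summable fun i => S i x ^ 2} (hcomp : IsComparableToNorm (l2Seminorm S hS))
    (hs : ContDiffOn ℝ n (fun x => ∑' i, S i x ^ 2) {0}ᶜ) :
    ContDiffOn ℝ n (l2Seminorm S hS) {0}ᶜ :=
  hs.sqrt fun x hx => by
    rw [← l2Seminorm_sq (hS := hS)]
    exact (pow_pos (hcomp.pos hx) 2).ne'

theorem summable_sq_fin (S : ℕ → Seminorm ℝ E) (n : ℕ) (x : E) :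
    Summable fun i : Fin n => S i x ^ 2 :=
  Summable.of_finite

theorem l2Seminorm_fin_le {S : ℕ → Seminorm ℝ E} (hS : ∀ x, Summable fun i => S i x ^ 2) (n : ℕ)
    (x : E) : l2Seminorm (fun i : Fin n => S i) (summable_sq_fin S n) x ≤ l2Seminorm S hS x := by
  rw [l2Seminorm_apply, tsum_fintype, Fin.sum_univ_eq_sum_range fun i => S i x ^ 2]
  exact Real.sqrt_le_sqrt ((hS x).sum_le_tsum _ fun _ _ => sq_nonneg _)

theorem l2Seminorm_le_fin_add {S : ℕ → Seminorm ℝ E} {b : ℕ → ℝ}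
    (hb : Summable fun i => b i ^ 2) (hSb : ∀ i x, S i x ≤ b i * ‖x‖) (n : ℕ) (x : E) :
    l2Seminorm S (summable_sq_of_forall_le hb hSb) x ≤
      l2Seminorm (fun i : Fin n => S i) (summable_sq_fin S n) x
        + √(∑' i, b (i + n) ^ 2) * ‖x‖ := by
  have hS := summable_sq_of_forall_le hb hSb
  have htail : ∑' i, S (i + n) x ^ 2 ≤ (∑' i, b (i + n) ^ 2) * ‖x‖ ^ 2 := by
    rw [← tsum_mul_right]
    refine ((summable_nat_add_iff n).2 (hS x)).tsum_le_tsum (fun i => ?_)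
      (((summable_nat_add_iff n).2 hb).mul_right _)
    rw [← mul_pow]
    exact pow_le_pow_left₀ (apply_nonneg _ _) (hSb _ x) 2
  have hsqrt : ∀ A B : ℝ, 0 ≤ A → 0 ≤ B → √(A + B) ≤ √A + √B := fun A B hA hB => by
    simpa [Real.sq_sqrt hA, Real.sq_sqrt hB] using sqrt_sq_add_sq_le √A 0 0 √B
  rw [l2Seminorm_apply, l2Seminorm_apply, tsum_fintype fun i : Fin n => S i x ^ 2,
    Fin.sum_univ_eq_sum_range fun i => S i x ^ 2, ← (hS x).sum_add_tsum_nat_add n]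
  calc √(∑ i ∈ Finset.range n, S i x ^ 2 + ∑' i, S (i + n) x ^ 2)
      ≤ √(∑ i ∈ Finset.range n, S i x ^ 2) + √(∑' i, S (i + n) x ^ 2) :=
        hsqrt _ _ (Finset.sum_nonneg fun _ _ => sq_nonneg _)
          (tsum_nonneg fun _ => sq_nonneg _)
    _ ≤ √(∑ i ∈ Finset.range n, S i x ^ 2) + √((∑' i, b (i + n) ^ 2) * ‖x‖ ^ 2) := by gcongr
    _ = _ := by
      rw [Real.sqrt_mul (tsum_nonneg fun _ => sq_nonneg _), Real.sqrt_sq (norm_nonneg x)]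

theorem isUniformLimitOfCkSmoothNorms_l2Seminorm {n : WithTop ℕ∞} {S : ℕ → Seminorm ℝ E}
    {b : ℕ → ℝ} (hb : Summable fun i => b i ^ 2) (hSb : ∀ i x, S i x ≤ b i * ‖x‖)
    (hcomp : IsComparableToNorm (S 0)) (hs : ∀ i, ContDiffOn ℝ n (S i) {0}ᶜ) :
    IsUniformLimitOfCkSmoothNorms n (l2Seminorm S (summable_sq_of_forall_le hb hSb)) := by
  have hcompN : ∀ N : ℕ, IsComparableToNorm
      (l2Seminorm (fun i : Fin (N + 1) => S i) (summable_sq_fin S (N + 1))) := fun N =>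
    isComparableToNorm_l2Seminorm (b := fun i : Fin (N + 1) => b i) Summable.of_finite
      (fun i => hSb i) (i := 0) hcomp
  refine ⟨fun N => l2Seminorm (fun i : Fin (N + 1) => S i) (summable_sq_fin S (N + 1)),
    fun N => ⟨(hcompN N).isEquivNorm, contDiffOn_l2Seminorm (hcompN N) ?_⟩, fun R _ ε hε => ?_⟩
  · simp only [tsum_fintype]
    exact ContDiffOn.sum fun i _ => (hs i).pow 2
  · have htail : Tendsto (fun N => √(∑' i, b (i + N) ^ 2) * R) atTop (𝓝 0) := by
      simpa using ((tendsto_sum_nat_add fun i => b i ^ 2).sqrt).mul_const R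
    obtain ⟨N₀, hN₀⟩ := eventually_atTop.1 (htail.eventually_le_const hε)
    refine ⟨N₀, fun N hN y hy => abs_sub_le_iff.2 ⟨?_, ?_⟩⟩
    · linarith [l2Seminorm_fin_le (summable_sq_of_forall_le hb hSb) (N + 1) y]
    · have := l2Seminorm_le_fin_add hb hSb (N + 1) y
      have := mul_le_mul_of_nonneg_left hy (Real.sqrt_nonneg (∑' i, b (i + (N + 1)) ^ 2))
      linarith [hN₀ (N + 1) (by omega)]

end L2SeminormSmooth

/-! ### Locally uniformly rotund convergence -/

section LURConverges

variable {E : Type*} [AddCommGroup E] [Module ℝ E]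

/-- The sequence `xr` looks convergent to `x` to the function `p`, in the sense of the definition
of local uniform rotundity; see `lurConverges_iff`. -/
def LURConverges (p : E → ℝ) (xr : ℕ → E) (x : E) : Prop :=
  Tendsto (fun r => p (xr r)) atTop (𝓝 (p x)) ∧
    Tendsto (fun r => p (xr r + x)) atTop (𝓝 (2 * p x))

variable {xr : ℕ → E} {x : E}

theorem sq_sub_le_two_mul_sq_add (p : Seminorm ℝ E) (x y : E) :
    (p y - p x) ^ 2 ≤ 2 * p y ^ 2 + 2 * p x ^ 2 - p (y + x) ^ 2 := by
  have h := pow_le_pow_left₀ (apply_nonneg p (y + x)) (map_add_le_add p y x) 2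
  linarith [h, add_sq (p y) (p x), sub_sq (p y) (p x)]

theorem lurConverges_iff {p : Seminorm ℝ E} :
    LURConverges p xr x ↔
      Tendsto (fun r => 2 * p (xr r) ^ 2 + 2 * p x ^ 2 - p (xr r + x) ^ 2) atTop (𝓝 0) := by
  refine ⟨fun h => ?_, fun h => ?_⟩
  · have hlim := (((h.1.pow 2).const_mul 2).add_const (2 * p x ^ 2)).sub (h.2.pow 2)
    rwa [show 2 * p x ^ 2 + 2 * p x ^ 2 - (2 * p x) ^ 2 = 0 by ring] at hlim
  · have hsq : Tendsto (fun r => (p (xr r) - p x) ^ 2) atTop (𝓝 0) :=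
      squeeze_zero (fun _ => sq_nonneg _) (fun r => sq_sub_le_two_mul_sq_add p x (xr r)) h
    have hx : Tendsto (fun r => p (xr r)) atTop (𝓝 (p x)) := by
      rw [tendsto_iff_norm_sub_tendsto_zero]
      simpa [Real.sqrt_sq_eq_abs] using hsq.sqrt
    refine ⟨hx, ?_⟩
    have hadd := ((((hx.pow 2).const_mul 2).add_const (2 * p x ^ 2)).sub h).sqrt
    rw [show 2 * p x ^ 2 + 2 * p x ^ 2 - 0 = (2 * p x) ^ 2 by ring,
      Real.sqrt_sq (mul_nonneg two_pos.le (apply_nonneg p x))] at hadd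
    refine hadd.congr fun r => ?_
    rw [sub_sub_cancel, Real.sqrt_sq (apply_nonneg p _)]

theorem LURConverges.of_l2Seminorm {ι : Type*} {S : ι → Seminorm ℝ E}
    {hS : ∀ x, Summable fun i => S i x ^ 2} (h : LURConverges (l2Seminorm S hS) xr x) (i : ι) :
    LURConverges (S i) xr x := by
  have hsum : ∀ y, HasSum (fun i => 2 * S i y ^ 2 + 2 * S i x ^ 2 - S i (y + x) ^ 2)
      (2 * l2Seminorm S hS y ^ 2 + 2 * l2Seminorm S hS x ^ 2 - l2Seminorm S hS (y + x) ^ 2) := by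
    intro y
    simp only [l2Seminorm_sq]
    exact (((hS y).hasSum.mul_left 2).add ((hS x).hasSum.mul_left 2)).sub (hS (y + x)).hasSum
  have hnonneg : ∀ i y, 0 ≤ 2 * S i y ^ 2 + 2 * S i x ^ 2 - S i (y + x) ^ 2 := fun i y =>
    (sq_nonneg _).trans (sq_sub_le_two_mul_sq_add (S i) x y)
  exact lurConverges_iff.2 <| squeeze_zero (fun r => hnonneg i (xr r))
    (fun r => le_hasSum (hsum (xr r)) i fun j _ => hnonneg j (xr r)) (lurConverges_iff.1 h)

theorem LURConverges.of_smul {p : Seminorm ℝ E} {a : NNReal} (ha : a ≠ 0)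
    (h : LURConverges (a • p) xr x) : LURConverges p xr x := by
  have ha' : (a : ℝ) ≠ 0 := NNReal.coe_ne_zero.2 ha
  have h1 := h.1.const_mul (a : ℝ)⁻¹
  have h2 := h.2.const_mul (a : ℝ)⁻¹
  simp only [_root_.smul_apply, NNReal.smul_def, smul_eq_mul, mul_left_comm (2 : ℝ),
    inv_mul_cancel_left₀ ha'] at h1 h2
  exact ⟨h1, h2⟩

theorem tendsto_of_lurConverges_abs {u : ℕ → ℝ} {v : ℝ} (h : LURConverges abs u v) :
    Tendsto u atTop (𝓝 v) := by
  have hsq := lurConverges_iff.1 (show LURConverges (normSeminorm ℝ ℝ) u v from h)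
  simp only [coe_normSeminorm, Real.norm_eq_abs, sq_abs] at hsq
  rw [tendsto_iff_norm_sub_tendsto_zero]
  have hsub : Tendsto (fun r => (u r - v) ^ 2) atTop (𝓝 0) := hsq.congr fun r => by ring
  simpa [Real.sqrt_sq_eq_abs] using hsub.sqrt

end LURConverges

section L2Adjoin

variable {E ι : Type*} [NormedAddCommGroup E] [NormedSpace ℝ E] [Finite ι] {p : Seminorm ℝ E}
  {T : ι → E →L[ℝ] ℝ}

/-- The seminorm `x ↦ (p x ^ 2 + ∑ T i x ^ 2) ^ (1 / 2)`. -/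
noncomputable def l2Adjoin (p : Seminorm ℝ E) (T : ι → E →L[ℝ] ℝ) : Seminorm ℝ E :=
  l2Seminorm (fun k : Option ι => k.elim p fun i => (T i : E →ₗ[ℝ] ℝ).toSeminorm)
    fun _ => .of_finite

theorem l2Adjoin_sq {ι : Type*} [Fintype ι] (p : Seminorm ℝ E) (T : ι → E →L[ℝ] ℝ) (x : E) :
    l2Adjoin p T x ^ 2 = p x ^ 2 + ∑ i, T i x ^ 2 := by
  rw [l2Adjoin, l2Seminorm_sq, tsum_fintype, Fintype.sum_option]
  simp

theorem IsComparableToNorm.l2Adjoin (hp : IsComparableToNorm p) :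
    IsComparableToNorm (l2Adjoin p T) := by
  obtain ⟨c, C, -, -, h⟩ := id hp
  refine isComparableToNorm_l2Seminorm (b := fun k : Option ι => k.elim C fun i => ‖T i‖)
    .of_finite ?_ (i := none) hp
  rintro (_ | i) x
  · exact (h x).2
  · exact (T i).le_opNorm x

theorem IsSmoothable.l2Adjoin (hp : IsSmoothable p) (hcomp : IsComparableToNorm p) :
    IsSmoothable (l2Adjoin p T) := by
  have := Fintype.ofFinite ι
  let S := l2Seminorm (fun i => (T i : E →ₗ[ℝ] ℝ).toSeminorm) fun _ => .of_finite
  have hSsq : ∀ x, S x ^ 2 = ∑ i, T i x ^ 2 := fun x => by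
    simp [S, l2Seminorm_sq, tsum_fintype]
  have hS : ContDiff ℝ ∞ fun x => S x ^ 2 := by
    simp only [hSsq]
    fun_prop
  convert hp.sqrt_sq_add_sq hcomp hS using 2 with x
  rw [hSsq, ← l2Adjoin_sq, Real.sqrt_sq (apply_nonneg _ x)]

theorem LURConverges.of_l2Adjoin {xr : ℕ → E} {x : E} (h : LURConverges (l2Adjoin p T) xr x) :
    LURConverges p xr x ∧ ∀ i, Tendsto (fun r => T i (xr r)) atTop (𝓝 (T i x)) := by
  refine ⟨LURConverges.of_l2Seminorm h none, fun i => tendsto_of_lurConverges_abs ?_⟩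
  have hi := LURConverges.of_l2Seminorm h (some i)
  exact ⟨hi.1, by simpa using hi.2⟩

end L2Adjoin

section Renorming

variable {E : Type*} [NormedAddCommGroup E] {xr : ℕ → E} {x : E}

theorem LURConverges.exists_norm_le {p : E → ℝ} (h : LURConverges p xr x)
    (hcomp : IsComparableToNorm p) : ∃ R, ∀ r, ‖xr r‖ ≤ R := by
  obtain ⟨c, C, hc, -, hcC⟩ := hcomp
  obtain ⟨B, hB⟩ := h.1.bddAbove_range
  refine ⟨B / c, fun r => ?_⟩
  rw [le_div_iff₀' hc]
  exact (hcC _).1.trans (hB (mem_range_self r))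

theorem tendsto_comp_of_forall_abs_sub_le {p : E → ℝ} {q : ℕ → E → ℝ} {ε : ℕ → ℝ}
    (hε0 : ∀ i, 0 ≤ ε i) (hε : Tendsto ε atTop (𝓝 0)) (hpq : ∀ i x, |p x - q i x| ≤ ε i * ‖x‖)
    {R : ℝ} (hR : ∀ r, ‖xr r‖ ≤ R) {l : ℕ → ℝ} {L : ℝ}
    (hl : ∀ i, Tendsto (fun r => q i (xr r)) atTop (𝓝 (l i))) (hL : Tendsto l atTop (𝓝 L)) :
    Tendsto (fun r => p (xr r)) atTop (𝓝 L) := by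
  have hunif : TendstoUniformly (fun i r => q i (xr r)) (fun r => p (xr r)) atTop := by
    rw [Metric.tendstoUniformly_iff]
    intro δ hδ
    have hεR : Tendsto (fun i => ε i * R) atTop (𝓝 0) := by simpa using hε.mul_const R
    filter_upwards [hεR.eventually_lt_const hδ] with i hi r
    exact ((hpq i _).trans (mul_le_mul_of_nonneg_left (hR r) (hε0 i))).trans_lt hi
  exact hunif.tendsto_of_eventually_tendsto (Eventually.of_forall hl) hL

theorem LURConverges.of_forall_abs_sub_le {p : E → ℝ} {q : ℕ → E → ℝ} {ε : ℕ → ℝ}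
    (hε0 : ∀ i, 0 ≤ ε i) (hε : Tendsto ε atTop (𝓝 0)) (hpq : ∀ i x, |p x - q i x| ≤ ε i * ‖x‖)
    (hR : ∃ R, ∀ r, ‖xr r‖ ≤ R) (h : ∀ i, LURConverges (q i) xr x) : LURConverges p xr x := by
  obtain ⟨R, hR⟩ := hR
  have hq : Tendsto (fun i => q i x) atTop (𝓝 (p x)) := by
    have hεx : Tendsto (fun i => ε i * ‖x‖) atTop (𝓝 0) := by simpa using hε.mul_const ‖x‖
    refine tendsto_iff_norm_sub_tendsto_zero.2
      (squeeze_zero (fun _ => norm_nonneg _) (fun i => ?_) hεx)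
    rw [Real.norm_eq_abs, abs_sub_comm]
    exact hpq i x
  exact ⟨tendsto_comp_of_forall_abs_sub_le hε0 hε hpq hR (fun i => (h i).1) hq,
    tendsto_comp_of_forall_abs_sub_le hε0 hε hpq (R := R + ‖x‖)
      (fun r => (norm_add_le _ _).trans (add_le_add_left (hR r) _)) (fun i => (h i).2)
      (hq.const_mul 2)⟩

variable [NormedSpace ℝ E]

theorem IsSmoothable.exists_seq_contDiffOn {p : Seminorm ℝ E} (hp : IsSmoothable p)
    (hcomp : IsComparableToNorm p) : ∃ q : ℕ → Seminorm ℝ E, ∀ i : ℕ,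
      ContDiffOn ℝ ∞ (q i) {0}ᶜ ∧ IsComparableToNorm (q i) ∧
        ∀ x, |p x - q i x| ≤ 1 / ((i : ℝ) + 1) * ‖x‖ := by
  obtain ⟨c, C, hc, hC, hcC⟩ := hcomp
  choose q hqs hq using fun i : ℕ =>
    hp.exists_seminorm (lt_min (half_pos hc) (Nat.one_div_pos_of_nat (α := ℝ) (n := i)))
  refine ⟨q, fun i => ⟨hqs i, ⟨c / 2, C, half_pos hc, hC, fun x => ⟨?_, ?_⟩⟩, fun x => ?_⟩⟩
  · have := mul_le_mul_of_nonneg_right (min_le_left (c / 2) (1 / ((i : ℝ) + 1))) (norm_nonneg x)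
    linarith [(hq i x).1, (hcC x).1]
  · exact (hq i x).2.trans (hcC x).2
  · have := mul_le_mul_of_nonneg_right (min_le_right (c / 2) (1 / ((i : ℝ) + 1))) (norm_nonneg x)
    rw [abs_of_nonneg (sub_nonneg.2 (hq i x).2)]
    linarith [(hq i x).1]

theorem IsComparableToNorm.exists_nnreal_smul_le {p : Seminorm ℝ E} (hp : IsComparableToNorm p)
    {b : ℝ} (hb : 0 < b) :
    ∃ a : NNReal, a ≠ 0 ∧ IsComparableToNorm (a • p) ∧ ∀ x, (a • p) x ≤ b * ‖x‖ := by
  obtain ⟨c, C, hc, hC, h⟩ := hp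
  have ha : 0 < b / C := div_pos hb hC
  have hle : ∀ x, b / C * p x ≤ b * ‖x‖ := fun x =>
    calc b / C * p x ≤ b / C * (C * ‖x‖) := mul_le_mul_of_nonneg_left (h x).2 ha.le
      _ = b * ‖x‖ := by field_simp
  refine ⟨⟨b / C, ha.le⟩, fun h0 => ha.ne' (congrArg NNReal.toReal h0),
    ⟨b / C * c, b, mul_pos ha hc, hb, fun x => ⟨?_, hle x⟩⟩, hle⟩
  rw [mul_assoc]
  exact mul_le_mul_of_nonneg_left (h x).1 ha.le

theorem exists_smooth_renorming_lurConverges {κ : Type*} [Countable κ] [Nonempty κ]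
    {q : κ → Seminorm ℝ E} (hqs : ∀ k, ContDiffOn ℝ ∞ (q k) {0}ᶜ)
    (hq : ∀ k, IsComparableToNorm (q k)) :
    ∃ p : Seminorm ℝ E, IsComparableToNorm p ∧ IsCkSmoothNorm 1 p ∧
      IsUniformLimitOfCkSmoothNorms ∞ p ∧
      ∀ xr x, LURConverges p xr x → ∀ k, LURConverges (q k) xr x := by
  obtain ⟨e, he⟩ := exists_surjective_nat κ
  choose a ha hcomp hle using fun n : ℕ =>
    (hq (e n)).exists_nnreal_smul_le (pow_pos (one_half_pos (α := ℝ)) n)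
  have hb : Summable fun n : ℕ => ((1 / 2 : ℝ) ^ n) ^ 2 := by
    simp only [← pow_mul, mul_comm _ 2]
    simp only [pow_mul]
    exact summable_geometric_of_lt_one (by norm_num) (by norm_num)
  have hs : ∀ n, ContDiffOn ℝ ∞ (a n • q (e n)) {0}ᶜ := fun n => contDiffOn_const.mul (hqs (e n))
  have hpcomp := isComparableToNorm_l2Seminorm hb hle (hcomp 0)
  refine ⟨_, hpcomp, contDiffOn_l2Seminorm hpcomp (contDiffOn_one_tsum_seminorm_sq hb hle
      fun n => (hs n).of_le (by norm_num)),
    isUniformLimitOfCkSmoothNorms_l2Seminorm hb hle (hcomp 0) hs, fun xr x h k => ?_⟩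
  obtain ⟨n, rfl⟩ := he k
  exact (h.of_l2Seminorm n).of_smul (ha n)

theorem exists_smooth_lur_renorming {ι : Type*} [Countable ι] [Nonempty ι]
    {N : ι → Seminorm ℝ E} (hN : ∀ i, IsSmoothable (N i)) (hcomp : ∀ i, IsComparableToNorm (N i))
    (hlur : ∀ xr x, (∀ i, LURConverges (N i) xr x) → Tendsto xr atTop (𝓝 x)) :
    ∃ p : E → ℝ, IsEquivNorm p ∧ IsCkSmoothNorm 1 p ∧ IsLUR p ∧
      IsUniformLimitOfCkSmoothNorms ∞ p := by
  choose q hqs hq hNq using fun i => (hN i).exists_seq_contDiffOn (hcomp i)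
  obtain ⟨p, hp, hps, hplim, hpq⟩ := exists_smooth_renorming_lurConverges
    (q := fun k : ι × ℕ => q k.1 k.2) (fun k => hqs k.1 k.2) fun k => hq k.1 k.2
  refine ⟨p, hp.isEquivNorm, hps, fun x xr hx => ?_, hplim⟩
  have hpx : LURConverges p xr x := lurConverges_iff.2 hx
  have hlim : Tendsto xr atTop (𝓝 x) := hlur xr x fun i =>
    LURConverges.of_forall_abs_sub_le (fun n => Nat.one_div_pos_of_nat.le)
      tendsto_one_div_add_atTop_nhds_zero_nat (hNq i) (hpx.exists_norm_le hp)
      fun n => hpq xr x hpx (i, n)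
  obtain ⟨c, C, -, -, h⟩ := hp
  refine squeeze_zero (fun r => apply_nonneg p _) (fun r => (h _).2) ?_
  simpa using (tendsto_iff_norm_sub_tendsto_zero.1 hlim).const_mul C

end Renorming

/-! ### Suprema over insertions into finite sets -/

section Gap

variable {κ : Type*}

theorem sum_add_sub_le_sum_of_card_le {w : κ → ℝ} {B : Finset κ} {μ ν : ℝ} (hν : 0 ≤ ν)
    (hνμ : ν < μ) (hB : ∀ a ∈ B, μ ≤ w a) (hB' : ∀ a ∉ B, w a ≤ ν) {A : Finset κ}
    (hA : A.card ≤ B.card) (hne : A ≠ B) : ∑ a ∈ A, w a + (μ - ν) ≤ ∑ a ∈ B, w a := by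
  classical
  have hsumA := Finset.sum_inter_add_sum_sdiff A B w
  have hsumB := Finset.sum_inter_add_sum_sdiff B A w
  rw [Finset.inter_comm] at hsumB
  have hle : ∑ a ∈ A \ B, w a ≤ (A \ B).card * ν := by
    simpa using Finset.sum_le_card_nsmul (A \ B) w ν fun a ha => hB' a (Finset.mem_sdiff.1 ha).2
  have hge : (B \ A).card * μ ≤ ∑ a ∈ B \ A, w a := by
    simpa using Finset.card_nsmul_le_sum (B \ A) w μ fun a ha => hB a (Finset.mem_sdiff.1 ha).1
  have hcard : ((A \ B).card : ℝ) ≤ (B \ A).card :=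
    mod_cast (Finset.card_sdiff_le_card_sdiff_iff (s := A) (t := B)).2 hA
  have hpos : (1 : ℝ) ≤ (B \ A).card := by
    rw [Nat.one_le_cast, Finset.one_le_card, Finset.sdiff_nonempty]
    exact fun h => hne (Finset.eq_of_subset_of_card_le h hA).symm
  nlinarith

theorem exists_superset_threshold {w : κ → ℝ} (hw : ∀ r > 0, {a | r < w a}.Finite)
    {A₀ : Finset κ} (hA₀ : ∀ a ∈ A₀, 0 < w a) :
    ∃ B : Finset κ, A₀ ⊆ B ∧ ∃ μ ν : ℝ, 0 ≤ ν ∧ ν < μ ∧ (∀ a ∈ B, μ ≤ w a) ∧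
      ∀ a ∉ B, w a ≤ ν := by
  obtain ⟨μ, hμA₀, hμ⟩ : ∃ μ, (∀ a ∈ A₀, μ < w a) ∧ 0 < μ := by
    have hA₀μ : ∀ᶠ μ in 𝓝[>] (0 : ℝ), ∀ a ∈ A₀, μ < w a :=
      (Filter.eventually_all_finset A₀).2 fun a ha =>
        mem_nhdsWithin_of_mem_nhds (gt_mem_nhds (hA₀ a ha))
    exact (hA₀μ.and self_mem_nhdsWithin).exists
  have hfin := hw (μ / 2) (half_pos hμ)
  obtain ⟨ν, hνw, hν, hνμ⟩ : ∃ ν, (∀ a ∈ {a | μ / 2 < w a}, w a < μ → w a < ν) ∧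
      ν ∈ Ioo (μ / 2) μ := by
    have hνw : ∀ᶠ ν in 𝓝[<] μ, ∀ a ∈ {a | μ / 2 < w a}, w a < μ → w a < ν := by
      refine (Filter.eventually_all_finite hfin).2 fun a _ => ?_
      by_cases ha : w a < μ
      · exact mem_of_superset (mem_nhdsWithin_of_mem_nhds (lt_mem_nhds ha)) fun ν hν _ => hν
      · exact Eventually.of_forall fun ν h => absurd h ha
    exact (hνw.and (Ioo_mem_nhdsLT (half_lt_self hμ))).exists
  have hB : {a | μ ≤ w a}.Finite := hfin.subset fun a ha => (half_lt_self hμ).trans_le ha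
  refine ⟨hB.toFinset, fun a ha => hB.mem_toFinset.2 (hμA₀ a ha).le, μ, ν,
    (half_pos hμ).le.trans hν.le, hνμ, fun a ha => hB.mem_toFinset.1 ha, fun a ha => ?_⟩
  have haμ : w a < μ := not_le.1 fun h => ha (hB.mem_toFinset.2 h)
  rcases le_or_gt (w a) (μ / 2) with h | h
  · exact h.trans hν.le
  · exact (hνw a h haμ).le

theorem exists_superset_sum_gap {w : κ → ℝ} (hw : ∀ r > 0, {a | r < w a}.Finite)
    {A₀ : Finset κ} (hA₀ : ∀ a ∈ A₀, 0 < w a) :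
    ∃ B : Finset κ, A₀ ⊆ B ∧ ∃ δ > 0, ∀ A : Finset κ, A.card ≤ B.card → A ≠ B →
      ∑ a ∈ A, w a + δ ≤ ∑ a ∈ B, w a := by
  obtain ⟨B, hA₀B, μ, ν, hν, hνμ, hB, hB'⟩ := exists_superset_threshold hw hA₀
  exact ⟨B, hA₀B, μ - ν, sub_pos.2 hνμ, fun A => sum_add_sub_le_sum_of_card_le hν hνμ hB hB'⟩

end Gap

section ExposedMaximum

variable {E ι : Type*} [AddCommGroup E] [Module ℝ E]

theorem LURConverges.of_isGreatest {p : ι → Seminorm ℝ E} {P : E → ℝ} {S : Set ι}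
    (hP : ∀ y, IsGreatest ((fun i => p i y) '' S) (P y)) {xr : ℕ → E} {x : E}
    (h : LURConverges P xr x) {i₀ : ι} (hi₀ : i₀ ∈ S) {δ : ℝ} (hδ : 0 < δ)
    (hgap : ∀ i ∈ S, i ≠ i₀ → p i x + δ ≤ p i₀ x) : LURConverges (p i₀) xr x := by
  have hle : ∀ i ∈ S, ∀ y, p i y ≤ P y := fun i hi y => (hP y).2 ⟨i, hi, rfl⟩
  choose i hiS hi using fun y => (hP y).1
  have hPx : P x = p i₀ x := by
    by_cases hix : i x = i₀
    · rw [← hi x, hix]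
    · linarith [hgap (i x) (hiS x) hix, hle i₀ hi₀ x, hi x]
  have hlim : Tendsto (fun r => P (xr r + x) - P (xr r)) atTop (𝓝 (p i₀ x)) := by
    have := h.2.sub h.1
    rwa [hPx, two_mul, add_sub_cancel_right] at this
  have hev : ∀ᶠ r in atTop, i (xr r + x) = i₀ := by
    filter_upwards [hlim.eventually_const_lt (sub_lt_self _ hδ)] with r hr
    by_contra hne
    linarith [hi (xr r + x), map_add_le_add (p (i (xr r + x))) (xr r) x,
      hle _ (hiS (xr r + x)) (xr r), hgap _ (hiS (xr r + x)) hne]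
  have hsum : Tendsto (fun r => p i₀ (xr r + x)) atTop (𝓝 (2 * p i₀ x)) := by
    rw [← hPx]
    refine h.2.congr' ?_
    filter_upwards [hev] with r hr
    rw [← hi (xr r + x), hr]
  refine ⟨?_, hsum⟩
  have hlow : Tendsto (fun r => p i₀ (xr r + x) - p i₀ x) atTop (𝓝 (p i₀ x)) := by
    have := hsum.sub_const (p i₀ x)
    rwa [two_mul, add_sub_cancel_right] at this
  exact tendsto_of_tendsto_of_tendsto_of_le_of_le hlow (hPx ▸ h.1)
    (fun r => sub_le_iff_le_add.2 (map_add_le_add (p i₀) _ _)) (fun r => hle i₀ hi₀ _)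

end ExposedMaximum

theorem signType_mul_le_abs (σ : SignType) (u : ℝ) : σ * u ≤ |u| := by
  cases σ <;> simp [neg_le_abs, le_abs_self]

section InsertSup

variable {E κ : Type*} [NormedAddCommGroup E] [NormedSpace ℝ E]

/-- A bounded family of functionals whose values at each point vanish at infinity over the discrete
index set, i.e. a bounded operator `E → c₀(κ)`. -/
structure IsNullFamily (T : κ → E →L[ℝ] ℝ) : Prop where
  exists_abs_le : ∃ L, 0 ≤ L ∧ ∀ a x, |T a x| ≤ L * ‖x‖
  finite : ∀ x, ∀ r > 0, {a | r < |T a x|}.Finite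

theorem IsNullFamily.const_smul {T : κ → E →L[ℝ] ℝ} (hT : IsNullFamily T) (c : ℝ) :
    IsNullFamily fun a => c • T a := by
  obtain ⟨L, hL, hTL⟩ := hT.exists_abs_le
  refine ⟨⟨|c| * L, by positivity, fun a x => ?_⟩, fun x r hr => ?_⟩
  · rw [_root_.smul_apply, smul_eq_mul, abs_mul, mul_assoc]
    exact mul_le_mul_of_nonneg_left (hTL a x) (abs_nonneg c)
  · refine (hT.finite x (r / (|c| + 1)) (by positivity)).subset fun a ha => ?_
    rw [mem_ofPred_eq, _root_.smul_apply, smul_eq_mul, abs_mul] at ha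
    rw [mem_ofPred_eq, div_lt_iff₀ (by positivity)]
    linarith [abs_nonneg (T a x)]

theorem IsNullFamily.exists_forall_le {T : κ → E →L[ℝ] ℝ} (hT : IsNullFamily T) (x : E)
    {g : Option κ → ℝ} (hg : ∀ a, g (some a) ≤ g none + |T a x|) :
    ∃ i, (∀ k, g k ≤ g i) ∧ ∀ a ∈ i, T a x ≠ 0 := by
  by_cases hnone : ∀ a, g (some a) ≤ g none
  · exact ⟨none, Option.forall.2 ⟨le_rfl, hnone⟩, by simp⟩
  push Not at hnone
  obtain ⟨a, ha⟩ := hnone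
  have hfin : {b | g (some a) ≤ g (some b)}.Finite := by
    refine (hT.finite x ((g (some a) - g none) / 2) (by linarith)).subset fun b hb => ?_
    have hb' : g (some a) ≤ g (some b) := hb
    change (g (some a) - g none) / 2 < |T b x|
    linarith [hg b]
  obtain ⟨b, hab, hmax⟩ := exists_max_image _ (fun b => g (some b)) hfin ⟨a, le_refl (g (some a))⟩
  have hgb : g none < g (some b) := ha.trans_le hab
  refine ⟨some b, Option.forall.2 ⟨hgb.le, fun c => ?_⟩, ?_⟩
  · rcases le_total (g (some a)) (g (some c)) with hc | hc
    · exact hmax c hc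
    · exact hc.trans hab
  · rintro _ ⟨⟩ hb0
    have := hg b
    rw [hb0, abs_zero, add_zero] at this
    exact this.not_gt hgb

variable [DecidableEq κ]

/-- A family of smoothable equivalent norms indexed by finite sets, in which inserting `a` raises
the norm of `x` by at most `|T a x|`. -/
structure IsInsertionFamily (T : κ → E →L[ℝ] ℝ) (H : Finset κ → Seminorm ℝ E) : Prop where
  isSmoothable : ∀ A, IsSmoothable (H A)
  isComparableToNorm : ∀ A, IsComparableToNorm (H A)
  insert_le : ∀ a A x, H (insert a A) x ≤ H A x + |T a x|

/-- The supremum of a family of seminorms over the insertions of at most one element; its `j`-th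
iterate is the supremum over insertions of at most `j` elements. -/
noncomputable def insertSup (H : Finset κ → Seminorm ℝ E) (A : Finset κ) : Seminorm ℝ E :=
  ⨆ i : Option κ, H (A ∪ i.toFinset)

namespace IsInsertionFamily

variable {T : κ → E →L[ℝ] ℝ} {H : Finset κ → Seminorm ℝ E}

theorem exists_forall_le (hH : IsInsertionFamily T H) (hT : IsNullFamily T) (A : Finset κ)
    (x : E) : ∃ i : Option κ, (∀ k : Option κ, H (A ∪ k.toFinset) x ≤ H (A ∪ i.toFinset) x) ∧
      ∀ a ∈ i, T a x ≠ 0 :=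
  hT.exists_forall_le x (g := fun i => H (A ∪ i.toFinset) x) fun a => by
    simpa [Finset.union_singleton] using hH.insert_le a A x

theorem insertSup_apply (hH : IsInsertionFamily T H) (hT : IsNullFamily T) (A : Finset κ)
    (x : E) : insertSup H A x = ⨆ i : Option κ, H (A ∪ i.toFinset) x := by
  refine Seminorm.iSup_apply (Seminorm.bddAbove_range_iff.2 fun y => ?_)
  obtain ⟨i, hi, -⟩ := hH.exists_forall_le hT A y
  exact ⟨_, forall_mem_range.2 hi⟩

theorem le_insertSup (hH : IsInsertionFamily T H) (hT : IsNullFamily T) (A : Finset κ) (x : E)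
    (i : Option κ) : H (A ∪ i.toFinset) x ≤ insertSup H A x := by
  rw [hH.insertSup_apply hT]
  obtain ⟨k, hk, -⟩ := hH.exists_forall_le hT A x
  exact le_ciSup (f := fun i : Option κ => H (A ∪ i.toFinset) x) ⟨_, forall_mem_range.2 hk⟩ i

theorem exists_eq_insertSup (hH : IsInsertionFamily T H) (hT : IsNullFamily T) (A : Finset κ)
    (x : E) : ∃ i : Option κ, H (A ∪ i.toFinset) x = insertSup H A x ∧ ∀ a ∈ i, T a x ≠ 0 := by
  obtain ⟨i, hi, hi0⟩ := hH.exists_forall_le hT A x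
  refine ⟨i, (hH.le_insertSup hT A x i).antisymm ?_, hi0⟩
  rw [hH.insertSup_apply hT]
  exact ciSup_le hi

theorem insertSup_insert_le (hH : IsInsertionFamily T H) (hT : IsNullFamily T) (a : κ)
    (A : Finset κ) (x : E) : insertSup H (insert a A) x ≤ insertSup H A x + |T a x| := by
  obtain ⟨i, hi, -⟩ := hH.exists_eq_insertSup hT (insert a A) x
  rw [← hi, Finset.insert_union]
  exact (hH.insert_le a _ x).trans (add_le_add_left (hH.le_insertSup hT A x i) _)

theorem isComparableToNorm_insertSup (hH : IsInsertionFamily T H) (hT : IsNullFamily T)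
    (A : Finset κ) : IsComparableToNorm (insertSup H A) := by
  obtain ⟨c, C, hc, hC, hcC⟩ := hH.isComparableToNorm A
  obtain ⟨L, hL, hTL⟩ := hT.exists_abs_le
  refine ⟨c, C + L, hc, by positivity, fun x => ⟨?_, ?_⟩⟩
  · simpa using (hcC x).1.trans (by simpa using hH.le_insertSup hT A x none)
  · obtain ⟨i, hi, -⟩ := hH.exists_eq_insertSup hT A x
    rw [← hi, add_mul]
    cases i with
    | none =>
      simpa using (hcC x).2.trans (le_add_of_nonneg_right (mul_nonneg hL (norm_nonneg x)))
    | some a =>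
      rw [Option.toFinset_some, Finset.union_singleton]
      exact (hH.insert_le a A x).trans (add_le_add (hcC x).2 (hTL a x))

theorem isSmoothable_insertSup [CompleteSpace E] (hH : IsInsertionFamily T H)
    (hT : IsNullFamily T) (A : Finset κ) : IsSmoothable (insertSup H A) := by
  obtain ⟨L, hL, hTL⟩ := hT.exists_abs_le
  refine IsSmoothable.of_forall_exists_eq (ι := Option (κ × SignType))
    (p := fun i => H (A ∪ (i.map Prod.fst).toFinset)) (fun i => hH.isSmoothable _)
    (hH.isComparableToNorm_insertSup hT A) (fun i x => hH.le_insertSup hT A x _) (fun x => ?_)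
    (T := fun i => i.elim 0 fun aσ => (aσ.2 : ℝ) • T aσ.1) hL ?_ (fun x r hr => ?_) {none} ?_
  · obtain ⟨i, hi, -⟩ := hH.exists_eq_insertSup hT A x
    refine ⟨i.map fun a => (a, 1), ?_⟩
    rw [Option.map_map]
    simpa [Function.comp_def] using hi
  · rintro (_ | ⟨a, σ⟩) x
    · simpa using mul_nonneg hL (norm_nonneg x)
    · exact (signType_mul_le_abs σ (T a x)).trans (hTL a x)
  · refine (((hT.finite x r hr).prod (finite_univ (α := SignType))).image some).subset ?_
    rintro (_ | ⟨a, σ⟩) hi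
    · exact absurd hi (by simpa using hr.le)
    · exact ⟨(a, σ), ⟨lt_of_lt_of_le hi (signType_mul_le_abs σ (T a x)), trivial⟩, rfl⟩
  · intro x _
    obtain ⟨i, hi, hi0⟩ := hH.exists_eq_insertSup hT A x
    cases i with
    | none => exact ⟨none, hi, Or.inl (by simp)⟩
    | some a =>
      refine ⟨some (a, SignType.sign (T a x)), hi, Or.inr ?_⟩
      simpa [sign_mul_self] using hi0 a rfl

protected theorem insertSup [CompleteSpace E] (hH : IsInsertionFamily T H)
    (hT : IsNullFamily T) : IsInsertionFamily T (insertSup H) :=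
  ⟨hH.isSmoothable_insertSup hT, hH.isComparableToNorm_insertSup hT, hH.insertSup_insert_le hT⟩

theorem iterate_insertSup [CompleteSpace E] (hH : IsInsertionFamily T H) (hT : IsNullFamily T)
    (j : ℕ) : IsInsertionFamily T (insertSup^[j] H) :=
  Function.Iterate.rec (IsInsertionFamily T) hH (fun _ h => h.insertSup hT) j

theorem isGreatest_iterate_insertSup [CompleteSpace E] (hH : IsInsertionFamily T H)
    (hT : IsNullFamily T) (j : ℕ) (A : Finset κ) (x : E) :
    IsGreatest ((fun B => H (A ∪ B) x) '' {B | B.card ≤ j}) (insertSup^[j] H A x) := by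
  induction j generalizing A with
  | zero => simp
  | succ j ih =>
    have hj := hH.iterate_insertSup hT j
    rw [Function.iterate_succ_apply']
    constructor
    · obtain ⟨i, hi, -⟩ := hj.exists_eq_insertSup hT A x
      obtain ⟨B, hB, hBi⟩ := (ih (A ∪ i.toFinset)).1
      refine ⟨i.toFinset ∪ B, ?_, ?_⟩
      · have hcard : i.toFinset.card ≤ 1 := by cases i <;> simp
        have hB' : B.card ≤ j := hB
        have := Finset.card_union_le i.toFinset B
        change (i.toFinset ∪ B).card ≤ j + 1
        lia
      · rw [← hi, ← hBi]
        simp only [Finset.union_assoc]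
    · rintro _ ⟨B, hB, rfl⟩
      obtain ⟨i, B', hB', rfl⟩ : ∃ (i : Option κ) (B' : Finset κ), B'.card ≤ j ∧
          B = i.toFinset ∪ B' := by
        rcases B.eq_empty_or_nonempty with rfl | ⟨b, hb⟩
        · exact ⟨none, ∅, by simp⟩
        · refine ⟨some b, B.erase b, ?_, ?_⟩
          · rw [Finset.card_erase_of_mem hb]
            exact Nat.sub_le_of_le_add hB
          · rw [Option.toFinset_some, Finset.singleton_union, Finset.insert_erase hb]
      refine le_trans ?_ (hj.le_insertSup hT A x i)
      exact (ih (A ∪ i.toFinset)).2 ⟨B', hB', by simp only [Finset.union_assoc]⟩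

end IsInsertionFamily

end InsertSup

open scoped NNReal

/-! ### Cells and successor jumps -/

section Cells

variable {K : Type*} [LinearOrder K] {A B : Finset K} {s t : K}

/-- The members of the finite set `A` strictly below `t`. The fibres of `cutsBelow A` are the cells
of the partition of `K` into intervals obtained by cutting just after each point of `A`. -/
def cutsBelow (A : Finset K) (t : K) : Finset K := A.filter (· < t)

theorem cutsBelow_eq_iff : cutsBelow A s = cutsBelow A t ↔ ∀ a ∈ A, a < s ↔ a < t :=
  Finset.filter_inj'

theorem cutsBelow_eq_of_subset (hAB : A ⊆ B) (h : cutsBelow B s = cutsBelow B t) :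
    cutsBelow A s = cutsBelow A t :=
  cutsBelow_eq_iff.2 fun a ha => cutsBelow_eq_iff.1 h a (hAB ha)

variable [SuccOrder K]

theorem cutsBelow_succ {a : K} (ha : a ∉ A) : cutsBelow A (Order.succ a) = cutsBelow A a := by
  refine cutsBelow_eq_iff.2 fun b hb => ⟨fun h => ?_, fun h => h.trans_le (Order.le_succ a)⟩
  exact (Order.le_of_lt_succ h).lt_of_ne fun hba => ha (hba ▸ hb)

theorem exists_cutsBelow_eq [OrderBot K] (B : Finset K) (t : K) :
    ∃ ρ, cutsBelow B t = cutsBelow B ρ ∧ (ρ = ⊥ ∨ ∃ b ∈ B, b < t ∧ ρ = Order.succ b) := by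
  rcases (cutsBelow B t).eq_empty_or_nonempty with h | h
  · refine ⟨⊥, h.trans (Finset.filter_false_of_mem fun _ _ => not_lt_bot).symm, Or.inl rfl⟩
  · obtain ⟨b, hb, hmax⟩ := Finset.exists_max_image _ id h
    obtain ⟨hbB, hbt⟩ := Finset.mem_filter.1 hb
    refine ⟨Order.succ b, cutsBelow_eq_iff.2 fun a ha => ?_, Or.inr ⟨b, hbB, hbt, rfl⟩⟩
    rw [Order.lt_succ_iff_of_not_isMax hbt.not_isMax]
    exact ⟨fun hat => hmax a (Finset.mem_filter.2 ⟨ha, hat⟩), fun hab => hab.trans_lt hbt⟩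

variable [TopologicalSpace K] [OrderTopology K]

theorem isOpen_Iic_of_succOrder (t : K) : IsOpen (Iic t) := by
  by_cases ht : IsMax t
  · rw [show Iic t = univ from IsTop.Iic_eq ht.isTop]
    exact isOpen_univ
  · rw [← Order.Iio_succ_of_not_isMax ht]
    exact isOpen_Iio

theorem isLocallyConstant_of_cutsBelow_eq {X : Type*} {A : Finset K} {g : K → X}
    (hg : ∀ s t, cutsBelow A s = cutsBelow A t → g s = g t) : IsLocallyConstant g := by
  refine (IsLocallyConstant.iff_eventually_eq g).2 fun t => ?_
  suffices h : ∀ᶠ s in 𝓝 t, ∀ a ∈ A, a < s ↔ a < t from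
    h.mono fun s hs => hg s t (cutsBelow_eq_iff.2 hs)
  refine (Filter.eventually_all_finset A).2 fun a _ => ?_
  rcases lt_or_ge a t with hat | hat
  · exact (lt_mem_nhds hat).mono fun s hs => iff_of_true hs hat
  · filter_upwards [(isOpen_Iic_of_succOrder a).mem_nhds hat] with s hs
    exact iff_of_false (not_lt.2 hs) hat.not_gt

theorem isClosed_setOf_cutsBelow_eq (A : Finset K) :
    IsClosed {q : K × K | cutsBelow A q.1 = cutsBelow A q.2} := by
  have hA : IsLocallyConstant (cutsBelow A) := isLocallyConstant_of_cutsBelow_eq fun _ _ => id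
  have h := (hA.comp_continuous continuous_fst).prodMk
    (hA.comp_continuous (continuous_snd (X := K)))
  exact isOpen_compl_iff.1 (h {q | q.1 = q.2}ᶜ)

end Cells

section SuccJump

variable {K : Type*} [LinearOrder K] [SuccOrder K] [TopologicalSpace K]

/-- The functional `f ↦ f (succ a) - f a`. -/
noncomputable def succJump (a : K) : C(K, ℝ) →L[ℝ] ℝ :=
  ContinuousMap.evalCLM ℝ (Order.succ a) - ContinuousMap.evalCLM ℝ a

theorem succJump_apply (a : K) (f : C(K, ℝ)) : succJump a f = f (Order.succ a) - f a := rfl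

theorem abs_succJump_le [CompactSpace K] (a : K) (f : C(K, ℝ)) : |succJump a f| ≤ 2 * ‖f‖ :=
  f.dist_le_two_norm (Order.succ a) a

variable [OrderTopology K] [WellFoundedLT K]

theorem exists_forall_mem_Ioc_abs_sub_lt (f : C(K, ℝ)) (t : K) {ε : ℝ} (hε : 0 < ε) :
    (∀ u ≤ t, |f u - f t| < ε) ∨
      ∃ l < t, succJump l f ≠ 0 ∧ ∀ u ∈ Ioc l t, |f u - f t| < ε := by
  obtain ⟨s₀, ⟨hs₀t, hs₀⟩, hmin⟩ := WellFounded.has_min (wellFounded_lt (α := K))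
    {s | s ≤ t ∧ ∀ u ∈ Icc s t, |f u - f t| < ε}
    ⟨t, le_refl t, fun u hu => by rwa [hu.2.antisymm hu.1, sub_self, abs_zero]⟩
  by_cases hbot : IsMin s₀
  · exact Or.inl fun u hu => hs₀ u ⟨hbot.isBot u, hu⟩
  have hnhds : {u | |f u - f t| < ε} ∈ 𝓝 s₀ :=
    (isOpen_lt (by fun_prop) continuous_const).mem_nhds (hs₀ s₀ ⟨le_rfl, hs₀t⟩)
  obtain ⟨l, hl, hls₀⟩ := exists_Ioc_subset_of_mem_nhds hnhds (not_isMin_iff.1 hbot)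
  have hlt : l < t := hl.trans_le hs₀t
  have hIoc : ∀ u ∈ Ioc l t, |f u - f t| < ε := fun u hu => by
    rcases le_total u s₀ with hu₀ | hu₀
    · exact hls₀ ⟨hu.1, hu₀⟩
    · exact hs₀ u ⟨hu₀, hu.2⟩
  refine Or.inr ⟨l, hlt, fun hjump => hmin l ⟨hlt.le, fun u hu => ?_⟩ hl, hIoc⟩
  rcases hu.1.eq_or_lt with rfl | hlu
  · rw [succJump_apply, sub_eq_zero] at hjump
    rw [← hjump]
    exact hIoc _ ⟨Order.lt_succ_of_not_isMax hlt.not_isMax, Order.succ_le_of_lt hlt⟩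
  · exact hIoc u ⟨hlu, hu.2⟩

theorem exists_cutsBelow_eq_imp_abs_sub_le_of_le (f : C(K, ℝ)) {ε : ℝ} (hε : 0 < ε) (t : K) :
    ∃ A : Finset K, (∀ a ∈ A, succJump a f ≠ 0) ∧
      ∀ s ≤ t, ∀ s' ≤ t, cutsBelow A s = cutsBelow A s' → |f s - f s'| ≤ ε := by
  induction t using WellFoundedLT.induction with
  | ind t ih =>
    have hclose : ∀ s s', |f s - f t| < ε / 2 → |f s' - f t| < ε / 2 → |f s - f s'| ≤ ε :=
      fun s s' h h' => by
        have := abs_sub_le (f s) (f t) (f s')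
        rw [abs_sub_comm (f t)] at this
        linarith
    rcases exists_forall_mem_Ioc_abs_sub_lt f t (half_pos hε) with h | ⟨l, hlt, hjump, hl⟩
    · exact ⟨∅, by simp, fun s hs s' hs' _ => hclose s s' (h s hs) (h s' hs')⟩
    obtain ⟨A, hA, hosc⟩ := ih l hlt
    refine ⟨insert l A, (Finset.forall_mem_insert ..).2 ⟨hjump, hA⟩, fun s hs s' hs' heq => ?_⟩
    have hls : l < s ↔ l < s' := cutsBelow_eq_iff.1 heq l (Finset.mem_insert_self l A)
    rcases lt_or_ge l s with h | h
    · exact hclose s s' (hl s ⟨h, hs⟩) (hl s' ⟨hls.1 h, hs'⟩)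
    · exact hosc s h s' (not_lt.1 fun h' => h.not_gt (hls.2 h'))
        (cutsBelow_eq_of_subset (Finset.subset_insert l A) heq)

theorem exists_cutsBelow_eq_imp_abs_sub_le [OrderTop K] (f : C(K, ℝ)) {ε : ℝ} (hε : 0 < ε) :
    ∃ A : Finset K, (∀ a ∈ A, succJump a f ≠ 0) ∧
      ∀ s s', cutsBelow A s = cutsBelow A s' → |f s - f s'| ≤ ε := by
  obtain ⟨A, hA, h⟩ := exists_cutsBelow_eq_imp_abs_sub_le_of_le f hε ⊤
  exact ⟨A, hA, fun s s' => h s le_top s' le_top⟩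

theorem isNullFamily_succJump [OrderTop K] [CompactSpace K] :
    IsNullFamily (succJump : K → C(K, ℝ) →L[ℝ] ℝ) := by
  refine ⟨⟨2, two_pos.le, abs_succJump_le⟩, fun f r hr => ?_⟩
  obtain ⟨A, -, hA⟩ := exists_cutsBelow_eq_imp_abs_sub_le f hr
  refine A.finite_toSet.subset fun a (ha : r < |succJump a f|) => ?_
  by_contra haA
  exact ha.not_ge (hA _ _ (cutsBelow_succ haA))

end SuccJump

/-! ### Oscillations over cells -/

section CellOsc

variable {K : Type*} [LinearOrder K] [TopologicalSpace K]

/-- The minimum of `f` over the cell of `t`. -/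
noncomputable def cellInf (A : Finset K) (t : K) (f : C(K, ℝ)) : ℝ :=
  sInf (f '' {s | cutsBelow A s = cutsBelow A t})

/-- The largest oscillation of a function over the cells of `A`. -/
noncomputable def cellOsc (A : Finset K) : Seminorm ℝ C(K, ℝ) :=
  ⨆ q : {q : K × K // cutsBelow A q.1 = cutsBelow A q.2},
    (ContinuousMap.evalCLM ℝ q.1.1 - ContinuousMap.evalCLM ℝ q.1.2 :
      C(K, ℝ) →L[ℝ] ℝ).toLinearMap.toSeminorm

variable [CompactSpace K]

/-- An equivalent norm on `C(K, ℝ)` recording the oscillation over the cells of `A`. With the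
multiple `4` all the summands `4 * ‖f‖ - cellInf A t f` dominate a multiple of `‖f‖`. -/
noncomputable def cellNorm (A : Finset K) : Seminorm ℝ C(K, ℝ) :=
  (4 : ℝ≥0) • normSeminorm ℝ C(K, ℝ) + cellOsc A

theorem cellNorm_apply (A : Finset K) (f : C(K, ℝ)) : cellNorm A f = 4 * ‖f‖ + cellOsc A f := rfl

variable [SuccOrder K] [OrderTopology K]

theorem isLeast_cellInf (A : Finset K) (t : K) (f : C(K, ℝ)) :
    IsLeast (f '' {s | cutsBelow A s = cutsBelow A t}) (cellInf A t f) := by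
  have hclosed : IsClosed {s | cutsBelow A s = cutsBelow A t} :=
    (isClosed_setOf_cutsBelow_eq A).preimage (by fun_prop : Continuous fun s => (s, t))
  exact (hclosed.isCompact.image f.continuous).isLeast_sInf ⟨f t, t, rfl, rfl⟩

theorem isGreatest_cellOsc [Nonempty K] (A : Finset K) (f : C(K, ℝ)) :
    IsGreatest ((fun q : K × K => f q.1 - f q.2) '' {q | cutsBelow A q.1 = cutsBelow A q.2})
      (cellOsc A f) := by
  have hmax : ∀ g : C(K, ℝ), ∃ q : {q : K × K // cutsBelow A q.1 = cutsBelow A q.2},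
      ∀ q' : {q : K × K // cutsBelow A q.1 = cutsBelow A q.2},
        |g q'.1.1 - g q'.1.2| ≤ g q.1.1 - g q.1.2 := fun g => by
    obtain ⟨q, hq, hqmax⟩ := (isClosed_setOf_cutsBelow_eq A).isCompact.exists_isMaxOn
      ⟨(Classical.arbitrary K, Classical.arbitrary K), rfl⟩
      (by fun_prop : Continuous fun q : K × K => g q.1 - g q.2).continuousOn
    exact ⟨⟨q, hq⟩, fun q' => abs_le'.2 ⟨hqmax q'.2,
      (neg_sub _ _).trans_le (hqmax (a := (q'.1.2, q'.1.1)) q'.2.symm)⟩⟩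
  have hsup : cellOsc A f = ⨆ q : {q : K × K // cutsBelow A q.1 = cutsBelow A q.2},
      |f q.1.1 - f q.1.2| :=
    Seminorm.iSup_apply (Seminorm.bddAbove_range_iff.2 fun g =>
      (hmax g).elim fun q hq => ⟨_, forall_mem_range.2 hq⟩)
  obtain ⟨q, hq⟩ := hmax f
  have : Nonempty {q : K × K // cutsBelow A q.1 = cutsBelow A q.2} := ⟨q⟩
  rw [hsup, (ciSup_le hq).antisymm ((le_abs_self _).trans (le_ciSup ⟨_, forall_mem_range.2 hq⟩ q))]
  exact ⟨⟨q, q.2, rfl⟩, by rintro _ ⟨q', hq', rfl⟩; exact (le_abs_self _).trans (hq ⟨q', hq'⟩)⟩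

variable [Nonempty K]

theorem sub_le_cellOsc {A : Finset K} {s t : K} (h : cutsBelow A s = cutsBelow A t)
    (f : C(K, ℝ)) : f s - f t ≤ cellOsc A f :=
  (isGreatest_cellOsc A f).2 ⟨(s, t), h, rfl⟩

theorem cellOsc_le (A : Finset K) (f : C(K, ℝ)) : cellOsc A f ≤ 2 * ‖f‖ := by
  obtain ⟨q, -, hq⟩ := (isGreatest_cellOsc A f).1
  rw [← hq]
  exact (le_abs_self _).trans (f.dist_le_two_norm q.1 q.2)

theorem cellOsc_antitone {A B : Finset K} (hAB : A ⊆ B) (f : C(K, ℝ)) :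
    cellOsc B f ≤ cellOsc A f := by
  obtain ⟨q, hq, hqf⟩ := (isGreatest_cellOsc B f).1
  rw [← hqf]
  exact sub_le_cellOsc (cutsBelow_eq_of_subset hAB hq) f

theorem isComparableToNorm_cellNorm (A : Finset K) : IsComparableToNorm (cellNorm A) := by
  refine ⟨4, 6, by norm_num, by norm_num, fun f => ?_⟩
  rw [cellNorm_apply]
  constructor <;> linarith [cellOsc_le A f, apply_nonneg (cellOsc A) f]

end CellOsc

/-! ### Smoothability of maxima over cells -/

section CellSmoothable

variable {K : Type*} [LinearOrder K] [SuccOrder K] [OrderTop K] [TopologicalSpace K]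
  [OrderTopology K] [CompactSpace K]

/-- If the largest maximiser `t` is not in `insert ⊤ A`, then `succ t` lies in the cell of `t`, so
only `g` can drop from `t` to `succ t`. -/
theorem exists_eq_and_succ_lt {A : Finset K} {S : Set K}
    (hS : ∀ s t, cutsBelow A s = cutsBelow A t → s ∈ S → t ∈ S) {v g : K → ℝ}
    (hv : ∀ s t, cutsBelow A s = cutsBelow A t → v s = v t) (hg : Continuous g) {M : ℝ}
    (hM : IsGreatest ((fun t => g t + v t) '' S) M) :
    ∃ t ∈ S, g t + v t = M ∧ (t ∈ insert ⊤ A ∨ g (Order.succ t) < g t) := by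
  have hSclosed : IsClosed S := by
    have h := isLocallyConstant_of_cutsBelow_eq (g := (· ∈ S)) fun s t h =>
      propext ⟨hS s t h, hS t s h.symm⟩
    simpa only [eq_iff_iff, iff_true, ofPred_mem_eq] using h.isClosed_fiber True
  have hcont : Continuous fun t => g t + v t :=
    hg.add (isLocallyConstant_of_cutsBelow_eq hv).continuous
  obtain ⟨t₀, ht₀S, ht₀⟩ := hM.1
  obtain ⟨t, ⟨htS, htM⟩, hmax⟩ := (hSclosed.inter
    (isClosed_eq hcont continuous_const)).isCompact.exists_isGreatest ⟨t₀, ht₀S, ht₀⟩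
  refine ⟨t, htS, htM, or_iff_not_imp_left.2 fun ht => ?_⟩
  rw [Finset.mem_insert, not_or] at ht
  have hsucc := cutsBelow_succ ht.2
  have hsuccS := hS _ _ hsucc.symm htS
  have hlt : t < Order.succ t := Order.lt_succ_of_not_isMax (mt isMax_iff_eq_top.1 ht.1)
  have hne : g (Order.succ t) + v (Order.succ t) ≠ M := fun h => (hmax ⟨hsuccS, h⟩).not_gt hlt
  have h : g (Order.succ t) + v (Order.succ t) < M := (hM.2 ⟨_, hsuccS, rfl⟩).lt_of_ne hne
  rw [← htM, hv _ _ hsucc] at h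
  exact lt_of_add_lt_add_right h

variable [WellFoundedLT K]

theorem IsSmoothable.of_isGreatest_eval {A : Finset K} {S : Set (K × SignType)}
    (hS : ∀ s t σ, cutsBelow A s = cutsBelow A t → (s, σ) ∈ S → (t, σ) ∈ S)
    {u : K → C(K, ℝ) → ℝ} (hu : ∀ t, IsSmoothable (u t))
    (huA : ∀ s t, cutsBelow A s = cutsBelow A t → u s = u t) {P : C(K, ℝ) → ℝ}
    (hcomp : IsComparableToNorm P)
    (hP : ∀ f, IsGreatest ((fun i : K × SignType => i.2 * f i.1 + u i.1 f) '' S) (P f)) :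
    IsSmoothable P := by
  classical
  have hT : ∀ (t : K) (σ : SignType) (f : C(K, ℝ)),
      (-(σ : ℝ) • succJump t) f ≤ |succJump t f| := fun t σ f => by
    simpa using signType_mul_le_abs (-σ) (succJump t f)
  refine IsSmoothable.of_forall_exists_eq (ι := S)
    (p := fun i f => (i.1.2 : ℝ) * f i.1.1 + u i.1.1 f) (fun i => ?_) hcomp
    (fun i f => (hP f).2 ⟨i, i.2, rfl⟩) (fun f => ?_)
    (T := fun i => -(i.1.2 : ℝ) • succJump i.1.1) two_pos.le
    (fun i f => (hT _ _ f).trans (abs_succJump_le _ f)) (fun f r hr => ?_)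
    ((insert ⊤ A ×ˢ Finset.univ).subtype (· ∈ S)) (fun f _ => ?_)
  · exact (of_continuousLinearMap ((i.1.2 : ℝ) • ContinuousMap.evalCLM ℝ i.1.1)).add (hu i.1.1)
  · obtain ⟨i, hi, hiP⟩ := (hP f).1
    exact ⟨⟨i, hi⟩, hiP⟩
  · have hfin := (isNullFamily_succJump.finite f r hr).prod (finite_univ (α := SignType))
    exact (hfin.preimage Subtype.val_injective.injOn).subset
      fun i hi => ⟨lt_of_lt_of_le hi (hT _ _ f), trivial⟩
  · obtain ⟨⟨t₀, σ⟩, ht₀S, ht₀⟩ := (hP f).1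
    obtain ⟨t, htS, htP, ht⟩ := exists_eq_and_succ_lt (S := {t | (t, σ) ∈ S})
      (fun s t => hS s t σ) (v := fun t => u t f) (fun s t h => congrFun (huA s t h) f)
      (g := fun t => σ * f t) (by fun_prop)
      ⟨⟨t₀, ht₀S, ht₀⟩, by rintro _ ⟨t, ht, rfl⟩; exact (hP f).2 ⟨(t, σ), ht, rfl⟩⟩
    refine ⟨⟨(t, σ), htS⟩, htP, ht.imp (fun h => ?_) fun h => ?_⟩
    · simpa using h
    · simp only [_root_.smul_apply, smul_eq_mul, succJump_apply]
      linarith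

theorem isSmoothable_norm : IsSmoothable (norm : C(K, ℝ) → ℝ) := by
  refine IsSmoothable.of_isGreatest_eval (A := ∅) (S := univ) (fun _ _ _ _ _ => trivial)
    (u := fun _ _ => 0) (fun _ => IsSmoothable.of_continuousLinearMap 0) (fun _ _ _ => rfl)
    isComparableToNorm_norm fun f => ⟨?_, ?_⟩
  · obtain ⟨t, -, ht⟩ := isCompact_univ.exists_isMaxOn ⟨(⊤ : K), mem_univ _⟩
      (f.continuous.norm.continuousOn)
    refine ⟨(t, SignType.sign (f t)), trivial, ?_⟩
    simp only [add_zero, sign_mul_self]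
    exact (f.norm_coe_le_norm t).antisymm
      ((f.norm_le (norm_nonneg _)).2 fun s => ht (mem_univ s))
  · rintro _ ⟨⟨t, σ⟩, -, rfl⟩
    simp only [add_zero]
    exact (signType_mul_le_abs σ (f t)).trans (f.norm_coe_le_norm t)

theorem isSmoothable_norm_sub_cellInf (A : Finset K) (t : K) :
    IsSmoothable fun f : C(K, ℝ) => 4 * ‖f‖ - cellInf A t f := by
  refine IsSmoothable.of_isGreatest_eval (A := A)
    (S := {i | i.2 = -1 ∧ cutsBelow A i.1 = cutsBelow A t})
    (fun s s' σ h hs => ⟨hs.1, h.symm.trans hs.2⟩) (u := fun _ f => 4 * ‖f‖)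
    (fun _ => isSmoothable_norm.const_mul four_pos) (fun _ _ _ => rfl)
    ⟨3, 5, by norm_num, by norm_num, fun f => ?_⟩ fun f => ?_
  · obtain ⟨s, -, hs⟩ := (isLeast_cellInf A t f).1
    have := abs_le.1 (f.norm_coe_le_norm s)
    simp only [← hs]
    constructor <;> linarith
  · obtain ⟨s, hst, hs⟩ := (isLeast_cellInf A t f).1
    refine ⟨⟨(s, -1), ⟨rfl, hst⟩, ?_⟩, ?_⟩
    · simp only [← hs, SignType.coe_neg_one]
      ring
    · rintro _ ⟨⟨s', σ⟩, ⟨rfl : σ = -1, hs't⟩, rfl⟩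
      have := (isLeast_cellInf A t f).2 ⟨s', hs't, rfl⟩
      simp only [SignType.coe_neg_one]
      linarith

theorem isSmoothable_cellNorm (A : Finset K) : IsSmoothable (cellNorm A) := by
  refine IsSmoothable.of_isGreatest_eval (A := A) (S := {i | i.2 = 1})
    (fun _ _ _ _ hσ => hσ) (u := fun t f => 4 * ‖f‖ - cellInf A t f)
    (fun t => isSmoothable_norm_sub_cellInf A t) (fun s t h => by simp only [cellInf, h])
    (isComparableToNorm_cellNorm A) fun f => ?_
  rw [cellNorm_apply]
  constructor
  · obtain ⟨⟨s, t⟩, hst, h⟩ := (isGreatest_cellOsc A f).1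
    refine ⟨(s, 1), rfl, ?_⟩
    have hle := (isLeast_cellInf A s f).2 ⟨t, hst.symm, rfl⟩
    obtain ⟨t', hst', ht'⟩ := (isLeast_cellInf A s f).1
    have hge := sub_le_cellOsc hst'.symm f
    simp only [SignType.coe_one]
    linarith
  · rintro _ ⟨⟨s, σ⟩, rfl : σ = 1, rfl⟩
    obtain ⟨t, hst, ht⟩ := (isLeast_cellInf A s f).1
    have := sub_le_cellOsc hst.symm f
    simp only [SignType.coe_one]
    linarith

end CellSmoothable

/-! ### The block norms -/

section BlockNorm

variable {K : Type*} [LinearOrder K] [SuccOrder K] [OrderBot K] [TopologicalSpace K]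
  [CompactSpace K]

/-- The norm `cellNorm A` with the value at `⊥` and the jumps at the points of `A`, weighted by
`m`, adjoined in the `ℓ²` sense. -/
noncomputable def blockNorm (m : ℝ) (A : Finset K) : Seminorm ℝ C(K, ℝ) :=
  l2Adjoin (cellNorm A) fun k : Option A =>
    k.elim (ContinuousMap.evalCLM ℝ ⊥) fun a => m • succJump (a : K)

theorem blockNorm_sq (m : ℝ) (A : Finset K) (f : C(K, ℝ)) : blockNorm m A f ^ 2 =
    (4 * ‖f‖ + cellOsc A f) ^ 2 + (f ⊥ ^ 2 + m ^ 2 * ∑ a ∈ A, succJump a f ^ 2) := by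
  rw [blockNorm, l2Adjoin_sq, cellNorm_apply, Fintype.sum_option, Finset.mul_sum,
    ← Finset.sum_coe_sort A]
  simp [mul_pow]

theorem LURConverges.of_blockNorm {m : ℝ} (hm : m ≠ 0) {B : Finset K} {fr : ℕ → C(K, ℝ)}
    {f : C(K, ℝ)} (h : LURConverges (blockNorm m B) fr f) :
    LURConverges (cellNorm B) fr f ∧ Tendsto (fun r => fr r ⊥) atTop (𝓝 (f ⊥)) ∧
      ∀ b ∈ B, Tendsto (fun r => succJump b (fr r)) atTop (𝓝 (succJump b f)) := by
  obtain ⟨hcell, hT⟩ := h.of_l2Adjoin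
  exact ⟨hcell, hT none, fun b hb => (tendsto_const_smul_iff₀ hm).1 (hT (some ⟨b, hb⟩))⟩

variable [OrderTopology K]

theorem blockNorm_insert_le (m : ℝ) (a : K) (A : Finset K) (f : C(K, ℝ)) :
    blockNorm m (insert a A) f ≤ blockNorm m A f + |(m • succJump a) f| := by
  by_cases ha : a ∈ A
  · rw [Finset.insert_eq_of_mem ha]
    exact le_add_of_nonneg_right (abs_nonneg _)
  have hnonneg := apply_nonneg (blockNorm m A) f
  have hosc : (4 * ‖f‖ + cellOsc (insert a A) f) ^ 2 ≤ (4 * ‖f‖ + cellOsc A f) ^ 2 := by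
    gcongr
    exact cellOsc_antitone (Finset.subset_insert a A) f
  refine (sq_le_sq₀ (apply_nonneg _ f) (by positivity)).1 ?_
  rw [add_sq, sq_abs, blockNorm_sq, blockNorm_sq, Finset.sum_insert ha, _root_.smul_apply,
    smul_eq_mul, mul_pow]
  linarith [mul_nonneg (mul_nonneg two_pos.le hnonneg) (abs_nonneg (m * succJump a f))]

theorem exists_nat_blockNorm_gap (f : C(K, ℝ)) {B : Finset K} {δ : ℝ} (hδ : 0 < δ)
    (hB : ∀ A : Finset K, A.card ≤ B.card → A ≠ B →
      ∑ a ∈ A, succJump a f ^ 2 + δ ≤ ∑ a ∈ B, succJump a f ^ 2) :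
    ∃ m : ℕ, ∃ η > 0, ∀ A : Finset K, A.card ≤ B.card → A ≠ B →
      blockNorm (m + 1) A f + η ≤ blockNorm (m + 1) B f := by
  obtain ⟨m, hm⟩ := exists_nat_gt ((36 * ‖f‖ ^ 2 + 1) / δ)
  rw [div_lt_iff₀ hδ] at hm
  set b := blockNorm (m + 1) B f with hb
  have hb0 : 0 ≤ b := apply_nonneg _ f
  refine ⟨m, 1 / (2 * b + 1), by positivity, fun A hA hne => ?_⟩
  have ha0 := apply_nonneg (blockNorm (m + 1) A) f
  have hsq : blockNorm (m + 1) A f ^ 2 + 1 ≤ b ^ 2 := by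
    have hcell : (4 * ‖f‖ + cellOsc A f) ^ 2 ≤ (4 * ‖f‖ + 2 * ‖f‖) ^ 2 := by
      gcongr
      exact cellOsc_le A f
    have hm' : (m : ℝ) * δ ≤ (m + 1) ^ 2 * δ := by
      gcongr
      nlinarith [(m.cast_nonneg : (0 : ℝ) ≤ m)]
    rw [hb, blockNorm_sq, blockNorm_sq]
    linarith [sq_nonneg (4 * ‖f‖ + cellOsc B f),
      mul_le_mul_of_nonneg_left (hB A hA hne) (sq_nonneg ((m : ℝ) + 1))]
  have hab : blockNorm (m + 1) A f ≤ b := (sq_le_sq₀ ha0 hb0).1 (by linarith)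
  rw [← le_sub_iff_add_le', div_le_iff₀ (by positivity)]
  nlinarith

theorem isInsertionFamily_blockNorm [OrderTop K] [WellFoundedLT K] (m : ℝ) :
    IsInsertionFamily (fun a : K => m • succJump a) (blockNorm m) where
  isSmoothable A := (isSmoothable_cellNorm A).l2Adjoin (isComparableToNorm_cellNorm A)
  isComparableToNorm A := (isComparableToNorm_cellNorm A).l2Adjoin
  insert_le := blockNorm_insert_le m

end BlockNorm

/-! ### Convergence in `C(K, ℝ)` -/

section Convergence

variable {K : Type*} [LinearOrder K] [SuccOrder K] [OrderBot K] [TopologicalSpace K]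

section Pointwise

variable [WellFoundedLT K] {ι : Type*} {l : Filter ι} {fr : ι → C(K, ℝ)} {f : C(K, ℝ)}

theorem tendsto_apply_of_tendsto_succJump (hbot : Tendsto (fun r => fr r ⊥) l (𝓝 (f ⊥)))
    (h : ∀ ε > 0, ∃ B : Finset K,
      (∀ᶠ r in l, ∀ s t, cutsBelow B s = cutsBelow B t →
        dist (fr r s) (f s) ≤ dist (fr r t) (f t) + ε) ∧
      ∀ b ∈ B, Tendsto (fun r => succJump b (fr r)) l (𝓝 (succJump b f))) (t : K) :
    Tendsto (fun r => fr r t) l (𝓝 (f t)) := by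
  induction t using WellFoundedLT.induction with
  | ind t ih =>
    refine Metric.tendsto_nhds.2 fun ε hε => ?_
    obtain ⟨B, hcell, hjump⟩ := h (ε / 2) (half_pos hε)
    obtain ⟨ρ, htρ, hρ⟩ := exists_cutsBelow_eq B t
    have hlim : Tendsto (fun r => fr r ρ) l (𝓝 (f ρ)) := by
      rcases hρ with rfl | ⟨b, hb, hbt, rfl⟩
      · exact hbot
      · simpa only [succJump_apply, sub_add_cancel] using (hjump b hb).add (ih b hbt)
    filter_upwards [hcell, Metric.tendsto_nhds.1 hlim (ε / 2) (half_pos hε)] with r hr hrρ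
    linarith [hr t ρ htρ]

theorem tendsto_of_tendsto_succJump [CompactSpace K]
    (hbot : Tendsto (fun r => fr r ⊥) l (𝓝 (f ⊥)))
    (h : ∀ ε > 0, ∃ B : Finset K,
      (∀ᶠ r in l, ∀ s t, cutsBelow B s = cutsBelow B t →
        dist (fr r s) (f s) ≤ dist (fr r t) (f t) + ε) ∧
      ∀ b ∈ B, Tendsto (fun r => succJump b (fr r)) l (𝓝 (succJump b f))) :
    Tendsto fr l (𝓝 f) := by
  refine Metric.tendsto_nhds.2 fun ε hε => ?_
  obtain ⟨B, hcell, -⟩ := h (ε / 2) (half_pos hε)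
  have hρ : ∀ᶠ r in l, ∀ ρ ∈ insert ⊥ (B.image Order.succ), dist (fr r ρ) (f ρ) < ε / 2 :=
    (Filter.eventually_all_finset _).2 fun ρ _ =>
      Metric.tendsto_nhds.1 (tendsto_apply_of_tendsto_succJump hbot h ρ) _ (half_pos hε)
  filter_upwards [hcell, hρ] with r hr hrρ
  refine (ContinuousMap.dist_lt_iff hε).2 fun t => ?_
  obtain ⟨ρ, htρ, hρB⟩ := exists_cutsBelow_eq B t
  have hρmem : ρ ∈ insert ⊥ (B.image Order.succ) :=
    Finset.mem_insert.2 (hρB.imp_right fun ⟨b, hb, _, hbρ⟩ => Finset.mem_image.2 ⟨b, hb, hbρ.symm⟩)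
  linarith [hr t ρ htρ, hrρ ρ hρmem]

end Pointwise

variable [OrderTopology K] [CompactSpace K]

theorem dist_apply_le_add_cellOsc {B : Finset K} {s t : K}
    (h : cutsBelow B s = cutsBelow B t) (f g : C(K, ℝ)) :
    dist (g s) (f s) ≤ dist (g t) (f t) + (cellOsc B f + cellOsc B g) := by
  rw [Real.dist_eq, Real.dist_eq]
  have := abs_le.1 (le_refl |g t - f t|)
  refine abs_le.2 ⟨?_, ?_⟩ <;>
  linarith [sub_le_cellOsc h f, sub_le_cellOsc h.symm f, sub_le_cellOsc h g,
    sub_le_cellOsc h.symm g]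

theorem eventually_dist_apply_le {B : Finset K} {fr : ℕ → C(K, ℝ)} {f : C(K, ℝ)}
    (hnorm : Tendsto (fun r => ‖fr r‖) atTop (𝓝 ‖f‖)) (hcell : LURConverges (cellNorm B) fr f)
    {ε : ℝ} (hε : cellOsc B f < ε / 2) :
    ∀ᶠ r in atTop, ∀ s t, cutsBelow B s = cutsBelow B t →
      dist (fr r s) (f s) ≤ dist (fr r t) (f t) + ε := by
  have hosc : Tendsto (fun r => cellOsc B (fr r)) atTop (𝓝 (cellOsc B f)) := by
    simpa only [cellNorm_apply, add_sub_cancel_left] using hcell.1.sub (hnorm.const_mul 4)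
  filter_upwards [hosc.eventually_lt_const hε] with r hr s t hst
  linarith [dist_apply_le_add_cellOsc hst f (fr r)]

variable [OrderTop K] [WellFoundedLT K]

theorem exists_lurConverges_blockNorm {fr : ℕ → C(K, ℝ)} {f : C(K, ℝ)}
    (h : ∀ m j : ℕ, LURConverges (insertSup^[j] (blockNorm (m + 1)) ∅) fr f) {ε : ℝ}
    (hε : 0 < ε) :
    ∃ (B : Finset K) (m : ℕ), cellOsc B f < ε ∧ LURConverges (blockNorm (m + 1) B) fr f := by
  obtain ⟨A₀, hA₀, hosc⟩ := exists_cutsBelow_eq_imp_abs_sub_le f (half_pos hε)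
  have hfin : ∀ r > 0, {a : K | r < succJump a f ^ 2}.Finite := fun r hr =>
    (isNullFamily_succJump.finite f _ (Real.sqrt_pos.2 hr)).subset fun a ha =>
      (Real.sqrt_lt_sqrt hr.le ha).trans_eq (Real.sqrt_sq_eq_abs _)
  obtain ⟨B, hA₀B, δ, hδ, hB⟩ :=
    exists_superset_sum_gap hfin fun a ha => sq_pos_of_ne_zero (hA₀ a ha)
  obtain ⟨m, η, hη, hgap⟩ := exists_nat_blockNorm_gap f hδ hB
  refine ⟨B, m, ?_, LURConverges.of_isGreatest (S := {A : Finset K | A.card ≤ B.card}) (fun g => ?_)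
    (h m B.card) (i₀ := B) (le_refl B.card) hη hgap⟩
  · obtain ⟨q, hq, hqf⟩ := (isGreatest_cellOsc B f).1
    rw [← hqf]
    linarith [le_abs_self (f q.1 - f q.2), hosc q.1 q.2 (cutsBelow_eq_of_subset hA₀B hq)]
  · simpa only [Finset.empty_union] using
      (isInsertionFamily_blockNorm ((m : ℝ) + 1)).isGreatest_iterate_insertSup
        (isNullFamily_succJump.const_smul _) B.card ∅ g

theorem tendsto_of_lurConverges_insertSup {fr : ℕ → C(K, ℝ)} {f : C(K, ℝ)}
    (hnorm : LURConverges norm fr f)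
    (h : ∀ m j : ℕ, LURConverges (insertSup^[j] (blockNorm (m + 1)) ∅) fr f) :
    Tendsto fr atTop (𝓝 f) := by
  have hparts : ∀ ε > 0, ∃ B : Finset K, cellOsc B f < ε ∧ LURConverges (cellNorm B) fr f ∧
      Tendsto (fun r => fr r ⊥) atTop (𝓝 (f ⊥)) ∧
      ∀ b ∈ B, Tendsto (fun r => succJump b (fr r)) atTop (𝓝 (succJump b f)) := fun ε hε => by
    obtain ⟨B, m, hosc, hB⟩ := exists_lurConverges_blockNorm h hε
    exact ⟨B, hosc, hB.of_blockNorm m.cast_add_one_ne_zero⟩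
  obtain ⟨-, -, -, hbot, -⟩ := hparts 1 one_pos
  refine tendsto_of_tendsto_succJump hbot fun ε hε => ?_
  obtain ⟨B, hosc, hcell, -, hjump⟩ := hparts (ε / 2) (half_pos hε)
  exact ⟨B, eventually_dist_apply_le hnorm.1 hcell hosc, hjump⟩

end Convergence

theorem renorming_of_continuous_functions_on_ordinal_interval_general {K : Type*} [LinearOrder K]
    [WellFoundedLT K] [OrderTop K] [TopologicalSpace K] [OrderTopology K] [CompactSpace K] :
    ∃ N : C(K, ℝ) → ℝ, IsEquivNorm N ∧ IsCkSmoothNorm 1 N ∧ IsLUR N ∧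
      IsUniformLimitOfCkSmoothNorms ∞ N := by
  let _ : OrderBot K := WellFoundedLT.toOrderBot K
  let _ : SuccOrder K := SuccOrder.ofLinearWellFoundedLT K
  have hfam (i : ℕ × ℕ) : IsInsertionFamily (fun a : K => ((i.1 : ℝ) + 1) • succJump a)
      (insertSup^[i.2] (blockNorm (i.1 + 1))) :=
    (isInsertionFamily_blockNorm _).iterate_insertSup (isNullFamily_succJump.const_smul _) i.2
  refine exists_smooth_lur_renorming (N := fun k : Option (ℕ × ℕ) =>
      k.elim (normSeminorm ℝ C(K, ℝ)) fun i => insertSup^[i.2] (blockNorm (i.1 + 1)) ∅)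
    (Option.forall.2 ⟨isSmoothable_norm, fun i => (hfam i).isSmoothable ∅⟩)
    (Option.forall.2 ⟨isComparableToNorm_norm, fun i => (hfam i).isComparableToNorm ∅⟩)
    fun fr f h => ?_
  exact tendsto_of_lurConverges_insertSup (h none) fun m j => h (some (m, j))

/-- **Hájek–Procházka, Corollary 3.2.** For every ordinal `α`, the Banach space `C([0, α])`
of continuous real functions on the compact ordinal interval `[0, α]`, with the supremum
norm, admits an equivalent norm which is `C¹`-smooth, LUR, and a limit, uniform on bounded
sets, of `C^∞`-smooth norms. -/
theorem renorming_of_continuous_functions_on_ordinal_interval (α : Ordinal) :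
    ∃ N : C(Set.Iic α, ℝ) → ℝ, IsEquivNorm N ∧ IsCkSmoothNorm 1 N ∧ IsLUR N ∧
      IsUniformLimitOfCkSmoothNorms ((⊤ : ℕ∞) : WithTop ℕ∞) N := by
  have : OrderTopology (Set.Iic α) := orderTopology_of_ordConnected
  exact renorming_of_continuous_functions_on_ordinal_interval_general
end

section
/- Fix 0 < η < 1 and a function φ_η : [0,∞) → [0,∞) which is convex, C^∞-smooth, strictly convex on [1−η,∞), with φ_η([0,1−η]) = {0} and φ_η(1) = 1. Define Φ_η(x) = Σ_{γ∈Γ} φ_η(|x(γ)|) and let Z_η be the Minkowski functional of C = {x ∈ ℓ∞(Γ) : Φ_η(x) < 1/2}. Then Z_η is a strongly lattice seminorm on ℓ∞(Γ) with (1−η)Z_η(x) ≤ ‖x‖∞ for all x, and on the set A_η(Γ) := {x ∈ ℓ∞(Γ) : ⌊x⌋ < (1−η)‖x‖∞} the function Z_η is strictly positive, C^∞-Fréchet smooth, and locally depends on finitely many coordinates; moreover (1−η)Z_η(x) < ‖x‖∞ for all x ∈ A_η(Γ). -/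
open Filter Topology
open scoped ENNReal

/-- `f` locally depends on finitely many coordinates at `x`: on some neighborhood of `x`,
`f` factors through the restriction to a finite set of coordinates. -/
def LFCAt {Γ : Type*} (f : lp (fun _ : Γ => ℝ) ∞ → ℝ) (x : lp (fun _ : Γ => ℝ) ∞) : Prop :=
  ∃ U ∈ 𝓝 x, ∃ M : Finset Γ, ∃ g : (M → ℝ) → ℝ, ∀ y ∈ U, f y = g fun γ => y ↑γ

/-- `f : ℓ∞(Γ) → ℝ` is strongly lattice: `f x ≤ f y` whenever `|x γ| ≤ |y γ|` for all `γ`. -/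
def StronglyLattice {Γ : Type*} (f : lp (fun _ : Γ => ℝ) ∞ → ℝ) : Prop :=
  ∀ x y : lp (fun _ : Γ => ℝ) ∞, (∀ γ : Γ, |x γ| ≤ |y γ|) → f x ≤ f y

/-- `⌊x⌋ = inf {t ≥ 0 : {γ : |x γ| > t} is finite}`. -/
noncomputable def ftop {Γ : Type*} (x : lp (fun _ : Γ => ℝ) ∞) : ℝ :=
  sInf {t : ℝ | 0 ≤ t ∧ {γ : Γ | t < |x γ|}.Finite}

/-- `Φ_η(x) = ∑_{γ ∈ Γ} φ_η(|x γ|)`, computed in `[0, ∞]`. -/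
noncomputable def PhiSum {Γ : Type*} (φ : ℝ → ℝ) (x : lp (fun _ : Γ => ℝ) ∞) : ℝ≥0∞ :=
  ∑' γ : Γ, ENNReal.ofReal (φ |x γ|)

/-- The Minkowski functional `Z_η` of the set `{x : Φ_η(x) < 1/2}`. -/
noncomputable def Zeta {Γ : Type*} (φ : ℝ → ℝ) : lp (fun _ : Γ => ℝ) ∞ → ℝ :=
  gauge {x | PhiSum φ x < 1 / 2}

/-- The set `A_η(Γ) = {x ∈ ℓ∞(Γ) : ⌊x⌋ < (1-η) ‖x‖∞}`. -/
def Aeta (Γ : Type*) (η : ℝ) : Set (lp (fun _ : Γ => ℝ) ∞) :=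
  {x | ftop x < (1 - η) * ‖x‖}

/-- `φ` is (the extension to `ℝ` of) one of the functions `φ_η`: convex, `C^∞`-smooth,
strictly convex on `[1-η, ∞)`, vanishing on `(-∞, 1-η]`, non-negative on `[0,∞)`, and
with `φ(1) = 1`. -/
def IsPhiEta (η : ℝ) (φ : ℝ → ℝ) : Prop :=
  ContDiff ℝ ((⊤ : ℕ∞) : WithTop ℕ∞) φ ∧ (∀ t : ℝ, 0 ≤ t → 0 ≤ φ t) ∧
    ConvexOn ℝ (Set.Ici 0) φ ∧ StrictConvexOn ℝ (Set.Ici (1 - η)) φ ∧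
    (∀ t : ℝ, t ≤ 1 - η → φ t = 0) ∧ φ 1 = 1

/-!
For a finite index set, `v ↦ ∑ φ |v i|` is a smooth convex function `f` with `f 0 < 1/2`, and the
gauge `p` of `{f < 1/2}` solves `f (v / p v) = 1/2` wherever `p v > 0`. Convexity makes `f` strictly
increasing along rays at the level `1/2`, so the implicit function theorem shows that `p` is smooth
there.

If `x ∈ A_η(Γ)`, only finitely many coordinates of `x` exceed some `t < (1-η) ‖x‖`. Since
`‖x‖ ≤ Z_η(x)` on those coordinates, the others contribute nothing to `Φ_η(y / r)` for `y` near `x`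
and `r` near `Z_η(x)`. Hence near `x` the function `Z_η` is the finite-dimensional gauge composed
with a restriction to finitely many coordinates.
-/

section Gauge

variable {E E' : Type*} [AddCommGroup E] [Module ℝ E] [AddCommGroup E'] [Module ℝ E']

theorem gauge_le_gauge_of_forall_inv_smul_mem {s : Set E} {t : Set E'} {x : E} {y : E'}
    (ht : Absorbent ℝ t) (h : ∀ r : ℝ, 0 < r → r⁻¹ • y ∈ t → r⁻¹ • x ∈ s) :
    gauge s x ≤ gauge t y := by
  refine le_of_forall_gt_imp_ge_of_dense fun b hb => ?_
  obtain ⟨r, hr, hrb, hy⟩ := exists_lt_of_gauge_lt ht hb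
  have hx := h r hr ((Set.mem_smul_set_iff_inv_smul_mem₀ hr.ne' _ _).1 hy)
  exact (gauge_le_of_mem hr.le ((Set.mem_smul_set_iff_inv_smul_mem₀ hr.ne' _ _).2 hx)).trans hrb.le

end Gauge

section GaugeSublevel

variable {E : Type*} [NormedAddCommGroup E] [NormedSpace ℝ E] {f : E → ℝ} {c : ℝ}

theorem sub_le_fderiv_sub (hf : ConvexOn ℝ Set.univ f) {x : E} (hx : DifferentiableAt ℝ f x)
    (y : E) : f x - f y ≤ fderiv ℝ f x (x - y) := by
  let line : ℝ →ᵃ[ℝ] E := AffineMap.lineMap y x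
  have hconv : ConvexOn ℝ Set.univ (f ∘ line) := hf.comp_affineMap line
  have hderiv : HasDerivAt (f ∘ line) (fderiv ℝ f x (x - y)) 1 :=
    HasFDerivAt.comp_hasDerivAt 1 (by simpa [line] using hx.hasFDerivAt)
      AffineMap.hasDerivAt_lineMap
  simpa [slope, line] using
    hconv.slope_le_of_hasDerivAt (Set.mem_univ 0) (Set.mem_univ 1) zero_lt_one hderiv

theorem fderiv_apply_self_pos (hf : ConvexOn ℝ Set.univ f) {x : E} (hx : DifferentiableAt ℝ f x)
    (h : f 0 < f x) : 0 < fderiv ℝ f x x :=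
  (sub_pos.2 h).trans_le (by simpa only [sub_zero] using sub_le_fderiv_sub hf hx 0)

theorem apply_inv_gauge_smul_eq (hf : ConvexOn ℝ Set.univ f) (hcont : Continuous f) (h0 : f 0 < c)
    {x : E} (hx : 0 < gauge {y | f y < c} x) : f ((gauge {y | f y < c} x)⁻¹ • x) = c := by
  have hconv : Convex ℝ {y | f y < c} := by simpa using hf.convex_lt c
  have hnhds : {y | f y < c} ∈ 𝓝 0 := (isOpen_lt hcont continuous_const).mem_nhds h0
  refine frontier_lt_subset_eq hcont continuous_const
    ((gauge_eq_one_iff_mem_frontier hconv hnhds).1 ?_)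
  rw [gauge_smul_of_nonneg (inv_nonneg.2 hx.le), smul_eq_mul, inv_mul_cancel₀ hx.ne']

theorem isInvertible_of_apply_one_ne_zero {D : ℝ →L[ℝ] ℝ} (hD : D 1 ≠ 0) : D.IsInvertible :=
  ⟨ContinuousLinearEquiv.unitsEquivAut ℝ (Units.mk0 (D 1) hD), by ext; simp⟩

theorem isInvertible_fderiv_inv_smul_comp_inr (hf : ConvexOn ℝ Set.univ f) {x : E} {r : ℝ}
    (hr : r ≠ 0) (hfr : DifferentiableAt ℝ f (r⁻¹ • x)) (h : f 0 < f (r⁻¹ • x)) :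
    (fderiv ℝ (fun q : E × ℝ => f (q.2⁻¹ • q.1)) (x, r) ∘L .inr ℝ E ℝ).IsInvertible := by
  let G : E × ℝ → ℝ := fun q => f (q.2⁻¹ • q.1)
  have hG : DifferentiableAt ℝ G (x, r) :=
    hfr.comp (x, r) ((differentiableAt_snd.inv hr).smul differentiableAt_fst)
  have hpartial : HasDerivAt (fun s => G (x, s)) ((fderiv ℝ G (x, r) ∘L .inr ℝ E ℝ) 1) r :=
    HasFDerivAt.hasDerivAt <| hG.hasFDerivAt.comp r (hasFDerivAt_prodMk_right x r)
  have hchain : HasDerivAt (fun s => G (x, s)) (fderiv ℝ f (r⁻¹ • x) (-(r ^ 2)⁻¹ • x)) r :=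
    hfr.hasFDerivAt.comp_hasDerivAt r ((hasDerivAt_inv hr).smul_const x)
  have hradial : -(r ^ 2)⁻¹ • x = -r⁻¹ • r⁻¹ • x := by
    rw [smul_smul]
    congr 1
    ring
  apply isInvertible_of_apply_one_ne_zero
  rw [hpartial.unique hchain, hradial, map_smul, smul_eq_mul]
  exact mul_ne_zero (neg_ne_zero.2 (inv_ne_zero hr)) (fderiv_apply_self_pos hf hfr h).ne'

theorem contDiffAt_gauge_setOf_lt [CompleteSpace E] {n : WithTop ℕ∞} (hn : n ≠ 0)
    (hf : ConvexOn ℝ Set.univ f) (hsmooth : ContDiff ℝ n f) (h0 : f 0 < c) {x : E}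
    (hx : 0 < gauge {y | f y < c} x) : ContDiffAt ℝ n (gauge {y | f y < c}) x := by
  set p := gauge {y | f y < c}
  let G : E × ℝ → ℝ := fun q => f (q.2⁻¹ • q.1)
  have hcont : Continuous p :=
    continuous_gauge (by simpa using hf.convex_lt c)
      ((isOpen_lt hsmooth.continuous continuous_const).mem_nhds h0)
  have hG : ContDiffAt ℝ n G (x, p x) :=
    hsmooth.contDiffAt.comp _ ((contDiffAt_snd.inv hx.ne').smul contDiffAt_fst)
  have hGp : ∀ y, 0 < p y → G (y, p y) = c := fun y hy =>
    apply_inv_gauge_smul_eq hf hsmooth.continuous h0 hy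
  have hinv : (fderiv ℝ G (x, p x) ∘L .inr ℝ E ℝ).IsInvertible :=
    isInvertible_fderiv_inv_smul_comp_inr hf hx.ne' (hsmooth.differentiable hn _)
      (h0.trans_eq (hGp x hx).symm)
  refine (hG.contDiffAt_implicitFunction hn hinv).congr_of_eventuallyEq ?_
  have hgraph : Tendsto (fun y => (y, p y)) (𝓝 x) (𝓝 (x, p x)) :=
    (continuous_id.prodMk hcont).tendsto x
  filter_upwards [hgraph.eventually (hG.eventually_apply_eq_iff_implicitFunction hn hinv),
    hcont.continuousAt.eventually (lt_mem_nhds hx)] with y hunique hy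
  exact (hunique.1 ((hGp y hy).trans (hGp x hx).symm)).symm

end GaugeSublevel

section Profile

variable {φ : ℝ → ℝ}

theorem monotoneOn_Ici_of_convexOn_of_isMinOn {b : ℝ} (hconv : ConvexOn ℝ (Set.Ici b) φ)
    (hmin : IsMinOn φ (Set.Ici b) b) : MonotoneOn φ (Set.Ici b) := by
  intro s hs t ht hst
  rcases (Set.mem_Ici.1 hs).eq_or_lt with rfl | hbs
  · exact hmin ht
  · exact hconv.le_right_of_left_le'' Set.self_mem_Ici ht hbs hst (hmin hs)

theorem convexOn_comp_abs (hconv : ConvexOn ℝ (Set.Ici 0) φ) (hmono : MonotoneOn φ (Set.Ici 0)) :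
    ConvexOn ℝ Set.univ fun t => φ |t| := by
  have himage : (fun t : ℝ => |t|) '' Set.univ = Set.Ici 0 := by
    ext t
    exact ⟨by rintro ⟨s, -, rfl⟩; exact abs_nonneg s, fun ht => ⟨t, trivial, abs_of_nonneg ht⟩⟩
  exact ConvexOn.comp (himage ▸ hconv) convexOn_univ_norm (himage ▸ hmono)

theorem contDiff_comp_abs {n : WithTop ℕ∞} (hsmooth : ContDiff ℝ n φ)
    (hzero : ∀ t ≤ 0, φ t = 0) : ContDiff ℝ n fun t => φ |t| := by
  have hsplit : (fun t => φ |t|) = fun t => φ t + φ (-t) := by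
    funext t
    rcases le_total 0 t with ht | ht
    · rw [abs_of_nonneg ht, hzero (-t) (neg_nonpos.2 ht), add_zero]
    · rw [abs_of_nonpos ht, hzero t ht, zero_add]
  rw [hsplit]
  exact hsmooth.add (hsmooth.comp contDiff_neg)

end Profile

section PhiSum

variable {Γ : Type*} {φ : ℝ → ℝ}

theorem phiSum_mono (hmono : MonotoneOn φ (Set.Ici 0)) {x y : lp (fun _ : Γ => ℝ) ∞}
    (h : ∀ γ, |x γ| ≤ |y γ|) : PhiSum φ x ≤ PhiSum φ y :=
  ENNReal.tsum_le_tsum fun γ =>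
    ENNReal.ofReal_le_ofReal
      (hmono (Set.mem_Ici.2 (abs_nonneg _)) (Set.mem_Ici.2 (abs_nonneg _)) (h γ))

theorem phiSum_smul_add_smul_le (hconv : ConvexOn ℝ (Set.Ici 0) φ)
    (hmono : MonotoneOn φ (Set.Ici 0)) {s t : ℝ} (hs : 0 ≤ s) (ht : 0 ≤ t) (hst : s + t = 1)
    (x y : lp (fun _ : Γ => ℝ) ∞) :
    PhiSum φ (s • x + t • y) ≤ ENNReal.ofReal s * PhiSum φ x + ENNReal.ofReal t * PhiSum φ y := by
  unfold PhiSum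
  rw [← ENNReal.tsum_mul_left, ← ENNReal.tsum_mul_left, ← ENNReal.tsum_add]
  refine ENNReal.tsum_le_tsum fun γ => ?_
  rw [← ENNReal.ofReal_mul hs, ← ENNReal.ofReal_mul ht]
  refine le_trans (ENNReal.ofReal_le_ofReal ?_) ENNReal.ofReal_add_le
  exact (convexOn_comp_abs hconv hmono).2 trivial trivial hs ht hst

theorem convex_phiSum_lt (hconv : ConvexOn ℝ (Set.Ici 0) φ) (hmono : MonotoneOn φ (Set.Ici 0))
    (c : ℝ≥0∞) : Convex ℝ {x : lp (fun _ : Γ => ℝ) ∞ | PhiSum φ x < c} := by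
  intro x (hx : PhiSum φ x < c) y (hy : PhiSum φ y < c) s t hs ht hst
  refine lt_of_le_of_lt ?_ (max_lt hx hy)
  calc PhiSum φ (s • x + t • y)
      ≤ ENNReal.ofReal s * PhiSum φ x + ENNReal.ofReal t * PhiSum φ y :=
        phiSum_smul_add_smul_le hconv hmono hs ht hst x y
    _ ≤ ENNReal.ofReal s * max (PhiSum φ x) (PhiSum φ y) +
          ENNReal.ofReal t * max (PhiSum φ x) (PhiSum φ y) := by
        gcongr
        exacts [le_max_left _ _, le_max_right _ _]
    _ = max (PhiSum φ x) (PhiSum φ y) := by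
        rw [← add_mul, ← ENNReal.ofReal_add hs ht, hst, ENNReal.ofReal_one, one_mul]

theorem balanced_phiSum_lt (hmono : MonotoneOn φ (Set.Ici 0)) (c : ℝ≥0∞) :
    Balanced ℝ {x : lp (fun _ : Γ => ℝ) ∞ | PhiSum φ x < c} := by
  refine balanced_iff_smul_mem.2 fun a ha x hx => (phiSum_mono hmono fun γ => ?_).trans_lt hx
  simpa [abs_mul] using mul_le_of_le_one_left (abs_nonneg (x γ)) ha

theorem ball_subset_phiSum_lt {a : ℝ} (hzero : ∀ t ≤ a, φ t = 0) {c : ℝ≥0∞} (hc : 0 < c) :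
    Metric.ball (0 : lp (fun _ : Γ => ℝ) ∞) a ⊆ {x | PhiSum φ x < c} := by
  intro x hx
  have hcoord (γ : Γ) : |x γ| ≤ a :=
    (lp.norm_apply_le_norm ENNReal.top_ne_zero x γ).trans (mem_ball_zero_iff.1 hx).le
  have hsum : PhiSum φ x = 0 := by simp [PhiSum, hzero _ (hcoord _)]
  exact hsum.trans_lt hc

theorem absorbent_phiSum_lt {a : ℝ} (ha : 0 < a) (hzero : ∀ t ≤ a, φ t = 0) {c : ℝ≥0∞}
    (hc : 0 < c) : Absorbent ℝ {x : lp (fun _ : Γ => ℝ) ∞ | PhiSum φ x < c} :=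
  (absorbent_ball_zero ha).mono (ball_subset_phiSum_lt hzero hc)

theorem stronglyLattice_zeta (hmono : MonotoneOn φ (Set.Ici 0))
    (habs : Absorbent ℝ {x : lp (fun _ : Γ => ℝ) ∞ | PhiSum φ x < 1 / 2}) :
    StronglyLattice (Zeta (Γ := Γ) φ) := by
  intro x y hxy
  refine gauge_le_gauge_of_forall_inv_smul_mem habs fun r _ hy =>
    (phiSum_mono hmono fun γ => ?_).trans_lt hy
  simpa [abs_mul] using mul_le_mul_of_nonneg_left (hxy γ) (abs_nonneg r⁻¹)

end PhiSum

section Restriction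

variable {Γ : Type*}

/-- Restriction of a bounded function to finitely many coordinates. -/
noncomputable def restrictCLM (F : Finset Γ) : lp (fun _ : Γ => ℝ) ∞ →L[ℝ] (F → ℝ) :=
  ContinuousLinearMap.pi fun γ => lp.evalCLM ℝ (fun _ : Γ => ℝ) ∞ γ

theorem norm_restrictCLM_apply_le (F : Finset Γ) (x : lp (fun _ : Γ => ℝ) ∞) :
    ‖restrictCLM F x‖ ≤ ‖x‖ :=
  (pi_norm_le_iff_of_nonneg (norm_nonneg x)).2 fun γ =>
    lp.norm_apply_le_norm ENNReal.top_ne_zero x γ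

theorem exists_finset_of_ftop_lt {x : lp (fun _ : Γ => ℝ) ∞} {b : ℝ} (h : ftop x < b) :
    ∃ t, 0 ≤ t ∧ t < b ∧ ∃ F : Finset Γ, ∀ γ ∉ F, |x γ| ≤ t := by
  have hnonempty : {t : ℝ | 0 ≤ t ∧ {γ : Γ | t < |x γ|}.Finite}.Nonempty := by
    refine ⟨‖x‖, norm_nonneg x, Set.finite_empty.subset fun γ hγ => ?_⟩
    exact (lp.norm_apply_le_norm ENNReal.top_ne_zero x γ).not_gt hγ
  obtain ⟨t, ⟨ht, hfin⟩, htb⟩ := exists_lt_of_csInf_lt hnonempty h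
  exact ⟨t, ht, htb, hfin.toFinset, fun γ hγ => by simpa using hγ⟩

theorem lfcAt_of_eventuallyEq_comp_restrictCLM {f : lp (fun _ : Γ => ℝ) ∞ → ℝ}
    {x : lp (fun _ : Γ => ℝ) ∞} {F : Finset Γ} {g : (F → ℝ) → ℝ}
    (h : f =ᶠ[𝓝 x] g ∘ restrictCLM F) : LFCAt f x :=
  ⟨_, h, F, g, fun _ hy => hy⟩

end Restriction

/-- The conditions on `φ`, smoothness aside, under which `Zeta φ` behaves like `Z_η`, with `a` in
the role of `1 - η`. The bound at `1` makes `Zeta φ` dominate every coordinate. -/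
structure IsFlatConvex (a : ℝ) (φ : ℝ → ℝ) : Prop where
  pos : 0 < a
  convexOn : ConvexOn ℝ (Set.Ici 0) φ
  nonneg : ∀ t, 0 ≤ t → 0 ≤ φ t
  eq_zero : ∀ t ≤ a, φ t = 0
  half_le : 1 / 2 ≤ φ 1

/-- The analogue of `PhiSum` on `ℝ^ι` for a finite index set `ι`, with real values. -/
noncomputable def finPhiSum {ι : Type*} [Fintype ι] (φ : ℝ → ℝ) (v : ι → ℝ) : ℝ :=
  ∑ i, φ |v i|

/-- The analogue of `Zeta` on `ℝ^ι` for a finite index set `ι`. -/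
noncomputable def finZeta {ι : Type*} [Fintype ι] (φ : ℝ → ℝ) : (ι → ℝ) → ℝ :=
  gauge {v | finPhiSum φ v < 1 / 2}

namespace IsFlatConvex

variable {a : ℝ} {φ : ℝ → ℝ}

theorem monotoneOn (hφ : IsFlatConvex a φ) : MonotoneOn φ (Set.Ici 0) :=
  monotoneOn_Ici_of_convexOn_of_isMinOn hφ.convexOn fun t ht =>
    (hφ.eq_zero 0 hφ.pos.le).trans_le (hφ.nonneg t ht)

theorem lt_one (hφ : IsFlatConvex a φ) : a < 1 := by
  by_contra! ha
  linarith [hφ.half_le, hφ.eq_zero 1 ha]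

section FiniteDimensional

variable {ι : Type*} [Fintype ι]

theorem convexOn_finPhiSum (hφ : IsFlatConvex a φ) :
    ConvexOn ℝ Set.univ (finPhiSum φ : (ι → ℝ) → ℝ) := by
  refine ⟨convex_univ, fun v _ w _ s t hs ht hst => ?_⟩
  simp only [finPhiSum, smul_eq_mul, Finset.mul_sum, ← Finset.sum_add_distrib]
  exact Finset.sum_le_sum fun i _ =>
    (convexOn_comp_abs hφ.convexOn hφ.monotoneOn).2 trivial trivial hs ht hst

theorem contDiff_finPhiSum (hφ : IsFlatConvex a φ) {n : WithTop ℕ∞} (hsmooth : ContDiff ℝ n φ) :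
    ContDiff ℝ n (finPhiSum φ : (ι → ℝ) → ℝ) :=
  ContDiff.sum fun i _ =>
    (contDiff_comp_abs hsmooth fun t ht => hφ.eq_zero t (ht.trans hφ.pos.le)).comp
      (contDiff_apply ℝ ℝ i)

theorem finPhiSum_eq_zero (hφ : IsFlatConvex a φ) {v : ι → ℝ} (hv : ‖v‖ ≤ a) :
    finPhiSum φ v = 0 :=
  Finset.sum_eq_zero fun i _ => hφ.eq_zero _ ((norm_le_pi_norm v i).trans hv)

theorem finPhiSum_zero_lt_half (hφ : IsFlatConvex a φ) : finPhiSum φ (0 : ι → ℝ) < 1 / 2 := by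
  rw [hφ.finPhiSum_eq_zero (by simpa using hφ.pos.le)]
  exact one_half_pos

theorem setOf_finPhiSum_lt_mem_nhds_zero (hφ : IsFlatConvex a φ) :
    {v : ι → ℝ | finPhiSum φ v < 1 / 2} ∈ 𝓝 0 := by
  filter_upwards [Metric.ball_mem_nhds 0 hφ.pos] with v hv
  rw [hφ.finPhiSum_eq_zero (mem_ball_zero_iff.1 hv).le]
  exact one_half_pos

theorem absorbent_finPhiSum_lt (hφ : IsFlatConvex a φ) :
    Absorbent ℝ {v : ι → ℝ | finPhiSum φ v < 1 / 2} :=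
  absorbent_nhds_zero hφ.setOf_finPhiSum_lt_mem_nhds_zero

theorem continuous_finZeta (hφ : IsFlatConvex a φ) : Continuous (finZeta φ : (ι → ℝ) → ℝ) :=
  continuous_gauge (by simpa using hφ.convexOn_finPhiSum.convex_lt (1 / 2))
    hφ.setOf_finPhiSum_lt_mem_nhds_zero

theorem abs_apply_lt_one_of_finPhiSum_lt (hφ : IsFlatConvex a φ) {v : ι → ℝ}
    (hv : finPhiSum φ v < 1 / 2) (i : ι) : |v i| < 1 := by
  by_contra! hi
  refine hv.not_ge ?_
  calc 1 / 2 ≤ φ 1 := hφ.half_le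
    _ ≤ φ |v i| := hφ.monotoneOn (Set.mem_Ici.2 zero_le_one) (Set.mem_Ici.2 (abs_nonneg _)) hi
    _ ≤ finPhiSum φ v :=
        Finset.single_le_sum (f := fun i => φ |v i|) (fun i _ => hφ.nonneg _ (abs_nonneg _))
          (Finset.mem_univ i)

theorem abs_apply_le_finZeta (hφ : IsFlatConvex a φ) (v : ι → ℝ) (i : ι) :
    |v i| ≤ finZeta φ v := by
  rw [← Real.norm_eq_abs, ← gauge_unit_ball]
  refine gauge_le_gauge_of_forall_inv_smul_mem hφ.absorbent_finPhiSum_lt fun r _ hv => ?_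
  exact mem_ball_zero_iff.2 (hφ.abs_apply_lt_one_of_finPhiSum_lt hv i)

theorem contDiffAt_finZeta (hφ : IsFlatConvex a φ) {n : WithTop ℕ∞} (hn : n ≠ 0)
    (hsmooth : ContDiff ℝ n φ) {v : ι → ℝ} (hv : 0 < finZeta φ v) :
    ContDiffAt ℝ n (finZeta φ) v :=
  contDiffAt_gauge_setOf_lt hn hφ.convexOn_finPhiSum (hφ.contDiff_finPhiSum hsmooth)
    hφ.finPhiSum_zero_lt_half hv

theorem mul_finZeta_lt_norm (hφ : IsFlatConvex a φ) (hcont : Continuous φ) {v : ι → ℝ}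
    (hv : 0 < finZeta φ v) : a * finZeta φ v < ‖v‖ := by
  have hlevel : finPhiSum φ ((finZeta φ v)⁻¹ • v) = 1 / 2 :=
    apply_inv_gauge_smul_eq hφ.convexOn_finPhiSum
      (hφ.contDiff_finPhiSum (contDiff_zero.2 hcont)).continuous
      hφ.finPhiSum_zero_lt_half hv
  by_contra! hle
  have hnorm : ‖(finZeta φ v)⁻¹ • v‖ ≤ a := by
    rwa [norm_smul, norm_inv, Real.norm_of_nonneg hv.le, inv_mul_le_iff₀ hv, mul_comm]
  norm_num [hφ.finPhiSum_eq_zero hnorm] at hlevel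

end FiniteDimensional

section Restriction

variable {Γ : Type*}

theorem ofReal_finPhiSum_restrictCLM (hφ : IsFlatConvex a φ) (F : Finset Γ)
    (x : lp (fun _ : Γ => ℝ) ∞) :
    ENNReal.ofReal (finPhiSum φ (restrictCLM F x)) = ∑ γ ∈ F, ENNReal.ofReal (φ |x γ|) := by
  rw [finPhiSum, ENNReal.ofReal_sum_of_nonneg fun γ _ => hφ.nonneg _ (abs_nonneg _)]
  exact Finset.sum_coe_sort F fun γ => ENNReal.ofReal (φ |x γ|)

theorem ofReal_finPhiSum_restrictCLM_le (hφ : IsFlatConvex a φ) (F : Finset Γ)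
    (x : lp (fun _ : Γ => ℝ) ∞) :
    ENNReal.ofReal (finPhiSum φ (restrictCLM F x)) ≤ PhiSum φ x :=
  (hφ.ofReal_finPhiSum_restrictCLM F x).trans_le (ENNReal.sum_le_tsum F)

theorem phiSum_eq_ofReal_finPhiSum (hφ : IsFlatConvex a φ) {F : Finset Γ}
    {x : lp (fun _ : Γ => ℝ) ∞} (hF : ∀ γ ∉ F, |x γ| ≤ a) :
    PhiSum φ x = ENNReal.ofReal (finPhiSum φ (restrictCLM F x)) := by
  rw [hφ.ofReal_finPhiSum_restrictCLM]
  exact tsum_eq_sum fun γ hγ => by rw [hφ.eq_zero _ (hF γ hγ), ENNReal.ofReal_zero]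

theorem zeta_eq_finZeta_restrictCLM (hφ : IsFlatConvex a φ) {F : Finset Γ}
    {x : lp (fun _ : Γ => ℝ) ∞} (hF : ∀ γ ∉ F, |x γ| ≤ a * finZeta φ (restrictCLM F x)) :
    Zeta φ x = finZeta φ (restrictCLM F x) := by
  have hhalf : (1 / 2 : ℝ≥0∞) = ENNReal.ofReal (1 / 2) := by
    rw [ENNReal.ofReal_div_of_pos two_pos, ENNReal.ofReal_one, ENNReal.ofReal_ofNat]
  apply le_antisymm
  · refine gauge_le_gauge_of_forall_inv_smul_mem hφ.absorbent_finPhiSum_lt fun r hr hx => ?_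
    rw [← map_smul] at hx
    have hle : finZeta φ (restrictCLM F x) ≤ r :=
      gauge_le_of_mem hr.le
        ((Set.mem_smul_set_iff_inv_smul_mem₀ hr.ne' _ _).2 (by rwa [← map_smul]))
    have hsmall : ∀ γ ∉ F, |(r⁻¹ • x) γ| ≤ a := fun γ hγ => by
      have hxγ : |x γ| ≤ a * r := (hF γ hγ).trans (mul_le_mul_of_nonneg_left hle hφ.pos.le)
      simpa [abs_mul, abs_of_pos hr, inv_mul_le_iff₀ hr, mul_comm r] using hxγ
    change PhiSum φ (r⁻¹ • x) < 1 / 2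
    rw [hφ.phiSum_eq_ofReal_finPhiSum hsmall, hhalf]
    exact (ENNReal.ofReal_lt_ofReal_iff one_half_pos).2 hx
  · refine gauge_le_gauge_of_forall_inv_smul_mem
      (absorbent_phiSum_lt hφ.pos hφ.eq_zero (by simp)) fun r _ hx => ?_
    rw [← map_smul]
    refine (ENNReal.ofReal_lt_ofReal_iff one_half_pos).1 (lt_of_le_of_lt
      (hφ.ofReal_finPhiSum_restrictCLM_le F _) ?_)
    rwa [← hhalf]

theorem exists_zeta_eventuallyEq (hφ : IsFlatConvex a φ) {x : lp (fun _ : Γ => ℝ) ∞}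
    (hx : ftop x < a * ‖x‖) :
    ∃ F : Finset Γ, 0 < finZeta φ (restrictCLM F x) ∧
      Zeta φ =ᶠ[𝓝 x] finZeta φ ∘ restrictCLM F := by
  obtain ⟨t, ht, htx, F, hF⟩ := exists_finset_of_ftop_lt hx
  have hta : t / a < ‖x‖ := (div_lt_iff₀' hφ.pos).2 htx
  obtain ⟨γ, hγ⟩ : ∃ γ, t / a < |x γ| := by
    by_contra! hle
    exact hta.not_ge (lp.norm_le_of_forall_le (div_nonneg ht hφ.pos.le) hle)
  have hγF : γ ∈ F := by
    by_contra hγF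
    exact hγ.not_ge ((hF γ hγF).trans (le_div_self ht hφ.pos hφ.lt_one.le))
  have hlt : t / a < finZeta φ (restrictCLM F x) :=
    hγ.trans_le (hφ.abs_apply_le_finZeta (restrictCLM F x) ⟨γ, hγF⟩)
  refine ⟨F, (div_nonneg ht hφ.pos.le).trans_lt hlt, ?_⟩
  have hcont : Continuous fun y => a * finZeta φ (restrictCLM F y) - ‖y - x‖ := by
    have := hφ.continuous_finZeta (ι := F)
    fun_prop
  have hnear : ∀ᶠ y in 𝓝 x, t < a * finZeta φ (restrictCLM F y) - ‖y - x‖ :=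
    hcont.continuousAt.eventually (lt_mem_nhds (by simpa using (div_lt_iff₀' hφ.pos).1 hlt))
  filter_upwards [hnear] with y hy
  refine hφ.zeta_eq_finZeta_restrictCLM fun γ hγ => ?_
  calc |y γ| ≤ |x γ| + |(y - x) γ| := by simpa using abs_add_le (x γ) ((y - x) γ)
    _ ≤ t + ‖y - x‖ :=
        add_le_add (hF γ hγ) (lp.norm_apply_le_norm ENNReal.top_ne_zero (y - x) γ)
    _ ≤ a * finZeta φ (restrictCLM F y) := by linarith

end Restriction

end IsFlatConvex

theorem Zeta_seminorm_properties_general {Γ : Type*} {η : ℝ} {φ : ℝ → ℝ}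
    (hφ : IsFlatConvex (1 - η) φ) {n : WithTop ℕ∞} (hn : n ≠ 0) (hsmooth : ContDiff ℝ n φ) :
    (∀ x : lp (fun _ : Γ => ℝ) ∞, 0 ≤ Zeta φ x) ∧
    (∀ (c : ℝ) (x : lp (fun _ : Γ => ℝ) ∞), Zeta φ (c • x) = |c| * Zeta φ x) ∧
    (∀ x y : lp (fun _ : Γ => ℝ) ∞, Zeta φ (x + y) ≤ Zeta φ x + Zeta φ y) ∧
    StronglyLattice (Zeta (Γ := Γ) φ) ∧
    (∀ x : lp (fun _ : Γ => ℝ) ∞, (1 - η) * Zeta φ x ≤ ‖x‖) ∧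
    (∀ x ∈ Aeta Γ η, 0 < Zeta φ x ∧ ContDiffAt ℝ n (Zeta φ) x ∧
      LFCAt (Zeta φ) x ∧ (1 - η) * Zeta φ x < ‖x‖) := by
  have habs := absorbent_phiSum_lt (Γ := Γ) hφ.pos hφ.eq_zero (c := 1 / 2) (by simp)
  refine ⟨gauge_nonneg, gauge_smul (balanced_phiSum_lt hφ.monotoneOn _),
    gauge_add_le (convex_phiSum_lt hφ.convexOn hφ.monotoneOn _) habs,
    stronglyLattice_zeta hφ.monotoneOn habs,
    fun x => mul_gauge_le_norm (ball_subset_phiSum_lt hφ.eq_zero (by simp)), fun x hx => ?_⟩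
  obtain ⟨F, hpos, hlocal⟩ := hφ.exists_zeta_eventuallyEq hx
  have hZ : Zeta φ x = finZeta φ (restrictCLM F x) := hlocal.eq_of_nhds
  have hdiff : ContDiffAt ℝ n (finZeta φ ∘ restrictCLM F) x :=
    (hφ.contDiffAt_finZeta hn hsmooth hpos).comp x (restrictCLM F).contDiff.contDiffAt
  refine ⟨hZ ▸ hpos, hdiff.congr_of_eventuallyEq hlocal,
    lfcAt_of_eventuallyEq_comp_restrictCLM hlocal, ?_⟩
  rw [hZ]
  exact (hφ.mul_finZeta_lt_norm hsmooth.continuous hpos).trans_le (norm_restrictCLM_apply_le F x)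

/-- **Hájek–Procházka, Lemma 5.1.** `Z_η` is a strongly lattice seminorm on `ℓ∞(Γ)` with
`(1-η) Z_η(x) ≤ ‖x‖∞`, and on `A_η(Γ)` it is strictly positive, `C^∞`-Fréchet smooth and
locally dependent on finitely many coordinates; moreover `(1-η) Z_η(x) < ‖x‖∞` on
`A_η(Γ)`. -/
theorem Zeta_seminorm_properties {Γ : Type*} (η : ℝ) (hη0 : 0 < η) (hη1 : η < 1)
    (φ : ℝ → ℝ) (hφ : IsPhiEta η φ) :
    (∀ x : lp (fun _ : Γ => ℝ) ∞, 0 ≤ Zeta φ x) ∧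
    (∀ (c : ℝ) (x : lp (fun _ : Γ => ℝ) ∞), Zeta φ (c • x) = |c| * Zeta φ x) ∧
    (∀ x y : lp (fun _ : Γ => ℝ) ∞, Zeta φ (x + y) ≤ Zeta φ x + Zeta φ y) ∧
    StronglyLattice (Zeta (Γ := Γ) φ) ∧
    (∀ x : lp (fun _ : Γ => ℝ) ∞, (1 - η) * Zeta φ x ≤ ‖x‖) ∧
    (∀ x ∈ Aeta Γ η, 0 < Zeta φ x ∧
      ContDiffAt ℝ ((⊤ : ℕ∞) : WithTop ℕ∞) (Zeta φ) x ∧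
      LFCAt (Zeta φ) x ∧ (1 - η) * Zeta φ x < ‖x‖) := by
  obtain ⟨hsmooth, hnonneg, hconv, -, hzero, hone⟩ := hφ
  exact Zeta_seminorm_properties_general
    ⟨sub_pos.2 hη1, hconv, hnonneg, hzero, by rw [hone]; norm_num⟩ (by simp) hsmooth
end

section
/- Fix 0 < η < 1 and a function φ_η : [0,∞) → [0,∞) which is convex, C^∞-smooth, strictly convex on [1−η,∞), with φ_η([0,1−η]) = {0} and φ_η(1) = 1; let Z_η be the Minkowski functional of {x ∈ ℓ∞(Γ) : Φ_η(x) < 1/2}, where Φ_η(x) = Σ_{γ∈Γ} φ_η(|x(γ)|). Let x_r, x ∈ A_η(Γ) (r ∈ ℕ) be non-negative elements (i.e. x(γ) ≥ 0 and x_r(γ) ≥ 0 for all γ) such that 2Z_η²(x) + 2Z_η²(x_r) − Z_η²(x + x_r) → 0 as r → ∞. Then x_r(γ) → x(γ) for every γ ∈ Γ with x(γ) > Z_η(x)(1−η). -/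
open Filter Topology
open scoped ENNReal

/-! An Orlicz function `φ` vanishing at some `a > 0` turns `Zeta φ` into a seminorm on `ℓ∞(Γ)`
whose closed unit ball is contained in `{Φ ≤ 1/2}`. A vanishing parallelogram defect forces
`Z(x_r) → Z(x)` and `Z(u + w_r) → 2`, where `u = x / Z(x)` and `w_r = x_r / Z(x_r)`, so it is enough
that `Z(u + w)` stays away from `2` as long as `Z(w) ≤ 1` and `|w(γ) - u(γ)| ≥ ε`.

Strict convexity at `|u(γ)| > a` gives `2 φ|(u + w)/2| + δ ≤ φ|u| + φ|w|` at `γ`, hence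
`2 Φ((u + w)/2) + δ ≤ 1`, and the point is to replace `(u + w)/2` by a slight dilation of it,
uniformly in `w`. On the finite set where `|u|` exceeds some `c < a` this costs arbitrarily little.
Elsewhere it costs nothing: `(1 + τ)(u + w)/2` is the midpoint of `(1 + τ) u + τ w`, where `φ`
vanishes for small `τ`, and `w`. -/

section Rotundity

variable {ι E F : Type*} [AddCommGroup E] [Module ℝ E] [SeminormedAddCommGroup F] [NormedSpace ℝ F]

/-- Local uniform rotundity of the seminorm `p` at the point `u` of its unit ball, as seen by the
linear map `f`: a point `w` of the unit ball with `p (u + w)` close to `2` has `f w` close to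
`f u`. -/
def IsRotundAlong (p : Seminorm ℝ E) (f : E →ₗ[ℝ] F) (u : E) : Prop :=
  ∀ ε > 0, ∃ c < 2, ∀ w, p w ≤ 1 → ε ≤ ‖f w - f u‖ → p (u + w) ≤ c

variable {l : Filter ι} {p : Seminorm ℝ E} {x : E} {y : ι → E}

theorem tendsto_seminorm_of_tendsto_parallelogram_defect
    (h : Tendsto (fun i => 2 * p x ^ 2 + 2 * p (y i) ^ 2 - p (x + y i) ^ 2) l (𝓝 0)) :
    Tendsto (fun i => p (y i)) l (𝓝 (p x)) := by
  have hsq : Tendsto (fun i => (p (y i) - p x) ^ 2) l (𝓝 0) := by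
    refine squeeze_zero (fun i => sq_nonneg _) (fun i => ?_) h
    have := pow_le_pow_left₀ (apply_nonneg p _) (map_add_le_add p x (y i)) 2
    linarith
  have habs : Tendsto (fun i => |p (y i) - p x|) l (𝓝 0) := by
    simpa [Real.sqrt_sq_eq_abs] using hsq.sqrt
  exact tendsto_sub_nhds_zero_iff.1 ((tendsto_zero_iff_abs_tendsto_zero _).2 habs)

theorem tendsto_seminorm_add_of_tendsto_parallelogram_defect
    (h : Tendsto (fun i => 2 * p x ^ 2 + 2 * p (y i) ^ 2 - p (x + y i) ^ 2) l (𝓝 0)) :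
    Tendsto (fun i => p (x + y i)) l (𝓝 (2 * p x)) := by
  have hy := tendsto_seminorm_of_tendsto_parallelogram_defect h
  have hsq := ((hy.pow 2).const_mul 2 |>.const_add (2 * p x ^ 2)).sub h
  rw [show 2 * p x ^ 2 + 2 * p x ^ 2 - 0 = (2 * p x) ^ 2 by ring] at hsq
  simpa [Real.sqrt_sq, apply_nonneg] using hsq.sqrt

theorem tendsto_seminorm_normalized_add_of_tendsto_parallelogram_defect (hx : p x ≠ 0)
    (h : Tendsto (fun i => 2 * p x ^ 2 + 2 * p (y i) ^ 2 - p (x + y i) ^ 2) l (𝓝 0)) :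
    Tendsto (fun i => p ((p x)⁻¹ • x + (p (y i))⁻¹ • y i)) l (𝓝 2) := by
  have hy := tendsto_seminorm_of_tendsto_parallelogram_defect h
  have hsum : Tendsto (fun i => p ((p x)⁻¹ • (x + y i))) l (𝓝 2) := by
    have := (tendsto_seminorm_add_of_tendsto_parallelogram_defect h).const_mul (p x)⁻¹
    rw [mul_left_comm, inv_mul_cancel₀ hx, mul_one] at this
    refine this.congr fun i => ?_
    rw [map_smul_eq_mul, Real.norm_of_nonneg (inv_nonneg.2 (apply_nonneg p x))]
  have hdiff : Tendsto (fun i => p (((p (y i))⁻¹ - (p x)⁻¹) • y i)) l (𝓝 0) := by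
    have := ((hy.inv₀ hx).sub_const (p x)⁻¹).abs.mul hy
    simpa [map_smul_eq_mul] using this
  refine hsum.congr_dist (squeeze_zero (fun i => dist_nonneg) (fun i => ?_) hdiff)
  rw [dist_comm, Real.dist_eq, show ((p (y i))⁻¹ - (p x)⁻¹) • y i =
    (p x)⁻¹ • x + (p (y i))⁻¹ • y i - (p x)⁻¹ • (x + y i) by module]
  exact abs_sub_map_le_sub p _ _

theorem IsRotundAlong.tendsto_of_tendsto_parallelogram_defect {f : E →ₗ[ℝ] F}
    (hp : IsRotundAlong p f ((p x)⁻¹ • x)) (hx : p x ≠ 0)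
    (h : Tendsto (fun i => 2 * p x ^ 2 + 2 * p (y i) ^ 2 - p (x + y i) ^ 2) l (𝓝 0)) :
    Tendsto (fun i => f (y i)) l (𝓝 (f x)) := by
  have hy := tendsto_seminorm_of_tendsto_parallelogram_defect h
  have hne : ∀ᶠ i in l, p (y i) ≠ 0 := hy.eventually_ne hx
  have hnormalized :
      Tendsto (fun i => f ((p (y i))⁻¹ • y i)) l (𝓝 (f ((p x)⁻¹ • x))) := by
    refine Metric.tendsto_nhds.2 fun ε hε => ?_
    obtain ⟨c, hc, hrot⟩ := hp ε hε
    filter_upwards [hne, (tendsto_seminorm_normalized_add_of_tendsto_parallelogram_defect hx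
      h).eventually (lt_mem_nhds hc)] with i hi hci
    have hunit : p ((p (y i))⁻¹ • y i) ≤ 1 := by
      simp [map_smul_eq_mul, abs_of_nonneg, apply_nonneg, hi]
    rw [dist_eq_norm]
    by_contra! hε_le
    exact (hrot _ hunit hε_le).not_gt hci
  have hscaled := hy.smul hnormalized
  rw [map_smul, smul_inv_smul₀ hx] at hscaled
  refine hscaled.congr' (hne.mono fun i hi => ?_)
  rw [map_smul, smul_inv_smul₀ hi]

end Rotundity

section MidpointDefect

variable {E : Type*} [AddCommGroup E] [Module ℝ E] {C : Set E} {f : E → ℝ} {s t : E}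

theorem two_mul_apply_midpoint_le_of_convexOn (hf : ConvexOn ℝ C f) (hs : s ∈ C) (ht : t ∈ C) :
    2 * f (midpoint ℝ s t) ≤ f s + f t := by
  have h := hf.2 hs ht one_half_pos.le one_half_pos.le (add_halves 1)
  rw [← smul_add, one_div, ← invOf_eq_inv, ← midpoint_eq_smul_add, invOf_eq_inv] at h
  simp only [smul_eq_mul] at h
  linarith

theorem two_mul_apply_midpoint_lt_of_strictConvexOn (hf : StrictConvexOn ℝ C f) (hs : s ∈ C)
    (ht : t ∈ C) (hst : s ≠ t) : 2 * f (midpoint ℝ s t) < f s + f t := by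
  have h := hf.2 hs ht hst one_half_pos one_half_pos (add_halves 1)
  rw [← smul_add, one_div, ← invOf_eq_inv, ← midpoint_eq_smul_add, invOf_eq_inv] at h
  simp only [smul_eq_mul] at h
  linarith

theorem midpoint_defect_mono (hf : ConvexOn ℝ C f) (hs : s ∈ C) (ht : t ∈ C) {t₀ : E}
    (ht₀ : t₀ ∈ segment ℝ s t) :
    f s + f t₀ - 2 * f (midpoint ℝ s t₀) ≤ f s + f t - 2 * f (midpoint ℝ s t) := by
  have hm₀ : midpoint ℝ s t₀ ∈ C :=
    hf.1.midpoint_mem hs (hf.1.segment_subset hs ht ht₀)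
  obtain ⟨a, b, ha, hb, hab, rfl⟩ := ht₀
  obtain rfl : b = 1 - a := by linarith
  set m₀ := midpoint ℝ s (a • s + (1 - a) • t) with hm₀_def
  -- Both `t₀` and `midpoint s t` lie between `m₀` and `t`.
  have ht₀_le := hf.2 hm₀ ht (show 0 ≤ 2 * a / (1 + a) by positivity)
    (show 0 ≤ (1 - a) / (1 + a) by positivity) (by field_simp; ring)
  have hm_le := hf.2 hm₀ ht (show 0 ≤ 1 / (1 + a) by positivity)
    (show 0 ≤ a / (1 + a) by positivity) (by field_simp)
  have ht₀_eq : (2 * a / (1 + a)) • m₀ + ((1 - a) / (1 + a)) • t = a • s + (1 - a) • t := by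
    rw [hm₀_def, midpoint_eq_smul_add, invOf_eq_inv]
    match_scalars
    · field_simp
    · field_simp
      ring
  have hm_eq : (1 / (1 + a)) • m₀ + (a / (1 + a)) • t = midpoint ℝ s t := by
    rw [hm₀_def, midpoint_eq_smul_add, midpoint_eq_smul_add, invOf_eq_inv]
    match_scalars
    · field_simp
    · field_simp
      ring
  rw [ht₀_eq, smul_eq_mul, smul_eq_mul] at ht₀_le
  rw [hm_eq, smul_eq_mul, smul_eq_mul] at hm_le
  have hweights : 2 * a / (1 + a) * f m₀ + (1 - a) / (1 + a) * f t +
      2 * (1 / (1 + a) * f m₀ + a / (1 + a) * f t) = 2 * f m₀ + f t := by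
    field_simp; ring
  linarith

theorem midpoint_eq_add_div_two (s t : ℝ) : midpoint ℝ s t = (s + t) / 2 := by
  rw [midpoint_eq_smul_add, invOf_eq_inv, smul_eq_mul, inv_mul_eq_div]

theorem exists_pos_le_midpoint_defect {f : ℝ → ℝ} (hf : ConvexOn ℝ Set.univ f) {s : ℝ}
    (hs : ∀ t ≠ s, 2 * f ((s + t) / 2) < f s + f t) {ε : ℝ} (hε : 0 < ε) :
    ∃ δ > 0, ∀ t, ε ≤ |t - s| → 2 * f ((s + t) / 2) + δ ≤ f s + f t := by
  have hmono {t t₀ : ℝ} (ht₀ : t₀ ∈ segment ℝ s t) :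
      f s + f t₀ - 2 * f ((s + t₀) / 2) ≤ f s + f t - 2 * f ((s + t) / 2) := by
    simpa only [midpoint_eq_add_div_two] using
      midpoint_defect_mono hf (Set.mem_univ s) (Set.mem_univ t) ht₀
  refine ⟨min (f s + f (s + ε) - 2 * f ((s + (s + ε)) / 2))
    (f s + f (s - ε) - 2 * f ((s + (s - ε)) / 2)),
    lt_min (sub_pos.2 (hs _ (by linarith))) (sub_pos.2 (hs _ (by linarith))), fun t ht => ?_⟩
  rcases le_abs.1 ht with hright | hleft
  · have := hmono (t := t) (t₀ := s + ε)
      (by rw [segment_eq_Icc (by linarith)]; constructor <;> linarith)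
    linarith [min_le_left (f s + f (s + ε) - 2 * f ((s + (s + ε)) / 2))
      (f s + f (s - ε) - 2 * f ((s + (s - ε)) / 2))]
  · have := hmono (t := t) (t₀ := s - ε)
      (by rw [segment_symm, segment_eq_Icc (by linarith)]; constructor <;> linarith)
    linarith [min_le_right (f s + f (s + ε) - 2 * f ((s + (s + ε)) / 2))
      (f s + f (s - ε) - 2 * f ((s + (s - ε)) / 2))]

end MidpointDefect

/-- Orlicz functions, allowed to vanish on a neighbourhood of `0`. Only the values on `[0, ∞)`
matter. -/
structure IsOrlicz (φ : ℝ → ℝ) : Prop where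
  convexOn : ConvexOn ℝ (Set.Ici 0) φ
  nonneg : ∀ t, 0 ≤ t → 0 ≤ φ t
  map_zero : φ 0 = 0

namespace IsOrlicz

variable {φ : ℝ → ℝ} {a : ℝ}

theorem monotoneOn (hφ : IsOrlicz φ) : MonotoneOn φ (Set.Ici 0) := by
  intro s hs t ht hst
  have := hφ.convexOn.le_max_of_mem_Icc Set.self_mem_Ici ht ⟨hs, hst⟩
  rwa [hφ.map_zero, max_eq_right (hφ.nonneg t ht)] at this

theorem apply_abs_le (hφ : IsOrlicz φ) {s t : ℝ} (hst : |s| ≤ t) : φ |s| ≤ φ t :=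
  hφ.monotoneOn (abs_nonneg s) ((abs_nonneg s).trans hst) hst

theorem apply_abs_eq_zero (hφ : IsOrlicz φ) (hφa : φ a = 0) {t : ℝ} (ht : |t| ≤ a) : φ |t| = 0 :=
  le_antisymm ((hφ.apply_abs_le ht).trans_eq hφa) (hφ.nonneg _ (abs_nonneg t))

theorem convexOn_comp_abs (hφ : IsOrlicz φ) : ConvexOn ℝ Set.univ fun t => φ |t| := by
  refine ⟨convex_univ, fun s _ t _ b c hb hc hbc => ?_⟩
  have habs : |b • s + c • t| ≤ b • |s| + c • |t| :=
    convexOn_univ_norm.2 (Set.mem_univ s) (Set.mem_univ t) hb hc hbc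
  exact (hφ.apply_abs_le habs).trans (hφ.convexOn.2 (abs_nonneg s) (abs_nonneg t) hb hc hbc)

theorem continuous_comp_abs (hφ : IsOrlicz φ) : Continuous fun t => φ |t| :=
  continuousOn_univ.1 (hφ.convexOn_comp_abs.continuousOn isOpen_univ)

theorem apply_abs_midpoint_le (hφ : IsOrlicz φ) (s t : ℝ) :
    2 * φ |(s + t) / 2| ≤ φ |s| + φ |t| := by
  simpa only [midpoint_eq_add_div_two] using
    two_mul_apply_midpoint_le_of_convexOn hφ.convexOn_comp_abs (Set.mem_univ s) (Set.mem_univ t)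

theorem strictMonoOn (hφ : IsOrlicz φ) (ha : 0 ≤ a) (hstrict : StrictConvexOn ℝ (Set.Ici a) φ) :
    StrictMonoOn φ (Set.Ici a) := by
  intro s hs t ht hst
  have hs0 : 0 ≤ s := ha.trans hs
  have hmid := two_mul_apply_midpoint_lt_of_strictConvexOn hstrict hs ht hst.ne
  have hs_le : φ s ≤ φ ((s + t) / 2) :=
    hφ.monotoneOn hs0 (Set.mem_Ici.2 (by linarith)) (by linarith)
  rw [midpoint_eq_add_div_two] at hmid
  linarith

theorem apply_abs_midpoint_lt (hφ : IsOrlicz φ) (ha : 0 ≤ a) (hφa : φ a = 0)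
    (hstrict : StrictConvexOn ℝ (Set.Ici a) φ) {s t : ℝ} (hs : a < |s|) (hts : t ≠ s) :
    2 * φ |(s + t) / 2| < φ |s| + φ |t| := by
  rcases eq_or_ne |t| |s| with habs | habs
  · obtain rfl : t = -s := (abs_eq_abs.1 habs).resolve_left hts
    have := hφ.strictMonoOn ha hstrict Set.self_mem_Ici hs.le hs
    simp only [add_neg_cancel, zero_div, abs_zero, hφ.map_zero, abs_neg]
    linarith
  · -- Replacing `|t|` by `max |t| a` does not change `φ |t|` and moves it into `[a, ∞)`.
    have hmax : φ (max |t| a) = φ |t| := by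
      rcases le_total |t| a with ht | ht
      · rw [max_eq_right ht, hφa, hφ.apply_abs_eq_zero hφa ht]
      · rw [max_eq_left ht]
    have hne : |s| ≠ max |t| a := by
      rcases max_choice |t| a with h | h <;> rw [h]
      exacts [habs.symm, hs.ne']
    have habs_mid : |(s + t) / 2| ≤ (|s| + max |t| a) / 2 := by
      rw [abs_div, abs_two]
      linarith [abs_add_le s t, le_max_left |t| a]
    rw [← midpoint_eq_add_div_two |s|] at habs_mid
    calc 2 * φ |(s + t) / 2| ≤ 2 * φ (midpoint ℝ |s| (max |t| a)) :=
          mul_le_mul_of_nonneg_left (hφ.apply_abs_le habs_mid) zero_le_two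
      _ < φ |s| + φ (max |t| a) :=
          two_mul_apply_midpoint_lt_of_strictConvexOn hstrict hs.le
            (Set.mem_Ici.2 (le_max_right _ _)) hne
      _ = φ |s| + φ |t| := by rw [hmax]

theorem exists_lt_apply (hφ : IsOrlicz φ) {t : ℝ} (ht : 0 ≤ t) (hφt : 0 < φ t) (c : ℝ) :
    ∃ M ≥ 0, c < φ M := by
  obtain ⟨n, hn⟩ := exists_nat_gt (c / φ t)
  have hn1 : (0 : ℝ) < n + 1 := by positivity
  refine ⟨(n + 1) * t, by positivity, ?_⟩
  have hchord := hφ.convexOn.2 (Set.mem_Ici.2 (by positivity : 0 ≤ (n + 1) * t)) Set.self_mem_Ici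
    (show 0 ≤ ((n : ℝ) + 1)⁻¹ by positivity) (show 0 ≤ n / ((n : ℝ) + 1) by positivity)
    (by field_simp; ring)
  simp only [smul_eq_mul, hφ.map_zero, mul_zero, add_zero, inv_mul_cancel_left₀ hn1.ne'] at hchord
  rw [inv_mul_eq_div, le_div_iff₀ hn1] at hchord
  rw [div_lt_iff₀ hφt] at hn
  linarith

theorem apply_abs_dilation_le (hφ : IsOrlicz φ) {τ M v : ℝ} (hτ0 : 0 ≤ τ) (hτ1 : τ ≤ 1)
    (hv : |v| ≤ M) : φ |(1 + τ) * v| ≤ φ |v| + τ * φ (2 * M) := by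
  have hconv := hφ.convexOn_comp_abs.2 (Set.mem_univ v) (Set.mem_univ (2 * v))
    (sub_nonneg.2 hτ1) hτ0 (sub_add_cancel 1 τ)
  simp only [smul_eq_mul] at hconv
  rw [show (1 - τ) * v + τ * (2 * v) = (1 + τ) * v by ring] at hconv
  have hφv := mul_nonneg hτ0 (hφ.nonneg _ (abs_nonneg v))
  have hφM : φ |2 * v| ≤ φ (2 * M) := hφ.apply_abs_le (by rw [abs_mul, abs_two]; linarith)
  linarith [mul_le_mul_of_nonneg_left hφM hτ0]

end IsOrlicz

section Modular

variable {Γ : Type*} {φ : ℝ → ℝ}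

theorem finite_lt_abs_of_ftop_lt {x : lp (fun _ : Γ => ℝ) ∞} {t : ℝ} (ht : ftop x < t) :
    {γ : Γ | t < |x γ|}.Finite := by
  have hne : {t : ℝ | 0 ≤ t ∧ {γ : Γ | t < |x γ|}.Finite}.Nonempty := by
    refine ⟨‖x‖, norm_nonneg x, Set.finite_empty.subset fun γ hγ => ?_⟩
    exact (lp.norm_apply_le_norm ENNReal.top_ne_zero x γ).not_gt hγ
  obtain ⟨s, ⟨-, hs⟩, hst⟩ := exists_lt_of_csInf_lt hne ht
  exact hs.subset fun γ hγ => hst.trans hγ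

theorem ftop_nonneg (x : lp (fun _ : Γ => ℝ) ∞) : 0 ≤ ftop x :=
  Real.sInf_nonneg fun _ ht => ht.1

theorem two_mul_PhiSum_add_le {u v w : lp (fun _ : Γ => ℝ) ∞} {γ₀ : Γ} {S : Finset Γ} {δ e : ℝ}
    [DecidableEq Γ] (hφ : ∀ t, 0 ≤ t → 0 ≤ φ t) (hδ : 0 ≤ δ) (he : 0 ≤ e)
    (h : ∀ γ, 2 * φ |v γ| + (if γ = γ₀ then δ else 0) ≤
      φ |u γ| + φ |w γ| + if γ ∈ S then e else 0) :
    2 * PhiSum φ v + ENNReal.ofReal δ ≤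
      PhiSum φ u + PhiSum φ w + S.card * ENNReal.ofReal e := by
  have hv (γ : Γ) := hφ _ (abs_nonneg (v γ))
  have hu (γ : Γ) := hφ _ (abs_nonneg (u γ))
  have hw (γ : Γ) := hφ _ (abs_nonneg (w γ))
  have hδγ (γ : Γ) : 0 ≤ if γ = γ₀ then δ else 0 := by positivity
  have heγ (γ : Γ) : 0 ≤ if γ ∈ S then e else 0 := by positivity
  have hleft : 2 * PhiSum φ v + ENNReal.ofReal δ =
      ∑' γ, ENNReal.ofReal (2 * φ |v γ| + if γ = γ₀ then δ else 0) := by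
    simp_rw [ENNReal.ofReal_add (mul_nonneg zero_le_two (hv _)) (hδγ _),
      ENNReal.ofReal_mul zero_le_two, ENNReal.ofReal_ofNat, apply_ite ENNReal.ofReal,
      ENNReal.ofReal_zero]
    rw [ENNReal.tsum_add, ENNReal.tsum_mul_left, tsum_ite_eq, PhiSum]
  have hright : ∑' γ, ENNReal.ofReal (φ |u γ| + φ |w γ| + if γ ∈ S then e else 0) =
      PhiSum φ u + PhiSum φ w + S.card * ENNReal.ofReal e := by
    simp_rw [ENNReal.ofReal_add (add_nonneg (hu _) (hw _)) (heγ _),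
      ENNReal.ofReal_add (hu _) (hw _), apply_ite ENNReal.ofReal, ENNReal.ofReal_zero]
    rw [ENNReal.tsum_add, ENNReal.tsum_add, tsum_eq_sum fun γ hγ => if_neg hγ, Finset.sum_ite_mem,
      Finset.inter_self, Finset.sum_const, nsmul_eq_mul, PhiSum, PhiSum]
  rw [hleft, ← hright]
  exact ENNReal.tsum_le_tsum fun γ => ENNReal.ofReal_le_ofReal (h γ)

end Modular

namespace IsOrlicz

variable {Γ : Type*} {φ : ℝ → ℝ} {a : ℝ}

theorem lowerSemicontinuous_PhiSum (hφ : IsOrlicz φ) :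
    LowerSemicontinuous (PhiSum φ : lp (fun _ : Γ => ℝ) ∞ → ℝ≥0∞) :=
  lowerSemicontinuous_tsum fun γ => (ENNReal.continuous_ofReal.comp <|
    hφ.continuous_comp_abs.comp (lp.evalCLM ℝ (fun _ : Γ => ℝ) ∞ γ).continuous).lowerSemicontinuous

theorem PhiSum_combo_le (hφ : IsOrlicz φ) (x y : lp (fun _ : Γ => ℝ) ∞) {b c : ℝ} (hb : 0 ≤ b)
    (hc : 0 ≤ c) (hbc : b + c = 1) :
    PhiSum φ (b • x + c • y) ≤ ENNReal.ofReal b * PhiSum φ x + ENNReal.ofReal c * PhiSum φ y := by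
  simp_rw [PhiSum, ← ENNReal.tsum_mul_left, ← ENNReal.ofReal_mul hb, ← ENNReal.ofReal_mul hc]
  rw [← ENNReal.tsum_add]
  refine ENNReal.tsum_le_tsum fun γ => ?_
  rw [← ENNReal.ofReal_add (mul_nonneg hb (hφ.nonneg _ (abs_nonneg _)))
    (mul_nonneg hc (hφ.nonneg _ (abs_nonneg _)))]
  exact ENNReal.ofReal_le_ofReal
    (hφ.convexOn_comp_abs.2 (Set.mem_univ (x γ)) (Set.mem_univ (y γ)) hb hc hbc)

theorem convex_PhiSum_lt (hφ : IsOrlicz φ) (r : ℝ≥0∞) :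
    Convex ℝ {x : lp (fun _ : Γ => ℝ) ∞ | PhiSum φ x < r} := by
  intro x hx y hy b c hb hc hbc
  calc PhiSum φ (b • x + c • y)
      ≤ ENNReal.ofReal b * PhiSum φ x + ENNReal.ofReal c * PhiSum φ y :=
        hφ.PhiSum_combo_le x y hb hc hbc
    _ ≤ ENNReal.ofReal b * max (PhiSum φ x) (PhiSum φ y) +
          ENNReal.ofReal c * max (PhiSum φ x) (PhiSum φ y) := by
        gcongr
        exacts [le_max_left _ _, le_max_right _ _]
    _ = max (PhiSum φ x) (PhiSum φ y) := by
        rw [← add_mul, ← ENNReal.ofReal_add hb hc, hbc, ENNReal.ofReal_one, one_mul]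
    _ < r := max_lt hx hy

theorem balanced_PhiSum_lt (hφ : IsOrlicz φ) (r : ℝ≥0∞) :
    Balanced ℝ {x : lp (fun _ : Γ => ℝ) ∞ | PhiSum φ x < r} :=
  (balanced_iff_neg_mem (hφ.convex_PhiSum_lt r)).2 fun x hx => by
    simpa [PhiSum] using hx

theorem PhiSum_eq_zero (hφ : IsOrlicz φ) (hφa : φ a = 0) {x : lp (fun _ : Γ => ℝ) ∞}
    (hx : ‖x‖ ≤ a) : PhiSum φ x = 0 := by
  refine ENNReal.tsum_eq_zero.2 fun γ => ?_
  rw [hφ.apply_abs_eq_zero hφa ((lp.norm_apply_le_norm ENNReal.top_ne_zero x γ).trans hx),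
    ENNReal.ofReal_zero]

theorem PhiSum_lt_mem_nhds_zero (hφ : IsOrlicz φ) (ha : 0 < a) (hφa : φ a = 0) {r : ℝ≥0∞}
    (hr : 0 < r) : {x : lp (fun _ : Γ => ℝ) ∞ | PhiSum φ x < r} ∈ 𝓝 0 := by
  refine mem_of_superset (Metric.closedBall_mem_nhds 0 ha) fun x hx => ?_
  rw [mem_closedBall_zero_iff] at hx
  exact (hφ.PhiSum_eq_zero hφa hx).trans_lt hr

theorem abs_apply_le_of_PhiSum_le (hφ : IsOrlicz φ) {r : ℝ≥0∞} {M : ℝ} (hM : 0 ≤ M)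
    (hrM : r < ENNReal.ofReal (φ M)) {x : lp (fun _ : Γ => ℝ) ∞} (hx : PhiSum φ x ≤ r) (γ : Γ) :
    |x γ| ≤ M := by
  have hlt : ENNReal.ofReal (φ |x γ|) < ENNReal.ofReal (φ M) :=
    ((ENNReal.le_tsum γ).trans hx).trans_lt hrM
  by_contra! hMx
  exact (hφ.monotoneOn hM (Set.mem_Ici.2 (abs_nonneg _)) hMx.le).not_gt
    (ENNReal.ofReal_lt_ofReal_iff'.1 hlt).1

/-- `Z_η` as a seminorm. -/
noncomputable def zetaSeminorm (hφ : IsOrlicz φ) (ha : 0 < a) (hφa : φ a = 0) :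
    Seminorm ℝ (lp (fun _ : Γ => ℝ) ∞) :=
  gaugeSeminorm (hφ.balanced_PhiSum_lt (1 / 2)) (hφ.convex_PhiSum_lt (1 / 2))
    (absorbent_nhds_zero (hφ.PhiSum_lt_mem_nhds_zero ha hφa (ENNReal.half_pos one_ne_zero)))

theorem zetaSeminorm_apply (hφ : IsOrlicz φ) (ha : 0 < a) (hφa : φ a = 0)
    (x : lp (fun _ : Γ => ℝ) ∞) : hφ.zetaSeminorm ha hφa x = Zeta φ x :=
  rfl

theorem PhiSum_le_of_Zeta_le_one (hφ : IsOrlicz φ) (ha : 0 < a) (hφa : φ a = 0)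
    {x : lp (fun _ : Γ => ℝ) ∞} (hx : Zeta φ x ≤ 1) : PhiSum φ x ≤ 1 / 2 := by
  have hclosure := (gauge_le_one_iff_mem_closure (hφ.convex_PhiSum_lt (1 / 2))
    (hφ.PhiSum_lt_mem_nhds_zero ha hφa (ENNReal.half_pos one_ne_zero))).1 hx
  exact closure_minimal (fun y (hy : PhiSum φ y < 1 / 2) => hy.le)
    (hφ.lowerSemicontinuous_PhiSum.isClosed_preimage (1 / 2)) hclosure

theorem norm_div_le_Zeta (hφ : IsOrlicz φ) (ha : 0 < a) (hφa : φ a = 0) {M : ℝ} (hM : 0 ≤ M)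
    (hφM : 1 / 2 < ENNReal.ofReal (φ M)) (x : lp (fun _ : Γ => ℝ) ∞) : ‖x‖ / M ≤ Zeta φ x := by
  refine le_gauge_of_subset_closedBall (absorbent_nhds_zero
    (hφ.PhiSum_lt_mem_nhds_zero ha hφa (ENNReal.half_pos one_ne_zero))) hM fun y hy => ?_
  rw [mem_closedBall_zero_iff]
  exact lp.norm_le_of_forall_le hM fun γ => hφ.abs_apply_le_of_PhiSum_le hM hφM hy.le γ

end IsOrlicz

namespace IsOrlicz

variable {Γ : Type*} {φ : ℝ → ℝ} {a c τ M : ℝ}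

theorem two_mul_apply_abs_dilated_midpoint_le_right (hφ : IsOrlicz φ) (hφa : φ a = 0) {s t : ℝ}
    (hτ : 0 ≤ τ) (hs : |s| ≤ c) (ht : |t| ≤ M) (hca : (1 + τ) * c + τ * M ≤ a) :
    2 * φ |(1 + τ) * ((s + t) / 2)| ≤ φ |t| := by
  have hsmall : |(1 + τ) * s + τ * t| ≤ a := by
    refine (abs_add_le _ _).trans (le_trans ?_ hca)
    rw [abs_mul, abs_mul, abs_of_nonneg hτ, abs_of_nonneg (by linarith)]
    gcongr
  have hmid := hφ.apply_abs_midpoint_le ((1 + τ) * s + τ * t) t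
  rwa [hφ.apply_abs_eq_zero hφa hsmall, zero_add,
    show ((1 + τ) * s + τ * t + t) / 2 = (1 + τ) * ((s + t) / 2) by ring] at hmid

theorem two_mul_PhiSum_dilated_midpoint_add_le (hφ : IsOrlicz φ) (hφa : φ a = 0)
    {u w : lp (fun _ : Γ => ℝ) ∞} (hu : ∀ γ, |u γ| ≤ M) (hw : ∀ γ, |w γ| ≤ M)
    {S : Finset Γ} (hS : ∀ γ ∉ S, |u γ| ≤ c) (hτ0 : 0 ≤ τ) (hτ1 : τ ≤ 1)
    (hca : (1 + τ) * c + τ * M ≤ a) {γ₀ : Γ} (hγ₀ : γ₀ ∈ S) {δ : ℝ} (hδ : 0 ≤ δ)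
    (hgap : 2 * φ |(u γ₀ + w γ₀) / 2| + δ ≤ φ |u γ₀| + φ |w γ₀|) :
    2 * PhiSum φ (((1 + τ) / 2) • (u + w)) + ENNReal.ofReal δ ≤
      PhiSum φ u + PhiSum φ w + S.card * ENNReal.ofReal (2 * (τ * φ (2 * M))) := by
  classical
  have hM : 0 ≤ M := (abs_nonneg _).trans (hu γ₀)
  refine two_mul_PhiSum_add_le (γ₀ := γ₀) (S := S) hφ.nonneg hδ
    (mul_nonneg zero_le_two (mul_nonneg hτ0 (hφ.nonneg _ (by positivity)))) fun γ => ?_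
  have hv : (((1 + τ) / 2) • (u + w)) γ = (1 + τ) * ((u γ + w γ) / 2) := by
    simp only [lp.coeFn_smul, lp.coeFn_add, Pi.smul_apply, Pi.add_apply, smul_eq_mul]
    ring
  rw [hv]
  by_cases hγ : γ ∈ S
  · have hmid : |(u γ + w γ) / 2| ≤ M := by
      rw [abs_div, abs_two]
      linarith [abs_add_le (u γ) (w γ), hu γ, hw γ]
    have hdil := hφ.apply_abs_dilation_le hτ0 hτ1 hmid
    have hgapγ : 2 * φ |(u γ + w γ) / 2| + (if γ = γ₀ then δ else 0) ≤ φ |u γ| + φ |w γ| := by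
      split_ifs with h
      · rwa [h]
      · simpa using hφ.apply_abs_midpoint_le (u γ) (w γ)
    rw [if_pos hγ]
    linarith
  · rw [if_neg hγ, if_neg (ne_of_mem_of_not_mem hγ₀ hγ).symm, add_zero, add_zero]
    exact (hφ.two_mul_apply_abs_dilated_midpoint_le_right hφa hτ0 (hS γ hγ) (hw γ) hca).trans
      (le_add_of_nonneg_left (hφ.nonneg _ (abs_nonneg _)))

theorem Zeta_add_le_of_midpoint_gap (hφ : IsOrlicz φ) (ha : 0 < a) (hφa : φ a = 0)
    (hM : 0 ≤ M) (hφM : 1 / 2 < ENNReal.ofReal (φ M)) {u w : lp (fun _ : Γ => ℝ) ∞}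
    (hu : Zeta φ u ≤ 1) (hw : Zeta φ w ≤ 1) {S : Finset Γ} (hS : ∀ γ ∉ S, |u γ| ≤ c)
    (hτ0 : 0 ≤ τ) (hτ1 : τ ≤ 1) (hca : (1 + τ) * c + τ * M ≤ a) {γ₀ : Γ} (hγ₀ : γ₀ ∈ S) {δ : ℝ}
    (hδ : S.card * (2 * (τ * φ (2 * M))) < δ)
    (hgap : 2 * φ |(u γ₀ + w γ₀) / 2| + δ ≤ φ |u γ₀| + φ |w γ₀|) :
    Zeta φ (u + w) ≤ 2 / (1 + τ) := by
  have hΦu := hφ.PhiSum_le_of_Zeta_le_one ha hφa hu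
  have hΦw := hφ.PhiSum_le_of_Zeta_le_one ha hφa hw
  have hδ0 : 0 < δ := by
    have := hφ.nonneg (2 * M) (by positivity)
    exact lt_of_le_of_lt (by positivity) hδ
  have hsum := hφ.two_mul_PhiSum_dilated_midpoint_add_le hφa
    (hφ.abs_apply_le_of_PhiSum_le hM hφM hΦu) (hφ.abs_apply_le_of_PhiSum_le hM hφM hΦw)
    hS hτ0 hτ1 hca hγ₀ hδ0.le hgap
  have hlt : PhiSum φ (((1 + τ) / 2) • (u + w)) < 1 / 2 := by
    rw [← ENNReal.ofReal_natCast, ← ENNReal.ofReal_mul (Nat.cast_nonneg _)] at hsum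
    by_contra! hge
    refine lt_irrefl (1 + ENNReal.ofReal δ) ?_
    calc 1 + ENNReal.ofReal δ
        = 2 * (1 / 2) + ENNReal.ofReal δ := by
          rw [ENNReal.mul_div_cancel two_ne_zero ENNReal.ofNat_ne_top]
      _ ≤ 1 / 2 + 1 / 2 + ENNReal.ofReal (S.card * (2 * (τ * φ (2 * M)))) := by
          refine le_trans ?_ (hsum.trans ?_) <;> gcongr
      _ < 1 + ENNReal.ofReal δ := by
          rw [ENNReal.add_halves]
          exact ENNReal.add_lt_add_left ENNReal.one_ne_top
            ((ENNReal.ofReal_lt_ofReal_iff hδ0).2 hδ)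
  refine gauge_le_of_mem (by positivity) ⟨_, hlt, ?_⟩
  simp only [smul_smul, div_mul_div_cancel₀ (show 1 + τ ≠ 0 by positivity),
    div_self (two_ne_zero' ℝ), one_smul]

theorem isRotundAlong_zetaSeminorm (hφ : IsOrlicz φ) (ha : 0 < a) (hφa : φ a = 0)
    (hstrict : StrictConvexOn ℝ (Set.Ici a) φ) {u : lp (fun _ : Γ => ℝ) ∞} (hu : Zeta φ u ≤ 1)
    (hca : c < a) (hfin : {γ : Γ | c < |u γ|}.Finite) {γ₀ : Γ} (hγ₀ : a < |u γ₀|) :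
    IsRotundAlong (hφ.zetaSeminorm ha hφa) (lp.evalₗ (𝕜 := ℝ) (fun _ : Γ => ℝ) ∞ γ₀) u := by
  intro ε hε
  obtain ⟨δ, hδ, hgap⟩ := exists_pos_le_midpoint_defect hφ.convexOn_comp_abs
    (fun t => hφ.apply_abs_midpoint_lt ha.le hφa hstrict hγ₀) hε
  have hφu : 0 < φ |u γ₀| :=
    hφa.symm.trans_lt (hφ.strictMonoOn ha.le hstrict Set.self_mem_Ici hγ₀.le hγ₀)
  obtain ⟨M, hM, hφM⟩ := hφ.exists_lt_apply (abs_nonneg _) hφu (1 / 2)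
  obtain ⟨τ, ⟨hτ0, hτ1⟩, hτa, hτδ⟩ : ∃ τ ∈ Set.Ioc (0 : ℝ) 1, (1 + τ) * c + τ * M < a ∧
      hfin.toFinset.card * (2 * (τ * φ (2 * M))) < δ := by
    have hlim_a : ContinuousAt (fun τ : ℝ => (1 + τ) * c + τ * M) 0 := by fun_prop
    have hlim_δ : ContinuousAt
      (fun τ : ℝ => hfin.toFinset.card * (2 * (τ * φ (2 * M)))) 0 := by fun_prop
    have hsmall := (hlim_a.eventually_lt_const (by simpa using hca)).and
      (hlim_δ.eventually_lt_const (by simpa using hδ))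
    exact (Eventually.and (Ioc_mem_nhdsGT one_pos) (hsmall.filter_mono nhdsWithin_le_nhds)).exists
  refine ⟨2 / (1 + τ), by rw [div_lt_iff₀] <;> linarith, fun w hw hεw => ?_⟩
  exact hφ.Zeta_add_le_of_midpoint_gap ha hφa hM
    ((ENNReal.lt_ofReal_iff_toReal_lt (by simp)).2 (by simpa using hφM)) hu hw
    (S := hfin.toFinset) (fun γ hγ => by simpa using hγ) hτ0.le hτ1 hτa.le
    (by simpa using hca.trans hγ₀) hτδ (hgap (w γ₀) hεw)

end IsOrlicz

theorem Zeta_coordinate_convergence_general {Γ ι : Type*} {l : Filter ι} {φ : ℝ → ℝ} {a : ℝ}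
    (hφ : IsOrlicz φ) (ha : 0 < a) (hφa : φ a = 0) (hstrict : StrictConvexOn ℝ (Set.Ici a) φ)
    {x : lp (fun _ : Γ => ℝ) ∞} {y : ι → lp (fun _ : Γ => ℝ) ∞} (hx : ftop x < a * Zeta φ x)
    (hlim : Tendsto (fun i => 2 * Zeta φ x ^ 2 + 2 * Zeta φ (y i) ^ 2 - Zeta φ (x + y i) ^ 2)
      l (𝓝 0))
    {γ : Γ} (hγ : a * Zeta φ x < |x γ|) : Tendsto (fun i => y i γ) l (𝓝 (x γ)) := by
  have hZ : 0 < Zeta φ x := pos_of_mul_pos_right ((ftop_nonneg x).trans_lt hx) ha.le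
  obtain ⟨t, hxt, hta⟩ := exists_between hx
  have habs (γ : Γ) : |((Zeta φ x)⁻¹ • x) γ| = |x γ| / Zeta φ x := by
    simp [inv_mul_eq_div, abs_div, abs_of_pos hZ]
  have hunit : Zeta φ ((Zeta φ x)⁻¹ • x) ≤ 1 := by
    rw [← hφ.zetaSeminorm_apply ha hφa, map_smul_eq_mul, hφ.zetaSeminorm_apply,
      Real.norm_of_nonneg (inv_nonneg.2 hZ.le), inv_mul_cancel₀ hZ.ne']
  have hrotund := hφ.isRotundAlong_zetaSeminorm ha hφa hstrict hunit ((div_lt_iff₀ hZ).2 hta)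
    (by simpa only [habs, div_lt_div_iff_of_pos_right hZ] using finite_lt_abs_of_ftop_lt hxt)
    (γ₀ := γ) (by rwa [habs, lt_div_iff₀ hZ])
  exact hrotund.tendsto_of_tendsto_parallelogram_defect hZ.ne' hlim

section IsPhiEta

variable {Γ : Type*} {η : ℝ} {φ : ℝ → ℝ}

theorem IsPhiEta.isOrlicz (hφ : IsPhiEta η φ) (hη : η ≤ 1) : IsOrlicz φ := by
  obtain ⟨-, hnonneg, hconvex, -, hzero, -⟩ := hφ
  exact ⟨hconvex, hnonneg, hzero 0 (sub_nonneg.2 hη)⟩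

theorem IsPhiEta.ftop_lt_of_mem_Aeta (hφ : IsPhiEta η φ) (hη : η < 1)
    {x : lp (fun _ : Γ => ℝ) ∞} (hx : x ∈ Aeta Γ η) : ftop x < (1 - η) * Zeta φ x := by
  have hη' := sub_pos.2 hη
  have hnorm := (hφ.isOrlicz hη.le).norm_div_le_Zeta hη' (hφ.2.2.2.2.1 _ le_rfl) zero_le_one
    (by simp [hφ.2.2.2.2.2]) x
  rw [div_one] at hnorm
  exact hx.trans_le (mul_le_mul_of_nonneg_left hnorm hη'.le)

end IsPhiEta

/-- **Hájek–Procházka, Lemma 5.3.** Let `x_r, x ∈ A_η(Γ)` be non-negative with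
`2 Z_η(x)² + 2 Z_η(x_r)² - Z_η(x + x_r)² → 0`. Then `x_r(γ) → x(γ)` for every coordinate
`γ` with `x(γ) > Z_η(x)(1 - η)`. -/
theorem Zeta_coordinate_convergence {Γ : Type*} (η : ℝ) (hη0 : 0 < η) (hη1 : η < 1)
    (φ : ℝ → ℝ) (hφ : IsPhiEta η φ)
    (x : lp (fun _ : Γ => ℝ) ∞) (xr : ℕ → lp (fun _ : Γ => ℝ) ∞)
    (hx : x ∈ Aeta Γ η) (hxr : ∀ r, xr r ∈ Aeta Γ η)
    (hxnn : ∀ γ : Γ, 0 ≤ x γ) (hxrnn : ∀ (r : ℕ) (γ : Γ), 0 ≤ xr r γ)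
    (hlim : Tendsto
      (fun r => 2 * Zeta φ x ^ 2 + 2 * Zeta φ (xr r) ^ 2 - Zeta φ (x + xr r) ^ 2)
      atTop (𝓝 0)) :
    ∀ γ : Γ, Zeta φ x * (1 - η) < x γ →
      Tendsto (fun r => xr r γ) atTop (𝓝 (x γ)) := by
  intro γ hγ
  obtain ⟨-, -, -, hstrict, hzero, -⟩ := id hφ
  have hxγ : (1 - η) * Zeta φ x < |x γ| := by
    rw [mul_comm]
    exact hγ.trans_le (le_abs_self _)
  exact Zeta_coordinate_convergence_general (hφ.isOrlicz hη1.le) (sub_pos.2 hη1)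
    (hzero _ le_rfl) hstrict (hφ.ftop_lt_of_mem_Aeta hη1 hx) hlim hxγ
end
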